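/- Let N₀₁, N₀: S² → ℝ be smooth. Then there exists exactly one smooth function φ₁ on Ω = {(t,x) ∈ ℝ×ℝ³ : |t| < |x|} such that: (a) ∂ₜ²φ₁ = Δφ₁ on Ω; (b) φ₁ is homogeneous of degree −1, i.e. φ₁(λt, λx) = λ^{−1}·φ₁(t,x) for all λ > 0 and (t,x) ∈ Ω; and (c) for every ω ∈ S², lim_{s→1⁻} [ φ₁(s, ω) − ln(2/(1−s))·N₀₁(ω) ] = N₀(ω). -/

import Mathlib

/-!
The wave equation for a function homogeneous of degree `-1` in the exterior of the light cone is
written `φ(t, x) = B(t / |x|, x) / |x|`, with `B(s, x)` defined for `|s| < 1` and homogeneous of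
degree zero in `x`. It becomes (`wave_iff`) the Legendre-type equation
`∂ₛ((1 - s²) ∂ₛ B) = |x|² Δₓ B`, whose right side is the spherical Laplacian.

*Existence.* The means `nmean f` of a smooth function `f` over the circles of the sphere satisfy a
Darboux equation (`nmean_pde`), which under the half-angle substitution `ρ = √((1 - s) / 2)` turns
into the Legendre equation. Thus the circle means of `N0` give a solution smooth up to `s = 1` with
boundary value `N0`. The singular solution with leading term `ln(2 / (1 - s)) N01` is `logH s`
times the circle means of `N01`, corrected by a logarithmic potential of those means
(`logPot_pde`). The sum is `sol`, and `exists_solution` collects its properties.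

*Uniqueness.* The difference of two solutions gives a solution `B` of the Legendre equation tending
to zero pointwise as `s → 1`. All estimates are in `L²` of the sphere, realised as a weighted `L²`
space on a shell, so that Green's formula (`wint_green`) is the divergence theorem in `ℝ³`. Write
`p = (1 - s²) ∂ₛ B`, let `kin = ‖p‖²`, let `pot` be the Dirichlet form of `B`, and `Θ = ∂ₛ p`, which
solves the same equation. The energy `kin + (1 - s²) pot` decreases for `s > 0`; applied to `Θ` it
bounds `(1 - s²) ∂ₛ Θ`, so `Θ` grows at most like `(1 - s)^(-1/4)` and `p` is Hölder up to `s = 1`.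
Since `B` tends to zero, no logarithm can occur, so `p` tends to zero at the rate `(1 - s)^(3/4)`
(`IsLeg.mom_decay`), and so does `B`. The second energy `kin / (1 - s²) + pot` is nonnegative and
increasing for `s > 0`, and by these rates it tends to zero; hence it vanishes. The first energy
carries the vanishing over to `s < 0` (`IsLeg.kin_eq_zero`). So `∂ₛ B = 0` and `B = 0`.
-/

noncomputable section

open MeasureTheory Real Set Filter Topology Metric
open scoped RealInnerProductSpace Classical

/-- ℝ³ as a Euclidean space. -/
abbrev E3 : Type := EuclideanSpace ℝ (Fin 3)

/-- The unit sphere S² in ℝ³. -/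
abbrev S2 : Set E3 := Metric.sphere (0 : E3) 1

/-- The surface measure on the unit sphere (total mass 4π). -/
noncomputable def sphereMeasure : Measure (Metric.sphere (0 : E3) 1) :=
  (volume : Measure E3).toSphere

/-- Integral over the unit sphere with respect to the surface measure. -/
noncomputable def sphereIntegral (f : E3 → ℝ) : ℝ :=
  ∫ σ : Metric.sphere (0 : E3) 1, f σ ∂sphereMeasure

/-- Japanese bracket ⟨q⟩ = √(1+q²). -/
noncomputable def jb (q : ℝ) : ℝ := Real.sqrt (1 + q ^ 2)

/-- Iterates of the operator g ↦ ⟨q⟩ ∂_q g. -/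
noncomputable def qIter : ℕ → (ℝ → ℝ) → ℝ → ℝ
  | 0, g => g
  | k + 1, g => fun q => jb q * deriv (qIter k g) q

/-- Partial derivative in the i-th coordinate direction. -/
noncomputable def pd (i : Fin 3) (g : E3 → ℝ) : E3 → ℝ :=
  fun x => fderiv ℝ g x (EuclideanSpace.single i 1)

/-- Iterated partial derivatives along a multi-index (list of directions). -/
noncomputable def pdMulti : List (Fin 3) → (E3 → ℝ) → E3 → ℝ
  | [], g => g
  | i :: l, g => pd i (pdMulti l g)

/-- Euclidean Laplacian in ℝ³. -/
noncomputable def lap3 (g : E3 → ℝ) (x : E3) : ℝ :=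
  ∑ i : Fin 3, pd i (pd i g) x

/-- Second time derivative ∂ₜ²φ. -/
noncomputable def dt2 (φ : ℝ → E3 → ℝ) (t : ℝ) (x : E3) : ℝ :=
  deriv (fun s => deriv (fun u => φ u x) s) t

/-- Homogeneity of degree zero on ℝ³ ∖ {0}. -/
def HomogZero (f : E3 → ℝ) : Prop := ∀ c : ℝ, 0 < c → ∀ x : E3, f (c • x) = f x

/-- A smooth function on S², represented by its degree-zero homogeneous extension. -/
def SmoothOnSphere (f : E3 → ℝ) : Prop :=
  HomogZero f ∧ ContDiffOn ℝ (⊤ : ℕ∞) f {x : E3 | x ≠ 0}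

/-- A smooth function on ℝ×S², represented via degree-zero homogeneous extension
in the angular variable. -/
def SmoothQSphere (f : ℝ → E3 → ℝ) : Prop :=
  (∀ q, HomogZero (f q)) ∧
  ContDiffOn ℝ (⊤ : ℕ∞) (fun p : ℝ × E3 => f p.1 p.2) {p : ℝ × E3 | p.2 ≠ 0}

/-- Symbol decay of order κ: |(⟨q⟩∂_q)^k ∂_ω^α f(q,ω)| ≤ C_{k,α} ⟨q⟩^{-κ}. -/
def SymbolDecay (κ : ℝ) (f : ℝ → E3 → ℝ) : Prop :=
  ∀ (k : ℕ) (α : List (Fin 3)), ∃ C : ℝ, ∀ (q : ℝ) (ω : E3), ‖ω‖ = 1 →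
    |qIter k (fun s => pdMulti α (f s) ω) q| ≤ C * jb q ^ (-κ)

/-- A smooth cutoff χ with χ = 1 on (-∞, 1/4] and χ = 0 on [1/2, ∞), 0 ≤ χ ≤ 1. -/
def IsCutChi (χ : ℝ → ℝ) : Prop :=
  ContDiff ℝ (⊤ : ℕ∞) χ ∧ (∀ s, χ s ∈ Set.Icc (0:ℝ) 1) ∧
  (∀ s, s ≤ (1/4 : ℝ) → χ s = 1) ∧ (∀ s, (1/2 : ℝ) ≤ s → χ s = 0)

/-- A smooth cutoff χ_{q<0} with χ = 1 on (-∞, -1] and χ = 0 on [0, ∞), 0 ≤ χ ≤ 1. -/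
def IsCutNeg (χ : ℝ → ℝ) : Prop :=
  ContDiff ℝ (⊤ : ℕ∞) χ ∧ (∀ s, χ s ∈ Set.Icc (0:ℝ) 1) ∧
  (∀ s, s ≤ (-1 : ℝ) → χ s = 1) ∧ (∀ s, (0 : ℝ) ≤ s → χ s = 0)


/-- The conditions of STATEMENT 2: φ solves the wave equation on the exterior
Ω = {|t| < |x|}, is homogeneous of degree −1, and has the prescribed expansion
towards the light cone. -/
def IsExtHomOne (N01 N0 : E3 → ℝ) (φ : ℝ → E3 → ℝ) : Prop :=
  ContDiffOn ℝ (⊤ : ℕ∞) (fun p : ℝ × E3 => φ p.1 p.2) {p : ℝ × E3 | |p.1| < ‖p.2‖} ∧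
  (∀ (t : ℝ) (x : E3), |t| < ‖x‖ → dt2 φ t x = lap3 (φ t) x) ∧
  (∀ c : ℝ, 0 < c → ∀ (t : ℝ) (x : E3), |t| < ‖x‖ → φ (c * t) (c • x) = c⁻¹ * φ t x) ∧
  (∀ ω : E3, ‖ω‖ = 1 →
    Tendsto (fun s : ℝ => φ s ω - Real.log (2 / (1 - s)) * N01 ω)
      (nhdsWithin 1 (Set.Iio 1)) (nhds (N0 ω)))

/-! ### Directional derivatives and parametric integrals -/

/-- Directional derivative of `G` in the constant direction `w`. -/
def dd {E F : Type} [NormedAddCommGroup E] [NormedSpace ℝ E] [NormedAddCommGroup F]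
    [NormedSpace ℝ F] (w : E) (G : E → F) : E → F := fun z => fderiv ℝ G z w

section DirDeriv

variable {E F : Type} [NormedAddCommGroup E] [NormedSpace ℝ E] [NormedAddCommGroup F]
  [NormedSpace ℝ F]

lemma smooth_differentiableAt {G : E → F} {U : Set E} (hU : IsOpen U)
    (hG : ContDiffOn ℝ (⊤ : ℕ∞) G U) {z : E} (hz : z ∈ U) : DifferentiableAt ℝ G z :=
  (hG.contDiffAt (hU.mem_nhds hz)).differentiableAt (by simp)

lemma smooth_dd {G : E → F} {U : Set E} (hU : IsOpen U)
    (hG : ContDiffOn ℝ (⊤ : ℕ∞) G U) (w : E) : ContDiffOn ℝ (⊤ : ℕ∞) (dd w G) U :=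
  ((contDiffOn_infty_iff_fderiv_of_isOpen hU).1 hG).2.clm_apply contDiffOn_const

lemma dd_comm {G : E → F} {U : Set E} (hU : IsOpen U)
    (hG : ContDiffOn ℝ (⊤ : ℕ∞) G U) (v w : E) {z : E} (hz : z ∈ U) :
    dd v (dd w G) z = dd w (dd v G) z := by
  have h1 : DifferentiableAt ℝ (fderiv ℝ G) z :=
    smooth_differentiableAt hU ((contDiffOn_infty_iff_fderiv_of_isOpen hU).1 hG).2 hz
  have hs : IsSymmSndFDerivAt ℝ G z :=
    (hG.contDiffAt (hU.mem_nhds hz)).isSymmSndFDerivAt (by simpa using ENat.LEInfty.out)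
  have e : ∀ a b : E, dd a (dd b G) z = fderiv ℝ (fderiv ℝ G) z a b := by
    intro a b
    unfold dd
    rw [fderiv_clm_apply h1 (differentiableAt_const b)]
    simp
  rw [e, e]
  exact hs v w

/-- Second directional derivatives are values of the second Fréchet derivative. -/
lemma dd_dd_eq {G : E → F} {U : Set E} (hU : IsOpen U)
    (hG : ContDiffOn ℝ (⊤ : ℕ∞) G U) (v w : E) {z : E} (hz : z ∈ U) :
    dd v (dd w G) z = fderiv ℝ (fderiv ℝ G) z v w := by
  have h1 : DifferentiableAt ℝ (fderiv ℝ G) z :=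
    smooth_differentiableAt hU ((contDiffOn_infty_iff_fderiv_of_isOpen hU).1 hG).2 hz
  unfold dd
  rw [fderiv_clm_apply h1 (differentiableAt_const w)]
  simp

lemma dd_congr {G H : E → F} {U : Set E} (hU : IsOpen U) (h : ∀ z ∈ U, G z = H z) (w : E)
    {z : E} (hz : z ∈ U) : dd w G z = dd w H z := by
  unfold dd
  rw [Filter.EventuallyEq.fderiv_eq]
  filter_upwards [hU.mem_nhds hz] with y hy using h y hy

/-- Chain rule for a smooth function along a differentiable curve. -/
lemma hasDerivAt_curve {G : E → F} {U : Set E} (hU : IsOpen U)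
    (hG : ContDiffOn ℝ (⊤ : ℕ∞) G U) {c : ℝ → E} {c' : E} {t : ℝ} (hc : HasDerivAt c c' t)
    (ht : c t ∈ U) : HasDerivAt (fun s => G (c s)) (dd c' G (c t)) t :=
  (smooth_differentiableAt hU hG ht).hasFDerivAt.comp_hasDerivAt t hc

lemma hasFDerivAt_param {Z Q : Type} [NormedAddCommGroup Z] [NormedSpace ℝ Z] [ProperSpace Z]
    [NormedAddCommGroup Q] [NormedSpace ℝ Q] [MeasurableSpace Q] [BorelSpace Q] {μ : Measure Q}
    {K : Set Q} (hK : IsCompact K) {w : Q → ℝ} (hw : IntegrableOn w K μ)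
    {O : Set Z} (hO : IsOpen O) {U : Set (Z × Q)} (hU : IsOpen U)
    (hsub : ∀ z ∈ O, ∀ q ∈ K, (z, q) ∈ U) {G : Z × Q → F} (hG : ContDiffOn ℝ 1 G U)
    {z : Z} (hz : z ∈ O) :
    HasFDerivAt (fun z => ∫ q in K, w q • G (z, q) ∂μ)
      (∫ q in K, w q • (fderiv ℝ G (z, q)).comp (ContinuousLinearMap.inl ℝ Z Q) ∂μ) z := by
  obtain ⟨ε, hε, hball⟩ := Metric.nhds_basis_closedBall.mem_iff.1 (hO.mem_nhds hz)
  have hKm : MeasurableSet K := hK.measurableSet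
  have hsubU : closedBall z ε ×ˢ K ⊆ U := fun p hp => hsub p.1 (hball hp.1) p.2 hp.2
  have hcG : ContinuousOn G U := hG.continuousOn
  have hcG' : ContinuousOn (fun p => (fderiv ℝ G p).comp (ContinuousLinearMap.inl ℝ Z Q)) U :=
    ContinuousOn.clm_comp (hG.continuousOn_fderiv_of_isOpen hU le_rfl) continuousOn_const
  have hcomp : IsCompact (closedBall z ε ×ˢ K) := (isCompact_closedBall z ε).prod hK
  obtain ⟨C, hC⟩ := hcomp.exists_bound_of_continuousOn (hcG'.mono hsubU)
  obtain ⟨C0, hC0⟩ := hcomp.exists_bound_of_continuousOn (hcG.mono hsubU)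
  have hsl : ∀ z' ∈ closedBall z ε, ContinuousOn (fun q => (z', q)) K ∧
      MapsTo (fun q => (z', q)) K U := fun z' hz' =>
    ⟨by fun_prop, fun q hq => hsubU ⟨hz', hq⟩⟩
  have hmeas : ∀ z' ∈ closedBall z ε,
      AEStronglyMeasurable (fun q => w q • G (z', q)) (μ.restrict K) := fun z' hz' =>
    hw.aestronglyMeasurable.smul
      ((hcG.comp (hsl z' hz').1 (hsl z' hz').2).aestronglyMeasurable_of_isCompact hK hKm)
  have hzb : z ∈ closedBall z ε := mem_closedBall_self hε.le
  refine hasFDerivAt_integral_of_dominated_of_fderiv_le (bound := fun q => ‖w q‖ * C)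
    (F' := fun z q => w q • (fderiv ℝ G (z, q)).comp (ContinuousLinearMap.inl ℝ Z Q))
    (closedBall_mem_nhds z hε) ?_ ?_ ?_ ?_ ?_ ?_
  · filter_upwards [closedBall_mem_nhds z hε] with z' hz' using hmeas z' hz'
  · refine Integrable.mono' (hw.norm.mul_const C0) (hmeas z hzb) ?_
    filter_upwards [ae_restrict_mem hKm] with q hq
    rw [norm_smul]
    exact mul_le_mul_of_nonneg_left (hC0 (z, q) ⟨hzb, hq⟩) (norm_nonneg _)
  · exact hw.aestronglyMeasurable.smul
      ((hcG'.comp (hsl z hzb).1 (hsl z hzb).2).aestronglyMeasurable_of_isCompact hK hKm)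
  · filter_upwards [ae_restrict_mem hKm] with q hq z' hz'
    rw [norm_smul]
    exact mul_le_mul_of_nonneg_left (hC (z', q) ⟨hz', hq⟩) (norm_nonneg _)
  · exact hw.norm.mul_const C
  · filter_upwards [ae_restrict_mem hKm] with q hq z' hz'
    have h1 : HasFDerivAt G (fderiv ℝ G (z', q)) (z', q) :=
      ((hG.contDiffAt (hU.mem_nhds (hsubU ⟨hz', hq⟩))).differentiableAt (by simp)).hasFDerivAt
    exact (h1.comp z' (hasFDerivAt_prodMk_left z' q)).const_smul (w q)

lemma contDiffOn_param_nat {Z Q : Type} [NormedAddCommGroup Z] [NormedSpace ℝ Z] [ProperSpace Z]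
    [NormedAddCommGroup Q] [NormedSpace ℝ Q] [MeasurableSpace Q] [BorelSpace Q] {μ : Measure Q}
    {K : Set Q} (hK : IsCompact K) {w : Q → ℝ} (hw : IntegrableOn w K μ)
    {O : Set Z} (hO : IsOpen O) {U : Set (Z × Q)} (hU : IsOpen U)
    (hsub : ∀ z ∈ O, ∀ q ∈ K, (z, q) ∈ U) (n : ℕ) :
    ∀ (F : Type) [NormedAddCommGroup F] [NormedSpace ℝ F] (G : Z × Q → F),
      ContDiffOn ℝ (⊤ : ℕ∞) G U → ContDiffOn ℝ n (fun z => ∫ q in K, w q • G (z, q) ∂μ) O := by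
  induction n with
  | zero =>
    intro F _ _ G hG
    refine contDiffOn_zero.2 fun z hz => ?_
    exact (hasFDerivAt_param hK hw hO hU hsub (hG.of_le (by exact_mod_cast le_top))
      hz).continuousAt.continuousWithinAt
  | succ n ih =>
    intro F _ _ G hG
    have hG1 : ContDiffOn ℝ 1 G U := hG.of_le (by exact_mod_cast le_top)
    push_cast
    refine (contDiffOn_succ_iff_fderiv_of_isOpen hO).2 ⟨fun z hz => ?_, by simp, ?_⟩
    · exact (hasFDerivAt_param hK hw hO hU hsub hG1 hz).differentiableAt.differentiableWithinAt
    · refine (ih (Z →L[ℝ] F)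
        (fun p => (fderiv ℝ G p).comp (ContinuousLinearMap.inl ℝ Z Q)) ?_).congr
        fun z hz => (hasFDerivAt_param hK hw hO hU hsub hG1 hz).fderiv
      exact ((contDiffOn_infty_iff_fderiv_of_isOpen hU).1 hG).2.clm_comp contDiffOn_const

/-- Integrals of a smooth function over a compact parameter set, with an integrable weight, depend
smoothly on the remaining variables. -/
lemma contDiffOn_param {Z Q : Type} [NormedAddCommGroup Z] [NormedSpace ℝ Z] [ProperSpace Z]
    [NormedAddCommGroup Q] [NormedSpace ℝ Q] [MeasurableSpace Q] [BorelSpace Q] {μ : Measure Q}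
    {K : Set Q} (hK : IsCompact K) {w : Q → ℝ} (hw : IntegrableOn w K μ)
    {O : Set Z} (hO : IsOpen O) {U : Set (Z × Q)} (hU : IsOpen U)
    (hsub : ∀ z ∈ O, ∀ q ∈ K, (z, q) ∈ U) {G : Z × Q → F} (hG : ContDiffOn ℝ (⊤ : ℕ∞) G U) :
    ContDiffOn ℝ (⊤ : ℕ∞) (fun z => ∫ q in K, w q • G (z, q) ∂μ) O :=
  contDiffOn_infty.2 fun n => contDiffOn_param_nat hK hw hO hU hsub n F G hG

/-- Differentiation under the integral sign. -/
lemma dd_param [CompleteSpace F] {Z Q : Type} [NormedAddCommGroup Z] [NormedSpace ℝ Z]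
    [ProperSpace Z]
    [NormedAddCommGroup Q] [NormedSpace ℝ Q] [MeasurableSpace Q] [BorelSpace Q] {μ : Measure Q}
    {K : Set Q} (hK : IsCompact K) {w : Q → ℝ} (hw : IntegrableOn w K μ)
    {O : Set Z} (hO : IsOpen O) {U : Set (Z × Q)} (hU : IsOpen U)
    (hsub : ∀ z ∈ O, ∀ q ∈ K, (z, q) ∈ U) {G : Z × Q → F} (hG : ContDiffOn ℝ (⊤ : ℕ∞) G U)
    {z : Z} (hz : z ∈ O) (v : Z) :
    dd v (fun z => ∫ q in K, w q • G (z, q) ∂μ) z =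
      ∫ q in K, w q • dd ((v, 0) : Z × Q) G (z, q) ∂μ := by
  have hG1 : ContDiffOn ℝ 1 G U := hG.of_le (by exact_mod_cast le_top)
  have hKm : MeasurableSet K := hK.measurableSet
  have hcG' : ContinuousOn (fun p => (fderiv ℝ G p).comp (ContinuousLinearMap.inl ℝ Z Q)) U :=
    ContinuousOn.clm_comp (hG1.continuousOn_fderiv_of_isOpen hU le_rfl) continuousOn_const
  have hcK : ContinuousOn
      (fun q => (fderiv ℝ G (z, q)).comp (ContinuousLinearMap.inl ℝ Z Q)) K :=
    hcG'.comp (f := fun q : Q => (z, q)) (by fun_prop) fun q hq => hsub z hz q hq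
  obtain ⟨C, hC⟩ := hK.exists_bound_of_continuousOn hcK
  have hint : Integrable
      (fun q => w q • (fderiv ℝ G (z, q)).comp (ContinuousLinearMap.inl ℝ Z Q))
      (μ.restrict K) := by
    refine Integrable.mono' (hw.norm.mul_const C)
      (hw.aestronglyMeasurable.smul (hcK.aestronglyMeasurable_of_isCompact hK hKm)) ?_
    filter_upwards [ae_restrict_mem hKm] with q hq
    rw [norm_smul]
    exact mul_le_mul_of_nonneg_left (hC q hq) (norm_nonneg _)
  unfold dd
  rw [(hasFDerivAt_param hK hw hO hU hsub hG1 hz).fderiv,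
    ContinuousLinearMap.integral_apply hint]
  simp

end DirDeriv

/-! ### Reduction of the wave equation to the cylinder -/

/-- The unit vector of the first (time or height) direction of `ℝ × ℝ³`. -/
def e0 : ℝ × E3 := (1, 0)

/-- The `i`-th spatial unit vector of `ℝ × ℝ³`. -/
def es (i : Fin 3) : ℝ × E3 := (0, EuclideanSpace.single i 1)

/-- The exterior `|t| < |x|` of the light cone. -/
def extCone : Set (ℝ × E3) := {p : ℝ × E3 | |p.1| < ‖p.2‖}

/-- The region `|s| < 1`, `x ≠ 0`, on which functions of `s = t / |x|` and of the direction of `x`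
(extended homogeneously of degree zero) live. -/
def cyl : Set (ℝ × E3) := {p : ℝ × E3 | |p.1| < 1 ∧ p.2 ≠ 0}

/-- The Laplacian in the spatial variables. -/
def lapx (G : ℝ × E3 → ℝ) (z : ℝ × E3) : ℝ := ∑ i : Fin 3, dd (es i) (dd (es i) G) z

lemma isOpen_ext : IsOpen extCone :=
  isOpen_lt (continuous_abs.comp continuous_fst) (continuous_norm.comp continuous_snd)

lemma isOpen_cyl : IsOpen cyl :=
  (isOpen_lt (continuous_abs.comp continuous_fst) continuous_const).inter
    (isOpen_ne_fun continuous_snd continuous_const)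

lemma ext_ne {p : ℝ × E3} (hp : p ∈ extCone) : p.2 ≠ 0 :=
  norm_pos_iff.1 ((abs_nonneg _).trans_lt hp)

lemma hasDerivAt_fst {G : ℝ × E3 → ℝ} {U : Set (ℝ × E3)} (hU : IsOpen U)
    (hG : ContDiffOn ℝ (⊤ : ℕ∞) G U) {t : ℝ} {x : E3} (h : (t, x) ∈ U) :
    HasDerivAt (fun s => G (s, x)) (dd e0 G (t, x)) t :=
  hasDerivAt_curve (c := fun s => (s, x)) hU hG
    ((hasDerivAt_id t).prodMk (hasDerivAt_const t x)) h

lemma hasDerivAt_line (t : ℝ) (x : E3) (i : Fin 3) :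
    HasDerivAt (fun ε : ℝ => ((t, x + ε • EuclideanSpace.single i 1) : ℝ × E3)) (es i) 0 := by
  have h : HasDerivAt (fun ε : ℝ => x + ε • (EuclideanSpace.single i 1 : E3))
      (EuclideanSpace.single i 1) 0 := by
    simpa using ((hasDerivAt_id (0 : ℝ)).smul_const (EuclideanSpace.single i 1 : E3)).const_add x
  exact (hasDerivAt_const 0 t).prodMk h

lemma dd_es_eq {G : ℝ × E3 → ℝ} {U : Set (ℝ × E3)} (hU : IsOpen U)
    (hG : ContDiffOn ℝ (⊤ : ℕ∞) G U) {t : ℝ} {x : E3} (h : (t, x) ∈ U) {i : Fin 3} {d : ℝ}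
    (hd : HasDerivAt (fun ε : ℝ => G (t, x + ε • EuclideanSpace.single i 1)) d 0) :
    dd (es i) G (t, x) = d := by
  have h1 := hasDerivAt_curve hU hG (hasDerivAt_line t x i) (by simpa using h)
  simp only [zero_smul, add_zero] at h1
  exact h1.unique hd

lemma pd_eq {G : ℝ × E3 → ℝ} {U : Set (ℝ × E3)} (hU : IsOpen U)
    (hG : ContDiffOn ℝ (⊤ : ℕ∞) G U) {t : ℝ} {x : E3} (h : (t, x) ∈ U) (i : Fin 3) :
    pd i (fun y => G (t, y)) x = dd (es i) G (t, x) := by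
  have h1 := (smooth_differentiableAt hU hG h).hasFDerivAt.comp x (hasFDerivAt_prodMk_right t x)
  unfold pd dd
  have h2 : fderiv ℝ (fun y => G (t, y)) x =
      (fderiv ℝ G (t, x)).comp (ContinuousLinearMap.inr ℝ ℝ E3) := h1.fderiv
  rw [h2]
  simp [es]

lemma lap3_eq {G : ℝ × E3 → ℝ} {U : Set (ℝ × E3)} (hU : IsOpen U)
    (hG : ContDiffOn ℝ (⊤ : ℕ∞) G U) {t : ℝ} {x : E3} (h : (t, x) ∈ U) :
    lap3 (fun y => G (t, y)) x = lapx G (t, x) := by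
  unfold lap3 lapx
  refine Finset.sum_congr rfl fun i _ => ?_
  rw [← pd_eq hU (smooth_dd hU hG (es i)) h i]
  have : (pd i fun y => G (t, y)) =ᶠ[𝓝 x] fun y => dd (es i) G (t, y) := by
    have hc : Continuous fun y : E3 => (t, y) := by fun_prop
    filter_upwards [(hU.preimage hc).mem_nhds h] with y hy using pd_eq hU hG hy i
  change fderiv ℝ (pd i fun y => G (t, y)) x (EuclideanSpace.single i 1) = _
  rw [this.fderiv_eq]
  rfl

lemma dt2_eq {G : ℝ × E3 → ℝ} {U : Set (ℝ × E3)} (hU : IsOpen U)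
    (hG : ContDiffOn ℝ (⊤ : ℕ∞) G U) {t : ℝ} {x : E3} (h : (t, x) ∈ U) :
    dt2 (fun s y => G (s, y)) t x = dd e0 (dd e0 G) (t, x) := by
  unfold dt2
  have : (fun s => deriv (fun u => G (u, x)) s) =ᶠ[𝓝 t] fun s => dd e0 G (s, x) := by
    have hc : Continuous fun s : ℝ => (s, x) := by fun_prop
    filter_upwards [(hU.preimage hc).mem_nhds h] with s hs using (hasDerivAt_fst hU hG hs).deriv
  rw [this.deriv_eq]
  exact (hasDerivAt_fst hU (smooth_dd hU hG e0) h).deriv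

lemma norm_sq_eq (x : E3) : ‖x‖ ^ 2 = x 0 ^ 2 + x 1 ^ 2 + x 2 ^ 2 := by
  rw [EuclideanSpace.norm_sq_eq, Fin.sum_univ_three]
  simp

lemma hasDerivAt_inv_norm {x : E3} (hx : x ≠ 0) (i : Fin 3) :
    HasDerivAt (fun ε : ℝ => ‖x + ε • (EuclideanSpace.single i 1 : E3)‖⁻¹)
      (-(x i) * ‖x‖⁻¹ ^ 3) 0 := by
  have h : HasDerivAt (fun ε : ℝ => x + ε • (EuclideanSpace.single i 1 : E3))
      (EuclideanSpace.single i 1) 0 := by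
    simpa using ((hasDerivAt_id (0 : ℝ)).smul_const (EuclideanSpace.single i 1 : E3)).const_add x
  have hn : ‖x‖ ≠ 0 := norm_ne_zero_iff.2 hx
  have h2 := h.norm_sq
  simp only [zero_smul, add_zero] at h2
  have h3 := (h2.sqrt (by simpa using hx)).inv (by simpa using hx)
  simp only [zero_smul, add_zero, Real.sqrt_sq (norm_nonneg _)] at h3
  refine h3.congr_deriv ?_
  rw [EuclideanSpace.inner_single_right]
  simp
  field_simp

/-- Degree-zero homogeneity in the spatial variable, on the cylinder. -/
def Hom0 (G : ℝ × E3 → ℝ) : Prop :=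
  ∀ (s : ℝ) (x : E3), (s, x) ∈ cyl → ∀ c : ℝ, 0 < c → G (s, c • x) = G (s, x)

lemma sum_single_smul (x : E3) : x = ∑ i : Fin 3, x i • (EuclideanSpace.single i 1 : E3) := by
  ext j
  fin_cases j <;> simp [Fin.sum_univ_three]

lemma dd_snd_eq_sum (G : ℝ × E3 → ℝ) (z : ℝ × E3) (v : E3) :
    dd ((0, v) : ℝ × E3) G z = ∑ i : Fin 3, v i * dd (es i) G z := by
  have : ((0, v) : ℝ × E3) = ∑ i : Fin 3, v i • es i := by
    refine Prod.ext (by simp [es, Fin.sum_univ_three]) ?_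
    have h1 := sum_single_smul v
    rw [Prod.snd_sum]
    simpa [es] using h1
  unfold dd
  rw [this, map_sum]
  simp

/-- Euler's relation for degree-zero homogeneous functions. -/
lemma Hom0.euler {G : ℝ × E3 → ℝ} (hG : ContDiffOn ℝ (⊤ : ℕ∞) G cyl) (h0 : Hom0 G)
    {s : ℝ} {x : E3} (h : (s, x) ∈ cyl) : ∑ i : Fin 3, x i * dd (es i) G (s, x) = 0 := by
  rw [← dd_snd_eq_sum]
  have hc : HasDerivAt (fun c : ℝ => ((s, c • x) : ℝ × E3)) (0, x) 1 := by
    refine (hasDerivAt_const _ _).prodMk ?_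
    simpa using (hasDerivAt_id (1 : ℝ)).smul_const x
  have h1 := hasDerivAt_curve isOpen_cyl hG hc (by simpa using h)
  simp only [one_smul] at h1
  refine h1.unique ((hasDerivAt_const (1 : ℝ) (G (s, x))).congr_of_eventuallyEq ?_)
  filter_upwards [lt_mem_nhds (zero_lt_one : (0 : ℝ) < 1)] with c hc using h0 s x h c hc

lemma smooth_slice {G : ℝ × E3 → ℝ} (hG : ContDiffOn ℝ (⊤ : ℕ∞) G cyl) :
    ∀ s x, (s, x) ∈ cyl → DifferentiableAt ℝ (fun u => G (u, x)) s := fun _ _ h =>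
  (hasDerivAt_fst isOpen_cyl hG h).differentiableAt

lemma Hom0.dd_e0 {G : ℝ × E3 → ℝ} (hG : ContDiffOn ℝ (⊤ : ℕ∞) G cyl) (h0 : Hom0 G) :
    Hom0 (dd e0 G) := by
  intro s x h c hc
  have h' : (s, c • x) ∈ cyl := ⟨h.1, smul_ne_zero hc.ne' h.2⟩
  refine (hasDerivAt_fst isOpen_cyl hG h').unique
    ((hasDerivAt_fst isOpen_cyl hG h).congr_of_eventuallyEq ?_)
  have : ∀ᶠ u : ℝ in 𝓝 s, |u| < 1 := (isOpen_lt continuous_abs continuous_const).mem_nhds h.1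
  filter_upwards [this] with u hu using h0 u x ⟨hu, h.2⟩ c hc

/-- The degree `-1` homogeneous function on the exterior region attached to a function on the
cylinder. -/
def toExt (B : ℝ × E3 → ℝ) (p : ℝ × E3) : ℝ := ‖p.2‖⁻¹ * B (p.1 * ‖p.2‖⁻¹, p.2)

lemma mem_cyl_of_ext {t : ℝ} {x : E3} (h : (t, x) ∈ extCone) : (t * ‖x‖⁻¹, x) ∈ cyl := by
  have hx : x ≠ 0 := ext_ne h
  have hn : 0 < ‖x‖ := norm_pos_iff.2 hx
  refine ⟨?_, hx⟩
  simp only [abs_mul, abs_inv, abs_norm]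
  rw [← div_eq_mul_inv, div_lt_one hn]
  exact h

lemma smooth_toExt {B : ℝ × E3 → ℝ} (hB : ContDiffOn ℝ (⊤ : ℕ∞) B cyl) :
    ContDiffOn ℝ (⊤ : ℕ∞) (toExt B) extCone := by
  have hn : ContDiffOn ℝ (⊤ : ℕ∞) (fun p : ℝ × E3 => ‖p.2‖⁻¹) extCone := by
    refine ContDiffOn.inv ?_ fun p hp => norm_ne_zero_iff.2 (ext_ne hp)
    exact contDiff_snd.contDiffOn.norm ℝ fun p hp => ext_ne hp
  refine hn.mul (hB.comp (g := B) (f := fun p : ℝ × E3 => (p.1 * ‖p.2‖⁻¹, p.2)) ?_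
    fun p hp => mem_cyl_of_ext hp)
  exact (contDiff_fst.contDiffOn.mul hn).prodMk contDiff_snd.contDiffOn

lemma dd_prod (B : ℝ × E3 → ℝ) (z : ℝ × E3) (a : ℝ) (i : Fin 3) :
    dd ((a, EuclideanSpace.single i 1) : ℝ × E3) B z = a * dd e0 B z + dd (es i) B z := by
  have : ((a, EuclideanSpace.single i 1) : ℝ × E3) = a • e0 + es i := by simp [e0, es]
  unfold dd
  rw [this]; simp

lemma dd_e0_toExt {B : ℝ × E3 → ℝ} (hB : ContDiffOn ℝ (⊤ : ℕ∞) B cyl) {t : ℝ} {x : E3}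
    (h : (t, x) ∈ extCone) : dd e0 (toExt B) (t, x) = ‖x‖⁻¹ * toExt (dd e0 B) (t, x) := by
  refine (hasDerivAt_fst isOpen_ext (smooth_toExt hB) h).unique ?_
  have h1 := (hasDerivAt_fst isOpen_cyl hB (mem_cyl_of_ext h)).comp t
    ((hasDerivAt_id t).mul_const ‖x‖⁻¹)
  refine (h1.const_mul ‖x‖⁻¹).congr_deriv ?_
  simp only [toExt]
  ring

lemma dd_e0_e0_toExt {B : ℝ × E3 → ℝ} (hB : ContDiffOn ℝ (⊤ : ℕ∞) B cyl) {t : ℝ} {x : E3}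
    (h : (t, x) ∈ extCone) : dd e0 (dd e0 (toExt B)) (t, x) =
      ‖x‖⁻¹ ^ 3 * dd e0 (dd e0 B) (t * ‖x‖⁻¹, x) := by
  have hB' := smooth_dd isOpen_cyl hB e0
  refine (hasDerivAt_fst isOpen_ext (smooth_dd isOpen_ext (smooth_toExt hB) e0) h).unique ?_
  have h1 := (hasDerivAt_fst isOpen_ext (smooth_toExt hB') h).const_mul ‖x‖⁻¹
  rw [dd_e0_toExt hB' h] at h1
  have h2 := h1.congr_of_eventuallyEq (f₁ := fun s => dd e0 (toExt B) (s, x)) (by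
    have hc : Continuous fun s : ℝ => (s, x) := by fun_prop
    filter_upwards [(isOpen_ext.preimage hc).mem_nhds h] with s hs using dd_e0_toExt hB hs)
  refine h2.congr_deriv ?_
  simp only [toExt]
  ring

lemma hasDerivAt_toExt_curve {B : ℝ × E3 → ℝ} (hB : ContDiffOn ℝ (⊤ : ℕ∞) B cyl) {t : ℝ} {x : E3}
    (h : (t, x) ∈ extCone) (i : Fin 3) :
    HasDerivAt (fun ε : ℝ => B (t * ‖x + ε • (EuclideanSpace.single i 1 : E3)‖⁻¹,
        x + ε • EuclideanSpace.single i 1))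
      (-(t * x i * ‖x‖⁻¹ ^ 3) * dd e0 B (t * ‖x‖⁻¹, x) + dd (es i) B (t * ‖x‖⁻¹, x)) 0 := by
  have hx : HasDerivAt (fun ε : ℝ => x + ε • (EuclideanSpace.single i 1 : E3))
      (EuclideanSpace.single i 1) 0 := by
    simpa using ((hasDerivAt_id (0 : ℝ)).smul_const (EuclideanSpace.single i 1 : E3)).const_add x
  have h1 := hasDerivAt_curve isOpen_cyl hB
    (((hasDerivAt_inv_norm (ext_ne h) i).const_mul t).prodMk hx)
    (by simpa using mem_cyl_of_ext h)
  simp only [zero_smul, add_zero] at h1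
  rw [dd_prod] at h1
  refine h1.congr_deriv ?_
  ring

lemma dd_es_toExt {B : ℝ × E3 → ℝ} (hB : ContDiffOn ℝ (⊤ : ℕ∞) B cyl) {t : ℝ} {x : E3}
    (h : (t, x) ∈ extCone) (i : Fin 3) : dd (es i) (toExt B) (t, x) =
      -(x i) * ‖x‖⁻¹ ^ 3 * B (t * ‖x‖⁻¹, x) + ‖x‖⁻¹ *
        (-(t * x i * ‖x‖⁻¹ ^ 3) * dd e0 B (t * ‖x‖⁻¹, x) + dd (es i) B (t * ‖x‖⁻¹, x)) := by
  refine dd_es_eq isOpen_ext (smooth_toExt hB) h ?_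
  have h1 := (hasDerivAt_inv_norm (ext_ne h) i).mul (hasDerivAt_toExt_curve hB h i)
  simp only [zero_smul, add_zero] at h1
  exact h1

lemma dd_es_es_toExt {B : ℝ × E3 → ℝ} (hB : ContDiffOn ℝ (⊤ : ℕ∞) B cyl) {t : ℝ} {x : E3}
    (h : (t, x) ∈ extCone) (i : Fin 3) : dd (es i) (dd (es i) (toExt B)) (t, x) =
      (-‖x‖⁻¹ ^ 3 + 3 * x i ^ 2 * ‖x‖⁻¹ ^ 5) * B (t * ‖x‖⁻¹, x)
      + 2 * (-(x i) * ‖x‖⁻¹ ^ 3) *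
        (-(t * x i * ‖x‖⁻¹ ^ 3) * dd e0 B (t * ‖x‖⁻¹, x) + dd (es i) B (t * ‖x‖⁻¹, x))
      + ‖x‖⁻¹ * (t * (-‖x‖⁻¹ ^ 3 + 3 * x i ^ 2 * ‖x‖⁻¹ ^ 5) * dd e0 B (t * ‖x‖⁻¹, x)
        + (t * x i * ‖x‖⁻¹ ^ 3) ^ 2 * dd e0 (dd e0 B) (t * ‖x‖⁻¹, x)
        - 2 * (t * x i * ‖x‖⁻¹ ^ 3) * dd (es i) (dd e0 B) (t * ‖x‖⁻¹, x)
        + dd (es i) (dd (es i) B) (t * ‖x‖⁻¹, x)) := by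
  refine dd_es_eq isOpen_ext (smooth_dd isOpen_ext (smooth_toExt hB) _) h ?_
  have hR := hasDerivAt_inv_norm (ext_ne h) i
  have hxi : HasDerivAt (fun ε : ℝ => (x + ε • (EuclideanSpace.single i 1 : E3)) i) 1 0 := by
    simpa using (hasDerivAt_id (0 : ℝ)).const_add (x i)
  have b0 := hasDerivAt_toExt_curve hB h i
  have b1 := hasDerivAt_toExt_curve (smooth_dd isOpen_cyl hB e0) h i
  have b2 := hasDerivAt_toExt_curve (smooth_dd isOpen_cyl hB (es i)) h i
  have h1 := ((hxi.neg.mul (hR.pow 3)).mul b0).add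
    (hR.mul ((((hxi.const_mul t).mul (hR.pow 3)).neg.mul b1).add b2))
  have h2 := h1.congr_of_eventuallyEq
    (f₁ := fun ε : ℝ => dd (es i) (toExt B) (t, x + ε • EuclideanSpace.single i 1)) (by
      have hc : Continuous fun ε : ℝ => ((t, x + ε • EuclideanSpace.single i 1) : ℝ × E3) := by
        fun_prop
      filter_upwards [(isOpen_ext.preimage hc).mem_nhds (by simpa using h)] with ε hε
      exact dd_es_toExt hB hε i)
  refine h2.congr_deriv ?_
  simp only [zero_smul, add_zero, Pi.mul_apply, Pi.neg_apply, Pi.add_apply, Pi.pow_apply]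
  rw [dd_comm isOpen_cyl hB e0 (es i) (mem_cyl_of_ext h)]
  push_cast
  ring

/-- The Laplacian of a homogeneous function of degree `-1` in the coordinates of the cylinder. -/
lemma lapx_toExt {B : ℝ × E3 → ℝ} (hB : ContDiffOn ℝ (⊤ : ℕ∞) B cyl) (h0 : Hom0 B)
    {t : ℝ} {x : E3} (h : (t, x) ∈ extCone) : lapx (toExt B) (t, x) =
      ‖x‖⁻¹ ^ 3 * (2 * (t * ‖x‖⁻¹) * dd e0 B (t * ‖x‖⁻¹, x)
        + (t * ‖x‖⁻¹) ^ 2 * dd e0 (dd e0 B) (t * ‖x‖⁻¹, x)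
        + ‖x‖ ^ 2 * lapx B (t * ‖x‖⁻¹, x)) := by
  have hm := mem_cyl_of_ext h
  have E1 := h0.euler hB hm
  have E2 := (h0.dd_e0 hB).euler (smooth_dd isOpen_cyl hB e0) hm
  unfold lapx
  simp only [dd_es_es_toExt hB h]
  rw [Fin.sum_univ_three] at *
  rw [Fin.sum_univ_three]
  have hR : ‖x‖⁻¹ ^ 2 * (x 0 ^ 2 + x 1 ^ 2 + x 2 ^ 2) = 1 := by
    rw [← norm_sq_eq, ← mul_pow, inv_mul_cancel₀ (norm_ne_zero_iff.2 hm.2), one_pow]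
  rw [norm_sq_eq]
  set R := ‖x‖⁻¹
  set p := (t * R, x)
  linear_combination (3 * R ^ 3 * B p + 5 * t * R ^ 4 * dd e0 B p
      + t ^ 2 * R ^ 5 * dd e0 (dd e0 B) p
      - R * (dd (es 0) (dd (es 0) B) p + dd (es 1) (dd (es 1) B) p + dd (es 2) (dd (es 2) B) p))
      * hR - 2 * R ^ 3 * E1 - 2 * t * R ^ 4 * E2

/-- The wave equation for a homogeneous function of degree `-1` is equivalent to a
Legendre-type equation on the cylinder. -/
lemma wave_iff {B : ℝ × E3 → ℝ} (hB : ContDiffOn ℝ (⊤ : ℕ∞) B cyl) (h0 : Hom0 B)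
    {t : ℝ} {x : E3} (h : (t, x) ∈ extCone) :
    dt2 (fun s y => toExt B (s, y)) t x = lap3 (fun y => toExt B (t, y)) x ↔
      (1 - (t * ‖x‖⁻¹) ^ 2) * dd e0 (dd e0 B) (t * ‖x‖⁻¹, x)
        - 2 * (t * ‖x‖⁻¹) * dd e0 B (t * ‖x‖⁻¹, x) = ‖x‖ ^ 2 * lapx B (t * ‖x‖⁻¹, x) := by
  have hS := smooth_toExt hB
  rw [dt2_eq isOpen_ext hS h, lap3_eq isOpen_ext hS h, dd_e0_e0_toExt hB h, lapx_toExt hB h0 h]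
  have hn : ‖x‖⁻¹ ^ 3 ≠ 0 := pow_ne_zero _ (inv_ne_zero (norm_ne_zero_iff.2 (ext_ne h)))
  rw [mul_right_inj' hn]
  constructor <;> intro H <;> linarith

/-! ### Circle means on the sphere -/

/-- The point at angle `θ`, `v = sin (θ / 2)`, from `b 2`, in the direction `α` of the frame `b`. -/
def circPt (b : Fin 3 → E3) (v α : ℝ) : E3 :=
  (1 - 2 * v ^ 2) • b 2 + (2 * v * √(1 - v ^ 2)) • (cos α • b 0 + sin α • b 1)

/-- The mean of `f` over the circle of angular radius `θ`, `v = sin (θ / 2)`, around `b 2`. -/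
def circ (f : E3 → ℝ) (b : Fin 3 → E3) (v : ℝ) : ℝ :=
  (2 * π)⁻¹ * ∫ α in Icc 0 (2 * π), f (circPt b v α)

lemma orthonormal_inner {b : Fin 3 → E3} (hb : Orthonormal ℝ b) (i j : Fin 3) :
    ⟪b i, b j⟫ = if i = j then (1 : ℝ) else 0 := orthonormal_iff_ite.1 hb i j

lemma orthonormal_expand {b : Fin 3 → E3} (hb : Orthonormal ℝ b) (y : E3) :
    y = ⟪b 0, y⟫ • b 0 + ⟪b 1, y⟫ • b 1 + ⟪b 2, y⟫ • b 2 := by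
  have hc : Fintype.card (Fin 3) = Module.finrank ℝ E3 := by simp
  have hs : ⊤ ≤ Submodule.span ℝ (Set.range b) := by
    rw [hb.linearIndependent.span_eq_top_of_card_eq_finrank' hc]
  have h := (OrthonormalBasis.mk hb hs).sum_repr' y
  simp only [OrthonormalBasis.coe_mk, Fin.sum_univ_three] at h
  exact h.symm

lemma norm_circPt {b : Fin 3 → E3} (hb : Orthonormal ℝ b) {v : ℝ} (hv : |v| ≤ 1) (α : ℝ) :
    ‖circPt b v α‖ = 1 := by
  have h1 : ‖circPt b v α‖ ^ 2 = 1 := by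
    rw [← real_inner_self_eq_norm_sq]
    unfold circPt
    simp only [inner_add_left, inner_add_right, real_inner_smul_left, real_inner_smul_right,
      orthonormal_inner hb]
    have hs : √(1 - v ^ 2) ^ 2 = 1 - v ^ 2 := Real.sq_sqrt (by
      have := (sq_le_one_iff_abs_le_one v).2 hv; linarith)
    have f1 : ((0 : Fin 3) = 2) = False := by decide
    have f2 : ((1 : Fin 3) = 2) = False := by decide
    have f3 : ((2 : Fin 3) = 0) = False := by decide
    have f4 : ((2 : Fin 3) = 1) = False := by decide
    simp only [f1, f2, f3, f4]
    norm_num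
    linear_combination (4 * v ^ 2 * √(1 - v ^ 2) ^ 2) * Real.cos_sq_add_sin_sq α + 4 * v ^ 2 * hs
  nlinarith [norm_nonneg (circPt b v α)]

lemma circPt_ne {b : Fin 3 → E3} (hb : Orthonormal ℝ b) {v : ℝ} (hv : |v| ≤ 1) (α : ℝ) :
    circPt b v α ≠ 0 := fun h => by simpa [h] using norm_circPt hb hv α

lemma circ_eq_interval (f : E3 → ℝ) (b : Fin 3 → E3) (v : ℝ) :
    circ f b v = (2 * π)⁻¹ * ∫ α in (0 : ℝ)..2 * π, f (circPt b v α) := by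
  unfold circ
  rw [integral_Icc_eq_integral_Ioc, intervalIntegral.integral_of_le (by positivity)]

lemma circPt_periodic (b : Fin 3 → E3) (v : ℝ) : Function.Periodic (circPt b v) (2 * π) := by
  intro α; simp [circPt]

lemma exists_angle {p r : ℝ} (h : p ^ 2 + r ^ 2 = 1) : ∃ β : ℝ, p = cos β ∧ r = sin β := by
  have hn : ‖(⟨p, r⟩ : ℂ)‖ = 1 := by
    rw [← sq_eq_sq₀ (norm_nonneg _) zero_le_one, ← Complex.normSq_eq_norm_sq,
      Complex.normSq_apply]
    simp; linarith
  refine ⟨Complex.arg ⟨p, r⟩, ?_, ?_⟩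
  · have := Complex.norm_mul_cos_arg ⟨p, r⟩
    rw [hn] at this; simpa using this.symm
  · have := Complex.norm_mul_sin_arg ⟨p, r⟩
    rw [hn] at this; simpa using this.symm

/-- The circle mean only depends on the centre of the circle, not on the frame. -/
lemma circ_congr (f : E3 → ℝ) {b b' : Fin 3 → E3} (hb : Orthonormal ℝ b) (hb' : Orthonormal ℝ b')
    (h2 : b 2 = b' 2) (v : ℝ) : circ f b v = circ f b' v := by
  have o' := orthonormal_inner hb'
  have e0 := orthonormal_expand hb (b' 0)
  have e1 := orthonormal_expand hb (b' 1)
  have z0 : ⟪b 2, b' 0⟫ = (0 : ℝ) := by rw [h2, o']; simp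
  have z1 : ⟪b 2, b' 1⟫ = (0 : ℝ) := by rw [h2, o']; simp
  rw [z0, zero_smul, add_zero] at e0
  rw [z1, zero_smul, add_zero] at e1
  set p := ⟪b 0, b' 0⟫
  set r := ⟪b 1, b' 0⟫
  set p' := ⟪b 0, b' 1⟫
  set r' := ⟪b 1, b' 1⟫
  have o := orthonormal_inner hb
  have n0 : p ^ 2 + r ^ 2 = 1 := by
    have h := o' 0 0
    rw [e0] at h
    simp only [inner_add_left, inner_add_right, real_inner_smul_left, real_inner_smul_right, o] at h
    norm_num at h; linarith
  have n1 : p' ^ 2 + r' ^ 2 = 1 := by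
    have h := o' 1 1
    rw [e1] at h
    simp only [inner_add_left, inner_add_right, real_inner_smul_left, real_inner_smul_right, o] at h
    norm_num at h; linarith
  have n2 : p * p' + r * r' = 0 := by
    have h := o' 0 1
    rw [e0, e1] at h
    simp only [inner_add_left, inner_add_right, real_inner_smul_left, real_inner_smul_right, o] at h
    norm_num at h; linarith
  obtain ⟨β, hp, hr⟩ := exists_angle n0
  have hper : Function.Periodic (fun α => f (circPt b v α)) (2 * π) := fun α => by
    simp only [circPt_periodic b v α]
  rw [circ_eq_interval, circ_eq_interval]
  congr 1
  -- the second frame differs from the first one by a rotation or a reflection of its plane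
  set d := p * r' - r * p'
  have hd : d ^ 2 = 1 := by
    have : d ^ 2 = (p ^ 2 + r ^ 2) * (p' ^ 2 + r' ^ 2) - (p * p' + r * r') ^ 2 := by ring
    rw [this, n0, n1, n2]; norm_num
  have hp' : p' = -(d * r) := by linear_combination p * n2 - p' * n0
  have hr' : r' = d * p := by linear_combination r * n2 - r' * n0
  rcases mul_self_eq_one_iff.1 ((sq d).symm.trans hd) with hd | hd
  · have : ∀ α, circPt b' v α = circPt b v (α + β) := by
      intro α
      unfold circPt
      rw [← h2, e0, e1, hp', hr', hd, hp, hr, cos_add, sin_add]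
      module
    simp only [this]
    rw [intervalIntegral.integral_comp_add_right (fun α => f (circPt b v α))]
    have := hper.intervalIntegral_add_eq 0 β
    simpa [add_comm] using this
  · have : ∀ α, circPt b' v α = circPt b v (β - α) := by
      intro α
      unfold circPt
      rw [← h2, e0, e1, hp', hr', hd, hp, hr, cos_sub, sin_sub]
      module
    simp only [this]
    rw [intervalIntegral.integral_comp_sub_left (fun α => f (circPt b v α))]
    have := hper.intervalIntegral_add_eq 0 (β - 2 * π)
    simpa [add_comm] using this

/-- The orthonormal frame obtained from `b` by the reflection taking `b 2` to `x / |x|`. -/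
def frame (b : Fin 3 → E3) (x : E3) (i : Fin 3) : E3 :=
  (Submodule.span ℝ {b 2 - ‖x‖⁻¹ • x})ᗮ.reflection (b i)

lemma frame_orthonormal {b : Fin 3 → E3} (hb : Orthonormal ℝ b) (x : E3) :
    Orthonormal ℝ (frame b x) :=
  hb.comp_linearIsometryEquiv (Submodule.span ℝ {b 2 - ‖x‖⁻¹ • x})ᗮ.reflection

lemma frame_two {b : Fin 3 → E3} (hb : Orthonormal ℝ b) {x : E3} (hx : x ≠ 0) :
    frame b x 2 = ‖x‖⁻¹ • x := by
  refine Submodule.reflection_sub ?_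
  rw [hb.1 2, norm_smul, norm_inv, norm_norm, inv_mul_cancel₀ (norm_ne_zero_iff.2 hx)]

/-- The standard frame. -/
def stdFrame (i : Fin 3) : E3 := EuclideanSpace.single i 1

lemma stdFrame_orthonormal : Orthonormal ℝ stdFrame := by
  simpa [stdFrame] using! EuclideanSpace.orthonormal_single (𝕜 := ℝ) (ι := Fin 3)

lemma frame_smul (b : Fin 3 → E3) (x : E3) {c : ℝ} (hc : 0 < c) : frame b (c • x) = frame b x := by
  have : ‖c • x‖⁻¹ • c • x = ‖x‖⁻¹ • x := by
    rw [norm_smul, Real.norm_of_nonneg hc.le, smul_smul, mul_inv, mul_comm c⁻¹, mul_assoc,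
      inv_mul_cancel₀ hc.ne', mul_one]
  funext i
  simp only [frame, this]

lemma frame_formula (b : Fin 3 → E3) (x : E3) (i : Fin 3) :
    frame b x i = b i - (2 * (⟪b 2 - ‖x‖⁻¹ • x, b i⟫ / ‖b 2 - ‖x‖⁻¹ • x‖ ^ 2)) •
      (b 2 - ‖x‖⁻¹ • x) := by
  unfold frame
  rw [Submodule.reflection_orthogonal_apply, Submodule.reflection_singleton_apply]
  simp only [RCLike.ofReal_real_eq_id, id]
  module

lemma frame_smooth {b : Fin 3 → E3} (i : Fin 3) :
    ContDiffOn ℝ (⊤ : ℕ∞) (fun x => frame b x i) {x | x ≠ 0 ∧ b 2 - ‖x‖⁻¹ • x ≠ 0} := by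
  simp only [frame_formula]
  have h1 : ContDiffOn ℝ (⊤ : ℕ∞) (fun x : E3 => b 2 - ‖x‖⁻¹ • x)
      {x | x ≠ 0 ∧ b 2 - ‖x‖⁻¹ • x ≠ 0} := by
    refine contDiffOn_const.sub (ContDiffOn.smul (f := fun x : E3 => ‖x‖⁻¹) (g := fun x => x) (ContDiffOn.inv ?_ ?_) contDiff_id.contDiffOn)
    · exact contDiff_id.contDiffOn.norm ℝ fun x hx => hx.1
    · exact fun x hx => norm_ne_zero_iff.2 hx.1
  refine contDiffOn_const.sub (ContDiffOn.smul (contDiffOn_const.mul (ContDiffOn.div ?_ ?_ ?_)) h1)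
  · exact h1.inner ℝ contDiffOn_const
  · exact h1.norm_sq ℝ
  · exact fun x hx => pow_ne_zero 2 (norm_ne_zero_iff.2 hx.2)

/-- The circle mean as a function of the radius parameter and of the centre. -/
def nmean (f : E3 → ℝ) (z : ℝ × E3) : ℝ := circ f (frame stdFrame z.2) z.1

lemma nmean_eq (f : E3 → ℝ) {b : Fin 3 → E3} (hb : Orthonormal ℝ b) {x : E3} (hx : x ≠ 0)
    (h2 : b 2 = ‖x‖⁻¹ • x) (v : ℝ) : nmean f (v, x) = circ f b v :=
  circ_congr f (frame_orthonormal stdFrame_orthonormal x) hb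
    (by rw [frame_two stdFrame_orthonormal hx, h2]) v

lemma nmean_hom (f : E3 → ℝ) : Hom0 (nmean f) := fun s x _ c hc => by
  simp only [nmean, frame_smul stdFrame x hc]

lemma nmean_zero {f : E3 → ℝ} (hf : HomogZero f) {x : E3} (hx : x ≠ 0) :
    nmean f (0, x) = f x := by
  simp only [nmean, circ, circPt, frame_two stdFrame_orthonormal hx]
  have : ∀ α : ℝ, (1 - 2 * (0 : ℝ) ^ 2) • ‖x‖⁻¹ • x + (2 * 0 * √(1 - 0 ^ 2)) •
      (cos α • frame stdFrame x 0 + sin α • frame stdFrame x 1) = ‖x‖⁻¹ • x := by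
    intro α; simp
  simp only [this, hf _ (inv_pos.2 (norm_pos_iff.2 hx)) x]
  have hpi := Real.pi_pos
  rw [setIntegral_const, Measure.real, Real.volume_Icc, ENNReal.toReal_ofReal (by linarith),
    smul_eq_mul]
  field_simp
  ring

lemma smooth_sqrt_one_sub : ContDiffOn ℝ (⊤ : ℕ∞) (fun v : ℝ => √(1 - v ^ 2)) {v | |v| < 1} := by
  refine ContDiffOn.sqrt (contDiff_const.sub (contDiff_id.pow 2)).contDiffOn fun v hv => ?_
  have : v ^ 2 < 1 := (sq_lt_one_iff_abs_lt_one v).2 hv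
  linarith

lemma isOpen_ne_E3 : IsOpen {x : E3 | x ≠ 0} := isOpen_ne_fun continuous_id continuous_const

lemma smooth_nmean {f : E3 → ℝ} (hf : SmoothOnSphere f) :
    ContDiffOn ℝ (⊤ : ℕ∞) (nmean f) cyl := by
  intro z₀ hz₀
  refine ContDiffAt.contDiffWithinAt ?_
  obtain ⟨v₀, x₀⟩ := z₀
  have hx₀ : x₀ ≠ 0 := hz₀.2
  set b : Fin 3 → E3 := fun i => -frame stdFrame x₀ i with hbdef
  have hb : Orthonormal ℝ b := by
    have h := frame_orthonormal stdFrame_orthonormal x₀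
    rw [orthonormal_iff_ite] at h ⊢
    intro i j
    rw [← h i j]; simp [hbdef]
  set V : Set E3 := {x | x ≠ 0 ∧ b 2 - ‖x‖⁻¹ • x ≠ 0} with hV
  have hb2 : b 2 = -(‖x₀‖⁻¹ • x₀) := by
    simp only [hbdef]; rw [frame_two stdFrame_orthonormal hx₀]
  have hx₀V : x₀ ∈ V := by
    refine ⟨hx₀, ?_⟩
    rw [hb2, ← neg_add', neg_ne_zero, ← two_smul ℝ]
    exact smul_ne_zero two_ne_zero (smul_ne_zero (inv_ne_zero (norm_ne_zero_iff.2 hx₀)) hx₀)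
  have hVo : IsOpen V := by
    have hc : ContinuousOn (fun x : E3 => b 2 - ‖x‖⁻¹ • x) {x | x ≠ 0} :=
      continuousOn_const.sub ((continuous_norm.continuousOn.inv₀
        fun x hx => norm_ne_zero_iff.2 hx).smul continuousOn_id)
    exact hc.isOpen_inter_preimage isOpen_ne_E3 isOpen_compl_singleton
  set O : Set (ℝ × E3) := {z | |z.1| < 1 ∧ z.2 ∈ V} with hO
  have hOo : IsOpen O := (isOpen_lt (continuous_abs.comp continuous_fst) continuous_const).inter
    (hVo.preimage continuous_snd)
  have hq : ContDiffOn ℝ (⊤ : ℕ∞)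
      (fun p : (ℝ × E3) × ℝ => circPt (frame b p.1.2) p.1.1 p.2) (O ×ˢ univ) := by
    have hfr : ∀ i, ContDiffOn ℝ (⊤ : ℕ∞) (fun p : (ℝ × E3) × ℝ => frame b p.1.2 i)
        (O ×ˢ univ) := fun i =>
      (frame_smooth i).comp (contDiff_snd.comp contDiff_fst).contDiffOn fun p hp => hp.1.2
    have hv : ContDiffOn ℝ (⊤ : ℕ∞) (fun p : (ℝ × E3) × ℝ => p.1.1) (O ×ˢ univ) :=
      (contDiff_fst.comp contDiff_fst).contDiffOn
    have hs : ContDiffOn ℝ (⊤ : ℕ∞) (fun p : (ℝ × E3) × ℝ => √(1 - p.1.1 ^ 2)) (O ×ˢ univ) :=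
      smooth_sqrt_one_sub.comp hv fun p hp => hp.1.1
    have hα : ContDiffOn ℝ (⊤ : ℕ∞) (fun p : (ℝ × E3) × ℝ => p.2) (O ×ˢ univ) :=
      contDiff_snd.contDiffOn
    unfold circPt
    exact ((contDiffOn_const.sub (contDiffOn_const.mul (hv.pow 2))).smul (hfr 2)).add
      (((contDiffOn_const.mul hv).mul hs).smul ((hα.cos.smul (hfr 0)).add (hα.sin.smul (hfr 1))))
  have hG : ContDiffOn ℝ (⊤ : ℕ∞)
      (fun p : (ℝ × E3) × ℝ => f (circPt (frame b p.1.2) p.1.1 p.2)) (O ×ˢ univ) :=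
    hf.2.comp hq fun p hp => circPt_ne (frame_orthonormal hb _) hp.1.1.le _
  have hS := contDiffOn_param (μ := volume) (K := Icc 0 (2 * π)) (w := fun _ => (2 * π)⁻¹)
    isCompact_Icc (integrableOn_const isCompact_Icc.measure_lt_top.ne) hOo (hOo.prod isOpen_univ)
    (fun z hz q _ => ⟨hz, mem_univ q⟩) hG
  refine (hS.contDiffAt (hOo.mem_nhds (show (v₀, x₀) ∈ O from ⟨hz₀.1, hx₀V⟩))).congr_of_eventuallyEq
    ?_
  filter_upwards [hOo.mem_nhds (show (v₀, x₀) ∈ O from ⟨hz₀.1, hx₀V⟩)] with z hz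
  obtain ⟨v, x⟩ := z
  have hx : x ≠ 0 := hz.2.1
  rw [nmean_eq f (frame_orthonormal hb x) hx (frame_two hb hx) v]
  simp only [circ, smul_eq_mul, integral_const_mul]

/-! ### The differential equation of circle means -/

/-- Second-order chain rule along a curve. -/
lemma hasDerivAt_curve2 {E : Type} [NormedAddCommGroup E] [NormedSpace ℝ E] {F : E → ℝ} {U : Set E}
    (hU : IsOpen U) (hF : ContDiffOn ℝ (⊤ : ℕ∞) F U) {c c' : ℝ → E} {c'' : E} {t : ℝ}
    (hc : HasDerivAt c (c' t) t) (hc' : HasDerivAt c' c'' t) (ht : c t ∈ U) :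
    HasDerivAt (fun s => dd (c' s) F (c s))
      (fderiv ℝ (fderiv ℝ F) (c t) (c' t) (c' t) + fderiv ℝ F (c t) c'') t := by
  have h1 := hasDerivAt_curve hU ((contDiffOn_infty_iff_fderiv_of_isOpen hU).1 hF).2 hc ht
  exact h1.clm_apply hc'

/-- The integrand of the second derivative of a mean along a family of closed curves. -/
def secInt (f : E3 → ℝ) (q q' q'' : E3) : ℝ :=
  fderiv ℝ (fderiv ℝ f) q q' q' + fderiv ℝ f q q''

/-- Differentiation of a mean of `f` over closed curves `q z`, twice in the parameter `z`. -/
lemma mean_deriv {f : E3 → ℝ} (hf : SmoothOnSphere f) {O : Set ℝ} (hO : IsOpen O)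
    {q q1 q2 : ℝ → ℝ → E3}
    (hq : ContDiffOn ℝ (⊤ : ℕ∞) (fun p : ℝ × ℝ => q p.1 p.2) (O ×ˢ univ))
    (hne : ∀ z ∈ O, ∀ α, q z α ≠ 0)
    (h1 : ∀ z ∈ O, ∀ α, HasDerivAt (fun s => q s α) (q1 z α) z)
    (h2 : ∀ z ∈ O, ∀ α, HasDerivAt (fun s => q1 s α) (q2 z α) z) {z : ℝ} (hz : z ∈ O) :
    HasDerivAt (fun s => ∫ α in Icc 0 (2 * π), f (q s α))
      (∫ α in Icc 0 (2 * π), dd (q1 z α) f (q z α)) z ∧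
    HasDerivAt (fun s => ∫ α in Icc 0 (2 * π), dd (q1 s α) f (q s α))
      (∫ α in Icc 0 (2 * π), secInt f (q z α) (q1 z α) (q2 z α)) z ∧
    Continuous (fun α => dd (q1 z α) f (q z α)) ∧
    Continuous (fun α => secInt f (q z α) (q1 z α) (q2 z α)) := by
  have hU : IsOpen (O ×ˢ (univ : Set ℝ)) := hO.prod isOpen_univ
  set G : ℝ × ℝ → ℝ := fun p => f (q p.1 p.2) with hGdef
  have hG : ContDiffOn ℝ (⊤ : ℕ∞) G (O ×ˢ univ) :=
    hf.2.comp hq fun p hp => hne _ hp.1 _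
  have line : ∀ z α : ℝ, HasDerivAt (fun s : ℝ => ((s, α) : ℝ × ℝ)) (1, 0) z := fun z α =>
    (hasDerivAt_id z).prodMk (hasDerivAt_const z α)
  have d1 : ∀ z ∈ O, ∀ α, dd ((1, 0) : ℝ × ℝ) G (z, α) = dd (q1 z α) f (q z α) := fun z hz α =>
    (hasDerivAt_curve hU hG (line z α) ⟨hz, mem_univ _⟩).unique
      (hasDerivAt_curve isOpen_ne_E3 hf.2 (h1 z hz α) (hne z hz α))
  have hG1 := smooth_dd hU hG ((1, 0) : ℝ × ℝ)
  have d2 : ∀ z ∈ O, ∀ α, dd ((1, 0) : ℝ × ℝ) (dd ((1, 0) : ℝ × ℝ) G) (z, α) =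
      secInt f (q z α) (q1 z α) (q2 z α) := fun z hz α => by
    refine (hasDerivAt_curve hU hG1 (line z α) ⟨hz, mem_univ _⟩).unique
      ((hasDerivAt_curve2 isOpen_ne_E3 hf.2 (h1 z hz α) (h2 z hz α)
        (hne z hz α)).congr_of_eventuallyEq ?_)
    filter_upwards [hO.mem_nhds hz] with s hs using d1 s hs α
  have cont : ∀ {g : ℝ × ℝ → ℝ}, ContDiffOn ℝ (⊤ : ℕ∞) g (O ×ˢ univ) →
      Continuous fun α => g (z, α) := fun {g} hg => by
    rw [← continuousOn_univ]
    exact hg.continuousOn.comp (by fun_prop) fun α _ => ⟨hz, mem_univ α⟩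
  have key : ∀ {g : ℝ × ℝ → ℝ}, ContDiffOn ℝ (⊤ : ℕ∞) g (O ×ˢ univ) →
      HasDerivAt (fun s => ∫ α in Icc 0 (2 * π), g (s, α))
        (∫ α in Icc 0 (2 * π), dd ((1, 0) : ℝ × ℝ) g (z, α)) z := fun {g} hg => by
    have hw : IntegrableOn (fun _ : ℝ => (1 : ℝ)) (Icc 0 (2 * π)) :=
      integrableOn_const isCompact_Icc.measure_lt_top.ne
    have hsub : ∀ z ∈ O, ∀ α ∈ Icc 0 (2 * π), (z, α) ∈ O ×ˢ (univ : Set ℝ) :=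
      fun z hz α _ => ⟨hz, mem_univ α⟩
    have a1 := hasDerivAt_curve hO (contDiffOn_param isCompact_Icc hw hO hU hsub hg)
      (hasDerivAt_id z) hz
    have a2 := dd_param isCompact_Icc hw hO hU hsub hg hz (1 : ℝ)
    simp only [id, one_smul] at a1 a2
    rwa [a2] at a1
  refine ⟨?_, ?_, ?_, ?_⟩
  · simpa only [d1 z hz] using key hG
  · have := key hG1
    simp only [d2 z hz] at this
    refine this.congr_of_eventuallyEq ?_
    filter_upwards [hO.mem_nhds hz] with s hs
    simp only [d1 s hs]
  · simpa only [d1 z hz] using cont hG1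
  · simpa only [d2 z hz] using cont (smooth_dd hU hG1 ((1, 0) : ℝ × ℝ))

section CircleODE

variable {f : E3 → ℝ} {b : Fin 3 → E3}

/-- The unit vector at angle `α` in the plane of `b 0` and `b 1`. -/
def ringPt (b : Fin 3 → E3) (α : ℝ) : E3 := cos α • b 0 + sin α • b 1

/-- First derivative of `circPt` in the radius parameter. -/
def circPt1 (b : Fin 3 → E3) (v α : ℝ) : E3 :=
  (-4 * v) • b 2 + (2 * (1 - 2 * v ^ 2) * (√(1 - v ^ 2))⁻¹) • ringPt b α

/-- Second derivative of `circPt` in the radius parameter. -/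
def circPt2 (b : Fin 3 → E3) (v α : ℝ) : E3 :=
  (-4 : ℝ) • b 2 + (-8 * v * (√(1 - v ^ 2))⁻¹ +
    2 * (1 - 2 * v ^ 2) * v * (√(1 - v ^ 2))⁻¹ ^ 3) • ringPt b α

lemma sqrt_pos_of_lt {v : ℝ} (hv : |v| < 1) : 0 < √(1 - v ^ 2) := by
  have : v ^ 2 < 1 := (sq_lt_one_iff_abs_lt_one v).2 hv
  exact Real.sqrt_pos.2 (by linarith)

lemma sqrt_sq_of_lt {v : ℝ} (hv : |v| < 1) : √(1 - v ^ 2) ^ 2 = 1 - v ^ 2 := by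
  have : v ^ 2 < 1 := (sq_lt_one_iff_abs_lt_one v).2 hv
  exact Real.sq_sqrt (by linarith)

lemma hasDerivAt_sqrt_one_sub {v : ℝ} (hv : |v| < 1) :
    HasDerivAt (fun u : ℝ => √(1 - u ^ 2)) (-v * (√(1 - v ^ 2))⁻¹) v := by
  have h : HasDerivAt (fun u : ℝ => 1 - u ^ 2) (-(2 * v)) v := by
    simpa using ((hasDerivAt_id v).pow 2).const_sub 1
  have hp := sqrt_pos_of_lt hv
  refine (h.sqrt (Real.sqrt_pos.1 hp).ne').congr_deriv ?_
  field_simp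

lemma hasDerivAt_circPt {v : ℝ} (hv : |v| < 1) (α : ℝ) :
    HasDerivAt (fun u => circPt b u α) (circPt1 b v α) v := by
  have h1 : HasDerivAt (fun u : ℝ => 1 - 2 * u ^ 2) (-4 * v) v := by
    refine ((((hasDerivAt_id v).pow 2).const_mul 2).const_sub 1).congr_deriv ?_
    simp; ring
  have h2 : HasDerivAt (fun u : ℝ => 2 * u * √(1 - u ^ 2))
      (2 * (1 - 2 * v ^ 2) * (√(1 - v ^ 2))⁻¹) v := by
    refine (((hasDerivAt_id v).const_mul 2).mul (hasDerivAt_sqrt_one_sub hv)).congr_deriv ?_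
    have hp := sqrt_pos_of_lt hv
    have hs := sqrt_sq_of_lt hv
    simp only [id]
    field_simp
    rw [hs]; ring
  exact (h1.smul_const (b 2)).add (h2.smul_const (ringPt b α))

lemma hasDerivAt_circPt1 {v : ℝ} (hv : |v| < 1) (α : ℝ) :
    HasDerivAt (fun u => circPt1 b u α) (circPt2 b v α) v := by
  have h1 : HasDerivAt (fun u : ℝ => -4 * u) (-4) v := by
    simpa using (hasDerivAt_id v).const_mul (-4)
  have h2 : HasDerivAt (fun u : ℝ => 2 * (1 - 2 * u ^ 2) * (√(1 - u ^ 2))⁻¹)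
      (-8 * v * (√(1 - v ^ 2))⁻¹ + 2 * (1 - 2 * v ^ 2) * v * (√(1 - v ^ 2))⁻¹ ^ 3) v := by
    have hp := sqrt_pos_of_lt hv
    refine ((((((hasDerivAt_id v).pow 2).const_mul 2).const_sub 1).const_mul 2).mul
      ((hasDerivAt_sqrt_one_sub hv).inv hp.ne')).congr_deriv ?_
    simp only [id]
    simp
    field_simp
    ring
  exact (h1.smul_const (b 2)).add (h2.smul_const (ringPt b α))

lemma isOpen_abs_lt : IsOpen {v : ℝ | |v| < 1} := isOpen_lt continuous_abs continuous_const

lemma smooth_circPt : ContDiffOn ℝ (⊤ : ℕ∞) (fun p : ℝ × ℝ => circPt b p.1 p.2)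
    ({v : ℝ | |v| < 1} ×ˢ univ) := by
  have hs : ContDiffOn ℝ (⊤ : ℕ∞) (fun p : ℝ × ℝ => √(1 - p.1 ^ 2))
      ({v : ℝ | |v| < 1} ×ˢ univ) :=
    smooth_sqrt_one_sub.comp contDiff_fst.contDiffOn fun p hp => hp.1
  have hv : ContDiffOn ℝ (⊤ : ℕ∞) (fun p : ℝ × ℝ => p.1) ({v : ℝ | |v| < 1} ×ˢ univ) :=
    contDiff_fst.contDiffOn
  have hα : ContDiffOn ℝ (⊤ : ℕ∞) (fun p : ℝ × ℝ => p.2) ({v : ℝ | |v| < 1} ×ˢ univ) :=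
    contDiff_snd.contDiffOn
  unfold circPt
  exact ((contDiffOn_const.sub (contDiffOn_const.mul (hv.pow 2))).smul contDiffOn_const).add
    (((contDiffOn_const.mul hv).mul hs).smul ((hα.cos.smul contDiffOn_const).add
      (hα.sin.smul contDiffOn_const)))

/-- Derivatives of `circPt` in the angle along the circle. -/
lemma hasDerivAt_circPt_angle (v α : ℝ) :
    HasDerivAt (fun s => circPt b v s)
      ((2 * v * √(1 - v ^ 2)) • (-sin α • b 0 + cos α • b 1)) α ∧
    HasDerivAt (fun s => (2 * v * √(1 - v ^ 2)) • (-sin s • b 0 + cos s • b 1))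
      (-(2 * v * √(1 - v ^ 2)) • ringPt b α) α := by
  constructor
  · have := (((Real.hasDerivAt_cos α).smul_const (b 0)).add
      ((Real.hasDerivAt_sin α).smul_const (b 1))).const_smul (2 * v * √(1 - v ^ 2))
    exact this.const_add _
  · have := (((Real.hasDerivAt_sin α).neg.smul_const (b 0)).add
      ((Real.hasDerivAt_cos α).smul_const (b 1))).const_smul (2 * v * √(1 - v ^ 2))
    refine this.congr_deriv ?_
    unfold ringPt; module

/-- The second angular derivative integrates to zero over the circle. -/
lemma integral_angle (hf : SmoothOnSphere f) (hb : Orthonormal ℝ b) {v : ℝ} (hv : |v| < 1) :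
    Continuous (fun α => secInt f (circPt b v α)
      ((2 * v * √(1 - v ^ 2)) • (-sin α • b 0 + cos α • b 1))
      (-(2 * v * √(1 - v ^ 2)) • ringPt b α)) ∧
    ∫ α in Icc 0 (2 * π), secInt f (circPt b v α)
      ((2 * v * √(1 - v ^ 2)) • (-sin α • b 0 + cos α • b 1))
      (-(2 * v * √(1 - v ^ 2)) • ringPt b α) = 0 := by
  have hd : ∀ α, HasDerivAt (fun s => dd ((2 * v * √(1 - v ^ 2)) • (-sin s • b 0 + cos s • b 1)) f
      (circPt b v s)) (secInt f (circPt b v α)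
      ((2 * v * √(1 - v ^ 2)) • (-sin α • b 0 + cos α • b 1))
      (-(2 * v * √(1 - v ^ 2)) • ringPt b α)) α := fun α =>
    hasDerivAt_curve2 isOpen_ne_E3 hf.2 (c := circPt b v)
      (c' := fun s => (2 * v * √(1 - v ^ 2)) • (-sin s • b 0 + cos s • b 1))
      (hasDerivAt_circPt_angle v α).1 (hasDerivAt_circPt_angle v α).2 (circPt_ne hb hv.le α)
  have hsm := ((contDiffOn_infty_iff_fderiv_of_isOpen isOpen_ne_E3).1 hf.2).2
  have hsm2 := ((contDiffOn_infty_iff_fderiv_of_isOpen isOpen_ne_E3).1 hsm).2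
  have hq : Continuous (circPt b v) := by unfold circPt; fun_prop
  have c1 : Continuous fun α => fderiv ℝ f (circPt b v α) :=
    hsm.continuousOn.comp_continuous hq fun α => circPt_ne hb hv.le α
  have c2 : Continuous fun α => fderiv ℝ (fderiv ℝ f) (circPt b v α) :=
    hsm2.continuousOn.comp_continuous hq fun α => circPt_ne hb hv.le α
  have hc : Continuous (fun α => secInt f (circPt b v α)
      ((2 * v * √(1 - v ^ 2)) • (-sin α • b 0 + cos α • b 1))
      (-(2 * v * √(1 - v ^ 2)) • ringPt b α)) := by
    unfold secInt ringPt
    refine ((c2.clm_apply ?_).clm_apply ?_).add (c1.clm_apply ?_) <;> fun_prop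
  refine ⟨hc, ?_⟩
  rw [integral_Icc_eq_integral_Ioc, ← intervalIntegral.integral_of_le (by positivity),
    intervalIntegral.integral_eq_sub_of_hasDerivAt (fun α _ => hd α) (hc.intervalIntegrable _ _)]
  have : circPt b v (2 * π) = circPt b v 0 := by simpa using circPt_periodic b v 0
  rw [this]; simp

end CircleODE

section CirclePDE

variable {f : E3 → ℝ} {b : Fin 3 → E3}

/-- The frame `b` rotated by the angle `ε` in the plane of `b 0` and `b 2`. -/
def rot0 (b : Fin 3 → E3) (ε : ℝ) : Fin 3 → E3 :=
  ![cos ε • b 0 - sin ε • b 2, b 1, cos ε • b 2 + sin ε • b 0]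

/-- The frame `b` rotated by the angle `ε` in the plane of `b 1` and `b 2`. -/
def rot1 (b : Fin 3 → E3) (ε : ℝ) : Fin 3 → E3 :=
  ![b 0, cos ε • b 1 - sin ε • b 2, cos ε • b 2 + sin ε • b 1]

lemma orthonormal_of_inner {b : Fin 3 → E3} (h00 : ⟪b 0, b 0⟫ = (1 : ℝ)) (h11 : ⟪b 1, b 1⟫ = (1 : ℝ))
    (h22 : ⟪b 2, b 2⟫ = (1 : ℝ)) (h01 : ⟪b 0, b 1⟫ = (0 : ℝ)) (h02 : ⟪b 0, b 2⟫ = (0 : ℝ))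
    (h12 : ⟪b 1, b 2⟫ = (0 : ℝ)) : Orthonormal ℝ b := by
  rw [orthonormal_iff_ite]
  have h10 := (real_inner_comm (b 0) (b 1)).trans h01
  have h20 := (real_inner_comm (b 0) (b 2)).trans h02
  have h21 := (real_inner_comm (b 1) (b 2)).trans h12
  intro i j
  fin_cases i <;> fin_cases j <;> first
    | exact Eq.trans (by assumption) (if_pos rfl).symm
    | exact Eq.trans (by assumption) (if_neg (by decide)).symm

lemma inner_frame {b : Fin 3 → E3} (hb : Orthonormal ℝ b) :
    (⟪b 0, b 0⟫ = (1 : ℝ) ∧ ⟪b 1, b 1⟫ = (1 : ℝ) ∧ ⟪b 2, b 2⟫ = (1 : ℝ)) ∧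
    (⟪b 0, b 1⟫ = (0 : ℝ) ∧ ⟪b 0, b 2⟫ = (0 : ℝ) ∧ ⟪b 1, b 2⟫ = (0 : ℝ)) ∧
    (⟪b 1, b 0⟫ = (0 : ℝ) ∧ ⟪b 2, b 0⟫ = (0 : ℝ) ∧ ⟪b 2, b 1⟫ = (0 : ℝ)) := by
  simp only [orthonormal_inner hb]
  exact ⟨⟨if_pos trivial, if_pos trivial, if_pos trivial⟩,
    ⟨if_neg (by decide), if_neg (by decide), if_neg (by decide)⟩,
    if_neg (by decide), if_neg (by decide), if_neg (by decide)⟩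

lemma rot0_orthonormal (hb : Orthonormal ℝ b) (ε : ℝ) : Orthonormal ℝ (rot0 b ε) := by
  obtain ⟨⟨h00, h11, h22⟩, ⟨h01, h02, h12⟩, h10, h20, h21⟩ := inner_frame hb
  have := Real.cos_sq_add_sin_sq ε
  apply orthonormal_of_inner <;> simp only [rot0, Matrix.cons_val, inner_add_left, inner_add_right,
    inner_sub_left, inner_sub_right, real_inner_smul_left, real_inner_smul_right, *] <;> linarith

lemma rot1_orthonormal (hb : Orthonormal ℝ b) (ε : ℝ) : Orthonormal ℝ (rot1 b ε) := by
  obtain ⟨⟨h00, h11, h22⟩, ⟨h01, h02, h12⟩, h10, h20, h21⟩ := inner_frame hb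
  have := Real.cos_sq_add_sin_sq ε
  apply orthonormal_of_inner <;> simp only [rot1, Matrix.cons_val, inner_add_left, inner_add_right,
    inner_sub_left, inner_sub_right, real_inner_smul_left, real_inner_smul_right, *] <;> linarith

/-- Pointwise identity behind the differential equation of circle means: the radial operator and
the rotations of the centre differ by a multiple of the second angular derivative. -/
lemma circ_pointwise (L : E3 →L[ℝ] ℝ) (T : E3 →L[ℝ] E3 →L[ℝ] ℝ) (hT : ∀ u w, T u w = T w u)
    (b : Fin 3 → E3) {v : ℝ} (hv0 : v ≠ 0) (hv : |v| < 1) (α : ℝ) :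
    (1 - 3 * v ^ 2) * L (circPt1 b v α) +
        v * (1 - v ^ 2) * (T (circPt1 b v α) (circPt1 b v α) + L (circPt2 b v α)) =
      4 * v * ((T ((1 - 2 * v ^ 2) • b 0 - (2 * v * √(1 - v ^ 2) * cos α) • b 2)
          ((1 - 2 * v ^ 2) • b 0 - (2 * v * √(1 - v ^ 2) * cos α) • b 2)
          + L (-(1 - 2 * v ^ 2) • b 2 - (2 * v * √(1 - v ^ 2) * cos α) • b 0))
        + (T ((1 - 2 * v ^ 2) • b 1 - (2 * v * √(1 - v ^ 2) * sin α) • b 2)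
          ((1 - 2 * v ^ 2) • b 1 - (2 * v * √(1 - v ^ 2) * sin α) • b 2)
          + L (-(1 - 2 * v ^ 2) • b 2 - (2 * v * √(1 - v ^ 2) * sin α) • b 1)))
      - (1 - 2 * v ^ 2) ^ 2 * (√(1 - v ^ 2))⁻¹ ^ 2 * v⁻¹ *
        (T ((2 * v * √(1 - v ^ 2)) • (-sin α • b 0 + cos α • b 1))
          ((2 * v * √(1 - v ^ 2)) • (-sin α • b 0 + cos α • b 1))
          + L (-(2 * v * √(1 - v ^ 2)) • ringPt b α)) := by
  unfold circPt1 circPt2 ringPt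
  have hi : (√(1 - v ^ 2))⁻¹ * √(1 - v ^ 2) = 1 := inv_mul_cancel₀ (sqrt_pos_of_lt hv).ne'
  have hs := sqrt_sq_of_lt hv
  have hw : v⁻¹ * v = 1 := inv_mul_cancel₀ hv0
  have ht := Real.cos_sq_add_sin_sq α
  have h10 := hT (b 1) (b 0)
  have h20 := hT (b 2) (b 0)
  have h21 := hT (b 2) (b 1)
  simp only [map_add, map_sub, map_smul, map_neg, add_apply,
    sub_apply, smul_apply, smul_eq_mul, smul_add,
    neg_apply, h10, h20, h21, neg_smul]
  generalize (√(1 - v ^ 2))⁻¹ = i at *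
  generalize √(1 - v ^ 2) = c at *
  generalize v⁻¹ = w at *
  generalize cos α = k at *
  generalize sin α = s at *
  generalize T (b 0) (b 0) = T00
  generalize T (b 0) (b 1) = T01
  generalize T (b 0) (b 2) = T02
  generalize T (b 1) (b 1) = T11
  generalize T (b 1) (b 2) = T12
  generalize T (b 2) (b 2) = T22
  generalize L (b 0) = L0
  generalize L (b 1) = L1
  generalize L (b 2) = L2
  have hi2 : i ^ 2 * c ^ 2 = 1 := by rw [← mul_pow, hi, one_pow]
  have hA : v * (1 - v ^ 2) * i ^ 2 = v := by rw [← hs]; linear_combination v * hi2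
  have hB : i ^ 2 * w * v ^ 2 * c ^ 2 = v := by
    linear_combination w * v ^ 2 * hi2 + v * hw
  have hC : v * (1 - v ^ 2) * i = v * c := by rw [← hs]; linear_combination v * c * hi
  have hD : v * (1 - v ^ 2) * i ^ 3 = v * i := by rw [← hs]; linear_combination v * i * hi2
  have hE : i ^ 2 * w * v * c = i := by linear_combination i ^ 2 * c * hw + i * hi
  linear_combination 4 * (1 - 2 * v ^ 2) ^ 2 * (k ^ 2 * T00 + 2 * k * s * T01 + s ^ 2 * T11) * hA
    - 16 * v * (1 - 2 * v ^ 2) * (k * T02 + s * T12) * hC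
    - 16 * v ^ 3 * c ^ 2 * T22 * ht - 16 * v ^ 3 * T22 * hs
    + 4 * (1 - 2 * v ^ 2) ^ 2 * (s ^ 2 * T00 - 2 * k * s * T01 + k ^ 2 * T11) * hB
    + 4 * v * (1 - 2 * v ^ 2) ^ 2 * (T00 + T11) * ht
    - 8 * v * (k * L0 + s * L1) * hC + 2 * (1 - 2 * v ^ 2) * v * (k * L0 + s * L1) * hD
    - 2 * (1 - 2 * v ^ 2) ^ 2 * (k * L0 + s * L1) * hE

/-- Circle means in the two rotated families of frames, differentiated twice in the angle. -/
lemma rot_deriv (hf : SmoothOnSphere f) (hb : Orthonormal ℝ b) {v : ℝ} (hv : |v| < 1) :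
    (∃ m1 : ℝ → ℝ, (∀ ε, HasDerivAt (fun ε => circ f (rot0 b ε) v) (m1 ε) ε) ∧
      HasDerivAt m1 ((2 * π)⁻¹ * ∫ α in Icc 0 (2 * π), secInt f (circPt b v α)
        ((1 - 2 * v ^ 2) • b 0 - (2 * v * √(1 - v ^ 2) * cos α) • b 2)
        (-(1 - 2 * v ^ 2) • b 2 - (2 * v * √(1 - v ^ 2) * cos α) • b 0)) 0 ∧
      Continuous fun α => secInt f (circPt b v α)
        ((1 - 2 * v ^ 2) • b 0 - (2 * v * √(1 - v ^ 2) * cos α) • b 2)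
        (-(1 - 2 * v ^ 2) • b 2 - (2 * v * √(1 - v ^ 2) * cos α) • b 0)) ∧
    (∃ m1 : ℝ → ℝ, (∀ ε, HasDerivAt (fun ε => circ f (rot1 b ε) v) (m1 ε) ε) ∧
      HasDerivAt m1 ((2 * π)⁻¹ * ∫ α in Icc 0 (2 * π), secInt f (circPt b v α)
        ((1 - 2 * v ^ 2) • b 1 - (2 * v * √(1 - v ^ 2) * sin α) • b 2)
        (-(1 - 2 * v ^ 2) • b 2 - (2 * v * √(1 - v ^ 2) * sin α) • b 1)) 0 ∧
      Continuous fun α => secInt f (circPt b v α)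
        ((1 - 2 * v ^ 2) • b 1 - (2 * v * √(1 - v ^ 2) * sin α) • b 2)
        (-(1 - 2 * v ^ 2) • b 2 - (2 * v * √(1 - v ^ 2) * sin α) • b 1)) := by
  set C := 1 - 2 * v ^ 2
  set S := 2 * v * √(1 - v ^ 2)
  -- differentiation of the rotating vectors
  have hrot : ∀ (u w : E3) (ε : ℝ), HasDerivAt (fun ε : ℝ => cos ε • u + sin ε • w)
      (cos ε • w - sin ε • u) ε := fun u w ε => by
    refine (((Real.hasDerivAt_cos ε).smul_const u).add
      ((Real.hasDerivAt_sin ε).smul_const w)).congr_deriv ?_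
    module
  have hrot' : ∀ (u w : E3) (ε : ℝ), HasDerivAt (fun ε : ℝ => cos ε • w - sin ε • u)
      (-(cos ε • u) - sin ε • w) ε := fun u w ε => by
    refine (((Real.hasDerivAt_cos ε).smul_const w).sub
      ((Real.hasDerivAt_sin ε).smul_const u)).congr_deriv ?_
    module
  have main : ∀ (a c : Fin 3) (k l : ℝ → ℝ), ContDiff ℝ (⊤ : ℕ∞) k → ContDiff ℝ (⊤ : ℕ∞) l →
      ∀ (B : ℝ → Fin 3 → E3), (∀ ε, Orthonormal ℝ (B ε)) →
      (∀ ε α, circPt (B ε) v α = C • (cos ε • b 2 + sin ε • b a) +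
        (S * k α) • (cos ε • b a - sin ε • b 2) + (S * l α) • b c) →
      ∃ m1 : ℝ → ℝ, (∀ ε, HasDerivAt (fun ε => circ f (B ε) v) (m1 ε) ε) ∧
      HasDerivAt m1 ((2 * π)⁻¹ * ∫ α in Icc 0 (2 * π), secInt f (circPt (B 0) v α)
        (C • b a - (S * k α) • b 2) (-C • b 2 - (S * k α) • b a)) 0 ∧
      Continuous fun α => secInt f (circPt (B 0) v α)
        (C • b a - (S * k α) • b 2) (-C • b 2 - (S * k α) • b a) := by
    intro a c k l hk hl B hB hcp
    have key := fun z => mean_deriv hf isOpen_univ (q := fun ε α => circPt (B ε) v α)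
      (q1 := fun ε α => C • (cos ε • b a - sin ε • b 2) +
        (S * k α) • (-(cos ε • b 2) - sin ε • b a))
      (q2 := fun ε α => C • (-(cos ε • b 2) - sin ε • b a) +
        (S * k α) • -(cos ε • b a - sin ε • b 2)) (z := z)
      (by
        simp only [hcp]
        refine ContDiff.contDiffOn ?_
        have h1 : ContDiff ℝ (⊤ : ℕ∞) fun p : ℝ × ℝ => k p.2 := hk.comp contDiff_snd
        have h2 : ContDiff ℝ (⊤ : ℕ∞) fun p : ℝ × ℝ => l p.2 := hl.comp contDiff_snd
        fun_prop)
      (fun z _ α => circPt_ne (hB z) hv.le α)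
      (fun z _ α => by
        simp only [hcp]
        exact (((hrot _ _ z).const_smul C).add ((hrot' _ _ z).const_smul (S * k α))).add_const _)
      (fun z _ α => by
        refine ((hrot' _ _ z).const_smul C).add (HasDerivAt.const_smul (S * k α) ?_)
        refine ((hrot (b 2) (b a) z).neg).congr_of_eventuallyEq ?_ |>.congr_deriv rfl
        exact Eventually.of_forall fun y => by simp [sub_eq_add_neg, add_comm])
      (mem_univ z)
    have s1 : ∀ α, C • (cos 0 • b a - sin 0 • b 2) + (S * k α) • (-(cos 0 • b 2) - sin 0 • b a) =
        C • b a - (S * k α) • b 2 := fun α => by simp [sub_eq_add_neg]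
    have s2 : ∀ α, C • (-(cos 0 • b 2) - sin 0 • b a) + (S * k α) • -(cos 0 • b a - sin 0 • b 2) =
        -C • b 2 - (S * k α) • b a := fun α => by simp [sub_eq_add_neg]
    refine ⟨_, fun ε => (key ε).1.const_mul (2 * π)⁻¹, ?_, ?_⟩
    · have := (key 0).2.1.const_mul (2 * π)⁻¹
      simpa only [s1, s2] using this
    · have := (key 0).2.2.2
      simpa only [s1, s2] using this
  have h00 : rot0 b 0 = b := by
    funext i; fin_cases i <;> simp [rot0]
  have h10 : rot1 b 0 = b := by
    funext i; fin_cases i <;> simp [rot1]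
  constructor
  · have := main 0 1 cos sin Real.contDiff_cos Real.contDiff_sin (rot0 b)
      (rot0_orthonormal hb) (fun ε α => by
        simp only [circPt, rot0, Matrix.cons_val, C, S]; module)
    simpa only [h00] using this
  · have := main 1 0 sin cos Real.contDiff_sin Real.contDiff_cos (rot1 b)
      (rot1_orthonormal hb) (fun ε α => by
        simp only [circPt, rot1, Matrix.cons_val, C, S]; module)
    simpa only [h10] using this

end CirclePDE

lemma coord_orthonormal {b : Fin 3 → E3} (hb : Orthonormal ℝ b) (i j : Fin 3) :
    b 0 i * b 0 j + b 1 i * b 1 j + b 2 i * b 2 j = if i = j then 1 else 0 := by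
  have h := congrArg (fun y : E3 => y j) (orthonormal_expand hb (EuclideanSpace.single i 1))
  simp only [EuclideanSpace.inner_single_right, PiLp.add_apply, PiLp.smul_apply, smul_eq_mul,
    PiLp.single_apply] at h
  simp only [conj_trivial, one_mul] at h
  rw [← h]
  by_cases hij : i = j
  · rw [if_pos hij, if_pos hij.symm]
  · rw [if_neg hij, if_neg (Ne.symm hij)]

/-- The Laplacian computed in an arbitrary orthonormal frame. -/
lemma lapx_frame {G : ℝ × E3 → ℝ} {U : Set (ℝ × E3)} (hU : IsOpen U)
    (hG : ContDiffOn ℝ (⊤ : ℕ∞) G U) {z : ℝ × E3} (hz : z ∈ U) {b : Fin 3 → E3}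
    (hb : Orthonormal ℝ b) :
    lapx G z = ∑ a : Fin 3, fderiv ℝ (fderiv ℝ G) z (0, b a) (0, b a) := by
  have hex : ∀ a, ((0, b a) : ℝ × E3) = ∑ i : Fin 3, b a i • es i := fun a => by
    refine Prod.ext (by simp [es, Fin.sum_univ_three]) ?_
    have h1 := sum_single_smul (b a)
    rw [Prod.snd_sum]
    simpa [es] using h1
  unfold lapx
  simp only [dd_dd_eq hU hG _ _ hz, hex]
  generalize fderiv ℝ (fderiv ℝ G) z = T
  have o := coord_orthonormal hb
  have o00 : _ = (1 : ℝ) := (o 0 0).trans (if_pos rfl)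
  have o11 : _ = (1 : ℝ) := (o 1 1).trans (if_pos rfl)
  have o22 : _ = (1 : ℝ) := (o 2 2).trans (if_pos rfl)
  have o01 : _ = (0 : ℝ) := (o 0 1).trans (if_neg (by decide))
  have o02 : _ = (0 : ℝ) := (o 0 2).trans (if_neg (by decide))
  have o12 : _ = (0 : ℝ) := (o 1 2).trans (if_neg (by decide))
  simp only [Fin.sum_univ_three, map_add, map_smul, add_apply, smul_apply, smul_eq_mul]
  linear_combination -(T (es 0) (es 0)) * o00 - (T (es 1) (es 1)) * o11 - (T (es 2) (es 2)) * o22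
    - (T (es 0) (es 1) + T (es 1) (es 0)) * o01 - (T (es 0) (es 2) + T (es 2) (es 0)) * o02
    - (T (es 1) (es 2) + T (es 2) (es 1)) * o12

/-- Second-order Euler relation for degree-zero homogeneous functions. -/
lemma Hom0.euler2 {G : ℝ × E3 → ℝ} (hG : ContDiffOn ℝ (⊤ : ℕ∞) G cyl) (h0 : Hom0 G)
    {s : ℝ} {x : E3} (h : (s, x) ∈ cyl) :
    fderiv ℝ (fderiv ℝ G) (s, x) (0, x) (0, x) = 0 := by
  have hc : ∀ c : ℝ, HasDerivAt (fun c : ℝ => ((s, c • x) : ℝ × E3)) (0, x) c := fun c => by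
    refine (hasDerivAt_const _ _).prodMk ?_
    simpa using (hasDerivAt_id c).smul_const x
  have h1 := hasDerivAt_curve2 isOpen_cyl hG (c' := fun _ => ((0, x) : ℝ × E3)) (hc 1)
    (hasDerivAt_const _ _) (by simpa using h)
  simp only [one_smul, map_zero, add_zero] at h1
  refine h1.unique ((hasDerivAt_const (1 : ℝ) (0 : ℝ)).congr_of_eventuallyEq ?_)
  filter_upwards [lt_mem_nhds (zero_lt_one : (0 : ℝ) < 1)] with c hcp
  have hm : (s, c • x) ∈ cyl := ⟨h.1, smul_ne_zero hcp.ne' h.2⟩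
  have h2 := h0.euler hG hm
  rw [← dd_snd_eq_sum] at h2
  have h3 : ((0, c • x) : ℝ × E3) = c • (0, x) := by simp
  unfold dd at h2 ⊢
  rw [h3, map_smul, smul_eq_mul] at h2
  exact (mul_eq_zero.1 h2).resolve_left hcp.ne'

lemma integral_comb {g1 g2 k0 k1 k2 : ℝ → ℝ} (h1 : Continuous g1) (h2 : Continuous g2)
    (l0 : Continuous k0) (l1 : Continuous k1) (l2 : Continuous k2) {a b c d : ℝ} {T : ℝ}
    (h : ∀ α, a * g1 α + b * g2 α = c * (k0 α + k1 α) - d * k2 α) :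
    a * (∫ α in Icc 0 T, g1 α) + b * (∫ α in Icc 0 T, g2 α) =
      c * ((∫ α in Icc 0 T, k0 α) + ∫ α in Icc 0 T, k1 α) - d * ∫ α in Icc 0 T, k2 α := by
  have int : ∀ {g : ℝ → ℝ}, Continuous g → IntegrableOn g (Icc 0 T) :=
    fun hg => hg.continuousOn.integrableOn_compact isCompact_Icc
  have l01 : Continuous fun α => k0 α + k1 α := l0.add l1
  have hI := congrArg (fun g : ℝ → ℝ => ∫ α in Icc 0 T, g α) (funext h)
  rw [integral_add ((int h1).const_mul _) ((int h2).const_mul _),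
    integral_sub ((int l01).const_mul _) ((int l2).const_mul _)] at hI
  simp only [integral_const_mul] at hI
  rw [integral_add (int l0) (int l1)] at hI
  exact hI

/-- Circle means satisfy a second-order equation in the radius parameter and the centre. -/
lemma nmean_pde {f : E3 → ℝ} (hf : SmoothOnSphere f) {v : ℝ} {x : E3} (hv0 : v ≠ 0)
    (h : (v, x) ∈ cyl) :
    (1 - 3 * v ^ 2) * dd e0 (nmean f) (v, x) + v * (1 - v ^ 2) * dd e0 (dd e0 (nmean f)) (v, x) =
      4 * v * (‖x‖ ^ 2 * lapx (nmean f) (v, x)) := by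
  have hv : |v| < 1 := h.1
  have hx : x ≠ 0 := h.2
  have hr : 0 < ‖x‖ := norm_pos_iff.2 hx
  have hS := smooth_nmean hf
  set b := frame stdFrame x with hbdef
  have hb : Orthonormal ℝ b := frame_orthonormal stdFrame_orthonormal x
  have hb2 : b 2 = ‖x‖⁻¹ • x := frame_two stdFrame_orthonormal hx
  have hxb : ‖x‖ • b 2 = x := by rw [hb2, smul_smul, mul_inv_cancel₀ hr.ne', one_smul]
  set n := nmean f with hn
  have rad := fun u (hu : |u| < 1) => mean_deriv hf isOpen_abs_lt (q := circPt b) (q1 := circPt1 b)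
    (q2 := circPt2 b) smooth_circPt (fun z hz α => circPt_ne hb (le_of_lt hz) α)
    (fun z hz α => hasDerivAt_circPt hz α) (fun z hz α => hasDerivAt_circPt1 hz α) (z := u) hu
  have r1 : ∀ u, |u| < 1 → dd e0 n (u, x) =
      (2 * π)⁻¹ * ∫ α in Icc 0 (2 * π), dd (circPt1 b u α) f (circPt b u α) := fun u hu =>
    (hasDerivAt_fst isOpen_cyl hS ⟨hu, hx⟩).unique ((rad u hu).1.const_mul (2 * π)⁻¹)
  have r2 : dd e0 (dd e0 n) (v, x) = (2 * π)⁻¹ * ∫ α in Icc 0 (2 * π),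
      secInt f (circPt b v α) (circPt1 b v α) (circPt2 b v α) := by
    refine (hasDerivAt_fst isOpen_cyl (smooth_dd isOpen_cyl hS e0) h).unique
      (((rad v hv).2.1.const_mul (2 * π)⁻¹).congr_of_eventuallyEq ?_)
    filter_upwards [isOpen_abs_lt.mem_nhds hv] with u hu using r1 u hu
  obtain ⟨⟨m0, hm0, hm0', c0⟩, ⟨m1, hm1, hm1', c1⟩⟩ := rot_deriv hf hb hv
  -- moving the centre along a great circle
  have ang : ∀ (a : Fin 3), ⟪b 2, b a⟫ = (0 : ℝ) → ∀ (B : ℝ → Fin 3 → E3),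
      (∀ ε, Orthonormal ℝ (B ε)) → (∀ ε, B ε 2 = cos ε • b 2 + sin ε • b a) →
      ∀ (m : ℝ → ℝ) (m' : ℝ), (∀ ε, HasDerivAt (fun ε => circ f (B ε) v) (m ε) ε) →
      HasDerivAt m m' 0 →
      m' = ‖x‖ ^ 2 * fderiv ℝ (fderiv ℝ n) (v, x) (0, b a) (0, b a) := by
    intro a ha B hB hB2 m m' hm hm'
    have hnorm : ∀ ε, ‖‖x‖ • B ε 2‖ = ‖x‖ := fun ε => by
      rw [norm_smul, norm_norm, (hB ε).1 2, mul_one]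
    have hne : ∀ ε, ‖x‖ • B ε 2 ≠ 0 := fun ε => by
      rw [← norm_pos_iff, hnorm]; exact hr
    have hmem : ∀ ε, (v, ‖x‖ • B ε 2) ∈ cyl := fun ε => ⟨hv, hne ε⟩
    have hc : ∀ ε, HasDerivAt (fun ε => ((v, ‖x‖ • B ε 2) : ℝ × E3))
        (0, ‖x‖ • (-sin ε • b 2 + cos ε • b a)) ε := fun ε => by
      refine (hasDerivAt_const _ _).prodMk ?_
      simp only [hB2]
      exact (((Real.hasDerivAt_cos ε).smul_const _).add
        ((Real.hasDerivAt_sin ε).smul_const _)).const_smul ‖x‖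
    have hc' : HasDerivAt (fun ε => ((0, ‖x‖ • (-sin ε • b 2 + cos ε • b a)) : ℝ × E3))
        (0, -x) 0 := by
      refine (hasDerivAt_const _ _).prodMk ?_
      refine ((((Real.hasDerivAt_sin 0).neg.smul_const (b 2)).add
        ((Real.hasDerivAt_cos 0).smul_const (b a))).const_smul ‖x‖).congr_deriv ?_
      simp [hxb]
    have e1 : ∀ ε, m ε = dd (0, ‖x‖ • (-sin ε • b 2 + cos ε • b a)) n (v, ‖x‖ • B ε 2) := by
      intro ε
      refine (hm ε).unique ((hasDerivAt_curve isOpen_cyl hS (hc ε)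
        (hmem ε)).congr_of_eventuallyEq (Eventually.of_forall fun ε' => ?_))
      refine (nmean_eq f (hB ε') (hne ε') ?_ v).symm
      rw [hnorm, smul_smul, inv_mul_cancel₀ hr.ne', one_smul]
    have e2 := hasDerivAt_curve2 isOpen_cyl hS
      (c' := fun ε => ((0, ‖x‖ • (-sin ε • b 2 + cos ε • b a)) : ℝ × E3)) (hc 0) hc' (hmem 0)
    have e3 := hm'.unique (e2.congr_of_eventuallyEq (Eventually.of_forall e1))
    have hx0 : ‖x‖ • B 0 2 = x := by simp [hB2, hxb]
    have heu : fderiv ℝ n (v, x) (0, -x) = 0 := by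
      have := (nmean_hom f).euler hS h
      rw [← dd_snd_eq_sum] at this
      have h3 : ((0, -x) : ℝ × E3) = -(0, x) := by simp
      rw [h3, map_neg, neg_eq_zero]; exact this
    have h4 : ((0, ‖x‖ • b a) : ℝ × E3) = ‖x‖ • (0, b a) := by simp
    simp only [hx0, heu, sin_zero, cos_zero, neg_zero, zero_smul, one_smul, zero_add, add_zero,
      h4, map_smul, smul_apply, smul_eq_mul] at e3
    rw [e3]; ring
  obtain ⟨-, ⟨-, -, -⟩, -, h20, h21⟩ := inner_frame hb
  have a0 := ang 0 h20 (rot0 b) (rot0_orthonormal hb) (fun ε => by simp [rot0]) m0 _ hm0 hm0'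
  have a1 := ang 1 h21 (rot1 b) (rot1_orthonormal hb) (fun ε => by simp [rot1]) m1 _ hm1 hm1'
  have a2 : fderiv ℝ (fderiv ℝ n) (v, x) (0, b 2) (0, b 2) = 0 := by
    have := (nmean_hom f).euler2 hS h
    have h4 : ((0, b 2) : ℝ × E3) = ‖x‖⁻¹ • (0, x) := by rw [hb2]; simp
    rw [h4, map_smul, map_smul]
    simp only [smul_apply]
    rw [this]; simp
  rw [r1 v hv, r2, lapx_frame isOpen_cyl hS h hb, Fin.sum_univ_three, a2, add_zero, mul_add,
    ← a0, ← a1]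
  obtain ⟨ci, hi⟩ := integral_angle hf hb hv
  have hsymm : ∀ α, ∀ u w, fderiv ℝ (fderiv ℝ f) (circPt b v α) u w =
      fderiv ℝ (fderiv ℝ f) (circPt b v α) w u := fun α u w => by
    rw [← dd_dd_eq isOpen_ne_E3 hf.2 u w (circPt_ne hb hv.le α),
      dd_comm isOpen_ne_E3 hf.2 u w (circPt_ne hb hv.le α),
      dd_dd_eq isOpen_ne_E3 hf.2 w u (circPt_ne hb hv.le α)]
  have hp := fun α => circ_pointwise (fderiv ℝ f (circPt b v α))
    (fderiv ℝ (fderiv ℝ f) (circPt b v α)) (hsymm α) b hv0 hv α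
  have hI := integral_comb (T := 2 * π) (rad v hv).2.2.1 (rad v hv).2.2.2 c0 c1 ci hp
  rw [hi] at hI
  linear_combination (2 * π)⁻¹ * hI

/-! ### The logarithmic potential -/

lemma dd_add {G H : ℝ × E3 → ℝ} {U : Set (ℝ × E3)} (hU : IsOpen U)
    (hG : ContDiffOn ℝ (⊤ : ℕ∞) G U) (hH : ContDiffOn ℝ (⊤ : ℕ∞) H U) (w : ℝ × E3)
    {z : ℝ × E3} (hz : z ∈ U) : dd w (fun z => G z + H z) z = dd w G z + dd w H z := by
  have := ((smooth_differentiableAt hU hG hz).hasFDerivAt.add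
    (smooth_differentiableAt hU hH hz).hasFDerivAt).fderiv
  unfold dd
  change fderiv ℝ (G + H) z w = _
  rw [this]; rfl

lemma dd_mul {G H : ℝ × E3 → ℝ} {U : Set (ℝ × E3)} (hU : IsOpen U)
    (hG : ContDiffOn ℝ (⊤ : ℕ∞) G U) (hH : ContDiffOn ℝ (⊤ : ℕ∞) H U) (w : ℝ × E3)
    {z : ℝ × E3} (hz : z ∈ U) : dd w (fun z => G z * H z) z = G z * dd w H z + dd w G z * H z := by
  have := ((smooth_differentiableAt hU hG hz).hasFDerivAt.mul
    (smooth_differentiableAt hU hH hz).hasFDerivAt).fderiv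
  unfold dd
  change fderiv ℝ (G * H) z w = _
  rw [this]
  simp only [add_apply, smul_apply, smul_eq_mul]
  ring

lemma lapx_add {G H : ℝ × E3 → ℝ} {U : Set (ℝ × E3)} (hU : IsOpen U)
    (hG : ContDiffOn ℝ (⊤ : ℕ∞) G U) (hH : ContDiffOn ℝ (⊤ : ℕ∞) H U)
    {z : ℝ × E3} (hz : z ∈ U) : lapx (fun z => G z + H z) z = lapx G z + lapx H z := by
  unfold lapx
  rw [← Finset.sum_add_distrib]
  refine Finset.sum_congr rfl fun i _ => ?_
  rw [dd_congr hU (fun y hy => dd_add hU hG hH (es i) hy) (es i) hz,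
    dd_add hU (smooth_dd hU hG _) (smooth_dd hU hH _) _ hz]

/-- Factors independent of the spatial variable commute with spatial derivatives. -/
lemma dd_es_fst_mul {l : ℝ → ℝ} {G : ℝ × E3 → ℝ} {U : Set (ℝ × E3)} (hU : IsOpen U)
    (hl : ContDiffOn ℝ (⊤ : ℕ∞) (fun z : ℝ × E3 => l z.1) U)
    (hG : ContDiffOn ℝ (⊤ : ℕ∞) G U) (i : Fin 3)
    {z : ℝ × E3} (hz : z ∈ U) : dd (es i) (fun z => l z.1 * G z) z = l z.1 * dd (es i) G z := by
  have hz' : (z.1, z.2) ∈ U := hz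
  have h0 : dd (es i) (fun z : ℝ × E3 => l z.1) (z.1, z.2) = 0 :=
    dd_es_eq hU hl hz' (hasDerivAt_const (0 : ℝ) (l z.1))
  rw [dd_mul hU hl hG _ hz, show dd (es i) (fun z : ℝ × E3 => l z.1) z = 0 from h0, zero_mul,
    add_zero]

lemma lapx_fst_mul {l : ℝ → ℝ} {G : ℝ × E3 → ℝ} {U : Set (ℝ × E3)} (hU : IsOpen U)
    (hl : ContDiffOn ℝ (⊤ : ℕ∞) (fun z : ℝ × E3 => l z.1) U)
    (hG : ContDiffOn ℝ (⊤ : ℕ∞) G U) {z : ℝ × E3} (hz : z ∈ U) :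
    lapx (fun z => l z.1 * G z) z = l z.1 * lapx G z := by
  unfold lapx
  rw [Finset.mul_sum]
  refine Finset.sum_congr rfl fun i _ => ?_
  rw [dd_congr hU (fun y hy => dd_es_fst_mul hU hl hG i hy) (es i) hz,
    dd_es_fst_mul hU hl (smooth_dd hU hG _) i hz]

lemma smooth_lapx {G : ℝ × E3 → ℝ} {U : Set (ℝ × E3)} (hU : IsOpen U)
    (hG : ContDiffOn ℝ (⊤ : ℕ∞) G U) : ContDiffOn ℝ (⊤ : ℕ∞) (lapx G) U := by
  unfold lapx
  exact ContDiffOn.sum fun i _ => smooth_dd hU (smooth_dd hU hG _) _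

/-- The Euler operator `a ∂ₐ` in the first variable. -/
def eul (h : ℝ × E3 → ℝ) (z : ℝ × E3) : ℝ := z.1 * dd e0 h z

lemma smooth_eul {h : ℝ × E3 → ℝ} (hh : ContDiffOn ℝ (⊤ : ℕ∞) h cyl) :
    ContDiffOn ℝ (⊤ : ℕ∞) (eul h) cyl :=
  contDiff_fst.contDiffOn.mul (smooth_dd isOpen_cyl hh e0)

/-- The potential `∫₀¹ ln(1 - κ²) (∂_κ h(κa, x)) dκ` of a function on the cylinder. -/
def logPot (h : ℝ × E3 → ℝ) (z : ℝ × E3) : ℝ :=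
  ∫ κ in Icc (0 : ℝ) 1, Real.log (1 - κ ^ 2) • (z.1 * dd e0 h (κ * z.1, z.2))

lemma integrable_log_weight : IntegrableOn (fun κ : ℝ => Real.log (1 - κ ^ 2)) (Icc 0 1) := by
  rw [integrableOn_Icc_iff_integrableOn_Ioo]
  have h1 : IntegrableOn (fun κ : ℝ => Real.log (1 - κ)) (Ioo 0 1) := by
    have : IntervalIntegrable (fun κ : ℝ => Real.log (1 - κ)) volume 0 1 := by
      have h := (intervalIntegral.intervalIntegrable_log' (a := 1) (b := 0)).comp_sub_left 1
      simpa using h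
    exact ((intervalIntegrable_iff_integrableOn_Ioo_of_le zero_le_one).1 this)
  have h2 : IntegrableOn (fun κ : ℝ => Real.log (1 + κ)) (Ioo 0 1) := by
    have : ContinuousOn (fun κ : ℝ => Real.log (1 + κ)) (Icc 0 1) :=
      ContinuousOn.log (by fun_prop) fun κ hκ => by have := hκ.1; positivity
    exact (this.integrableOn_compact isCompact_Icc).mono_set Ioo_subset_Icc_self
  refine (h1.add h2).congr_fun (fun κ hκ => ?_) measurableSet_Ioo
  have : 1 - κ ^ 2 = (1 - κ) * (1 + κ) := by ring
  simp only [this, Pi.add_apply]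
  exact (Real.log_mul (by linarith [hκ.2]) (by linarith [hκ.1])).symm

/-- The domain of the integrand of `logPot`. -/
def potDom : Set ((ℝ × E3) × ℝ) := {p | (p.2 * p.1.1, p.1.2) ∈ cyl}

lemma isOpen_potDom : IsOpen potDom :=
  isOpen_cyl.preimage (f := fun p : (ℝ × E3) × ℝ => (p.2 * p.1.1, p.1.2)) (by fun_prop)

lemma scale_mem_cyl {z : ℝ × E3} (hz : z ∈ cyl) {κ : ℝ} (hκ : κ ∈ Icc (0 : ℝ) 1) :
    (κ * z.1, z.2) ∈ cyl := by
  refine ⟨?_, hz.2⟩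
  simp only [abs_mul, abs_of_nonneg hκ.1]
  exact (mul_le_of_le_one_left (abs_nonneg _) hκ.2).trans_lt hz.1

lemma potDom_sub : ∀ z ∈ cyl, ∀ κ ∈ Icc (0 : ℝ) 1, (z, κ) ∈ potDom :=
  fun _ hz _ hκ => scale_mem_cyl hz hκ

lemma smooth_scale {h : ℝ × E3 → ℝ} (hh : ContDiffOn ℝ (⊤ : ℕ∞) h cyl) :
    ContDiffOn ℝ (⊤ : ℕ∞) (fun p : (ℝ × E3) × ℝ => h (p.2 * p.1.1, p.1.2)) potDom :=
  hh.comp (f := fun p : (ℝ × E3) × ℝ => (p.2 * p.1.1, p.1.2))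
    (ContDiff.contDiffOn (by fun_prop)) fun _ hp => hp

lemma smooth_potInt {h : ℝ × E3 → ℝ} (hh : ContDiffOn ℝ (⊤ : ℕ∞) h cyl) :
    ContDiffOn ℝ (⊤ : ℕ∞)
      (fun p : (ℝ × E3) × ℝ => p.1.1 * dd e0 h (p.2 * p.1.1, p.1.2)) potDom :=
  ContDiffOn.mul (ContDiff.contDiffOn (by fun_prop)) (smooth_scale (smooth_dd isOpen_cyl hh e0))

lemma smooth_logPot {h : ℝ × E3 → ℝ} (hh : ContDiffOn ℝ (⊤ : ℕ∞) h cyl) :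
    ContDiffOn ℝ (⊤ : ℕ∞) (logPot h) cyl :=
  contDiffOn_param isCompact_Icc integrable_log_weight isOpen_cyl isOpen_potDom potDom_sub
    (smooth_potInt hh)

lemma dd_es_logPot {h : ℝ × E3 → ℝ} (hh : ContDiffOn ℝ (⊤ : ℕ∞) h cyl) (i : Fin 3)
    {z : ℝ × E3} (hz : z ∈ cyl) : dd (es i) (logPot h) z = logPot (dd (es i) h) z := by
  have := dd_param isCompact_Icc integrable_log_weight isOpen_cyl isOpen_potDom potDom_sub
    (smooth_potInt hh) hz (es i)
  unfold logPot
  rw [this]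
  refine setIntegral_congr_fun measurableSet_Icc fun κ hκ => ?_
  congr 1
  have hc : HasDerivAt (fun ε : ℝ => ((z + ε • es i, κ) : (ℝ × E3) × ℝ)) (es i, 0) 0 := by
    refine HasDerivAt.prodMk ?_ (hasDerivAt_const _ _)
    simpa using ((hasDerivAt_id (0 : ℝ)).smul_const (es i)).const_add z
  have h1 := hasDerivAt_curve isOpen_potDom (smooth_potInt hh) hc
    (by simpa using potDom_sub z hz κ hκ)
  simp only [zero_smul, add_zero] at h1
  refine h1.unique ?_
  have h2 := (hasDerivAt_curve isOpen_cyl (smooth_dd isOpen_cyl hh e0)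
    (hasDerivAt_line (κ * z.1) z.2 i) (by simpa using scale_mem_cyl hz hκ)).const_mul z.1
  simp only [zero_smul, add_zero] at h2
  rw [dd_comm isOpen_cyl hh _ _ (scale_mem_cyl hz hκ)] at h2
  refine h2.congr_of_eventuallyEq (Eventually.of_forall fun ε => ?_)
  simp [es]

lemma logPot_congr {g h : ℝ × E3 → ℝ} (e : ∀ z ∈ cyl, g z = h z) {z : ℝ × E3} (hz : z ∈ cyl) :
    logPot g z = logPot h z := by
  unfold logPot
  refine setIntegral_congr_fun measurableSet_Icc fun κ hκ => ?_
  rw [dd_congr isOpen_cyl e e0 (scale_mem_cyl hz hκ)]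

lemma integrable_potInt {h : ℝ × E3 → ℝ} (hh : ContDiffOn ℝ (⊤ : ℕ∞) h cyl) {z : ℝ × E3}
    (hz : z ∈ cyl) :
    IntegrableOn (fun κ => Real.log (1 - κ ^ 2) • (z.1 * dd e0 h (κ * z.1, z.2))) (Icc 0 1) := by
  refine IntegrableOn.mul_continuousOn integrable_log_weight ?_ isCompact_Icc
  exact (smooth_potInt hh).continuousOn.comp (f := fun κ : ℝ => (z, κ)) (by fun_prop)
    fun κ hκ => potDom_sub z hz κ hκ

lemma lapx_logPot {h : ℝ × E3 → ℝ} (hh : ContDiffOn ℝ (⊤ : ℕ∞) h cyl) {z : ℝ × E3}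
    (hz : z ∈ cyl) : ‖z.2‖ ^ 2 * lapx (logPot h) z = logPot (fun z => ‖z.2‖ ^ 2 * lapx h z) z := by
  have e1 : ∀ i, dd (es i) (dd (es i) (logPot h)) z = logPot (dd (es i) (dd (es i) h)) z :=
    fun i => by
      rw [dd_congr isOpen_cyl (fun y hy => dd_es_logPot hh i hy) (es i) hz,
        dd_es_logPot (smooth_dd isOpen_cyl hh _) i hz]
  have hd : ∀ i, ContDiffOn ℝ (⊤ : ℕ∞) (dd (es i) (dd (es i) h)) cyl := fun i =>
    smooth_dd isOpen_cyl (smooth_dd isOpen_cyl hh _) _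
  rw [show lapx (logPot h) z = ∑ i, logPot (dd (es i) (dd (es i) h)) z from
    Finset.sum_congr rfl fun i _ => e1 i]
  unfold logPot
  rw [← integral_finsetSum _ fun i _ => integrable_potInt (hd i) hz, ← integral_const_mul]
  refine setIntegral_congr_fun measurableSet_Icc fun κ hκ => ?_
  have hm := scale_mem_cyl hz hκ
  have h1 := (hasDerivAt_fst isOpen_cyl (hd 0) hm).add ((hasDerivAt_fst isOpen_cyl (hd 1) hm).add
    (hasDerivAt_fst isOpen_cyl (hd 2) hm))
  have h2 := h1.const_mul (‖z.2‖ ^ 2)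
  have hn : ContDiffOn ℝ (⊤ : ℕ∞) (fun z : ℝ × E3 => ‖z.2‖ ^ 2) cyl :=
    (contDiff_snd.norm_sq ℝ).contDiffOn
  have h3 := hasDerivAt_fst isOpen_cyl (hn.mul (smooth_lapx isOpen_cyl hh)) hm
  have h4 := h3.unique (h2.congr_of_eventuallyEq (Eventually.of_forall fun u => by
    simp only [Pi.add_apply, lapx, Fin.sum_univ_three]; ring))
  simp only [Fin.sum_univ_three, smul_eq_mul]
  change _ = Real.log (1 - κ ^ 2) * (z.1 * dd e0 (fun z : ℝ × E3 => ‖z.2‖ ^ 2 * lapx h z)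
    (κ * z.1, z.2))
  change dd e0 (fun z : ℝ × E3 => ‖z.2‖ ^ 2 * lapx h z) (κ * z.1, z.2) = _ at h4
  rw [h4]
  ring

/-- The potential commutes with the Euler operator, because the latter commutes with scaling. -/
lemma eul_logPot {h : ℝ × E3 → ℝ} (hh : ContDiffOn ℝ (⊤ : ℕ∞) h cyl) {z : ℝ × E3}
    (hz : z ∈ cyl) : eul (logPot h) z = logPot (eul h) z := by
  have := dd_param isCompact_Icc integrable_log_weight isOpen_cyl isOpen_potDom potDom_sub
    (smooth_potInt hh) hz e0
  unfold eul logPot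
  rw [this, ← integral_const_mul]
  refine setIntegral_congr_fun measurableSet_Icc fun κ hκ => ?_
  have hm := scale_mem_cyl hz hκ
  have hd := smooth_dd isOpen_cyl hh e0
  have h1 := hasDerivAt_curve (c := fun ε : ℝ => (((ε, z.2), κ) : (ℝ × E3) × ℝ)) (t := z.1)
    (c' := (e0, 0)) isOpen_potDom (smooth_potInt hh)
    (((hasDerivAt_id _).prodMk (hasDerivAt_const _ _)).prodMk (hasDerivAt_const _ _))
    (potDom_sub z hz κ hκ)
  have h2 := (hasDerivAt_id z.1).mul ((hasDerivAt_fst isOpen_cyl hd hm).comp z.1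
    ((hasDerivAt_id z.1).const_mul κ))
  have h3 := h1.unique h2
  have h4 := dd_mul isOpen_cyl (G := Prod.fst) contDiff_fst.contDiffOn hd e0 hm
  have h5 : dd e0 (Prod.fst : ℝ × E3 → ℝ) (κ * z.1, z.2) = 1 := by
    unfold dd
    rw [fderiv_fst]; simp [e0]
  rw [h5] at h4
  simp only [smul_eq_mul, id, Function.comp, mul_one, one_mul] at h3 ⊢
  rw [show dd ((e0, 0) : (ℝ × E3) × ℝ)
    (fun p : (ℝ × E3) × ℝ => p.1.1 * dd e0 h (p.2 * p.1.1, p.1.2)) (z, κ) = _ from h3, h4]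
  ring

lemma eul_congr {g h : ℝ × E3 → ℝ} (e : ∀ z ∈ cyl, g z = h z) {z : ℝ × E3} (hz : z ∈ cyl) :
    eul g z = eul h z := by
  unfold eul
  rw [dd_congr isOpen_cyl e e0 hz]

lemma hasDerivAt_log_weight {κ : ℝ} (h : κ ∈ Ioo (0 : ℝ) 1) :
    HasDerivAt (fun κ : ℝ => Real.log (1 - κ ^ 2)) (-(2 * κ) / (1 - κ ^ 2)) κ := by
  have h1 : HasDerivAt (fun κ : ℝ => 1 - κ ^ 2) (-(2 * κ)) κ := by
    simpa using (hasDerivAt_pow 2 κ).const_sub 1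
  exact h1.log (by nlinarith [h.1, h.2])

/-- The potential of a solution of the inhomogeneous radial equation solves that equation with
source the potential of the source, up to a defect `-2 a ∂ₐ h`. After commuting the Euler operator
with the potential, the integrand is an exact derivative in the scaling parameter. -/
lemma logPot_pde {h k : ℝ × E3 → ℝ} (hh : ContDiffOn ℝ (⊤ : ℕ∞) h cyl)
    (hk : ContDiffOn ℝ (⊤ : ℕ∞) k cyl)
    (eq : ∀ z ∈ cyl, (1 - z.1 ^ 2) * eul (eul h) z - 2 * z.1 ^ 2 * eul h z = 4 * z.1 ^ 2 * k z)
    {z : ℝ × E3} (hz : z ∈ cyl) :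
    (1 - z.1 ^ 2) * eul (eul (logPot h)) z - 2 * z.1 ^ 2 * eul (logPot h) z =
      4 * z.1 ^ 2 * logPot k z - 2 * eul h z := by
  have hE := smooth_eul hh
  have hH := smooth_eul hE
  rw [eul_congr (fun y hy => eul_logPot hh hy) hz, eul_logPot hE hz, eul_logPot hh hz]
  obtain ⟨a, x⟩ := z
  have hdd := fun {g : ℝ × E3 → ℝ} (hg : ContDiffOn ℝ (⊤ : ℕ∞) g cyl) {κ : ℝ}
      (hκ : κ ∈ Icc (0 : ℝ) 1) => (hasDerivAt_fst isOpen_cyl hg (scale_mem_cyl hz hκ)).comp κ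
    ((hasDerivAt_id κ).mul_const a)
  simp only [id, one_mul, Function.comp_def] at hdd
  set N : ℝ × E3 → ℝ := fun z => eul (eul h) z + (2 * eul h z + 4 * k z) with hN
  have hNs : ContDiffOn ℝ (⊤ : ℕ∞) N cyl :=
    hH.add ((contDiffOn_const.mul hE).add (contDiffOn_const.mul hk))
  have hHN : ∀ z ∈ cyl, eul (eul h) z = z.1 ^ 2 * N z := fun z hz => by
    have := eq z hz
    simp only [hN]; linarith
  set F : ℝ → ℝ := fun κ => Real.log (1 - κ ^ 2) * (κ ^ 2 - 1) * (a ^ 2 * N (κ * a, x)) -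
    2 * eul h (κ * a, x) with hF
  have hscale : Continuous fun κ : ℝ => (κ * a, x) := by fun_prop
  have hcont : ContinuousOn F (Icc 0 1) := by
    have c1 : Continuous fun κ : ℝ => Real.log (1 - κ ^ 2) * (κ ^ 2 - 1) := by
      have : Continuous fun κ : ℝ => -((1 - κ ^ 2) * Real.log (1 - κ ^ 2)) :=
        (Real.continuous_mul_log.comp (by fun_prop : Continuous fun κ : ℝ => 1 - κ ^ 2)).neg
      refine this.congr fun κ => by ring
    have c2 : ∀ {g : ℝ × E3 → ℝ}, ContDiffOn ℝ (⊤ : ℕ∞) g cyl →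
        ContinuousOn (fun κ : ℝ => g (κ * a, x)) (Icc 0 1) := fun hg =>
      hg.continuousOn.comp hscale.continuousOn fun κ hκ => scale_mem_cyl hz hκ
    exact (c1.continuousOn.mul (continuousOn_const.mul (c2 hNs))).sub
      (continuousOn_const.mul (c2 hE))
  set I : (ℝ × E3 → ℝ) → ℝ → ℝ := fun g κ => Real.log (1 - κ ^ 2) • (a * dd e0 g (κ * a, x))
    with hI
  have hint : ∀ {g : ℝ × E3 → ℝ}, ContDiffOn ℝ (⊤ : ℕ∞) g cyl → IntegrableOn (I g) (Icc 0 1) :=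
    fun hg => integrable_potInt hg hz
  have hder : ∀ κ ∈ Ioo (0 : ℝ) 1, HasDerivAt F ((1 - a ^ 2) * I (eul (eul h)) κ -
      2 * a ^ 2 * I (eul h) κ - 4 * a ^ 2 * I k κ) κ := by
    intro κ hκ
    have hκ' := Ioo_subset_Icc_self hκ
    have hm := scale_mem_cyl hz hκ'
    have hκ1 : 1 - κ ^ 2 ≠ 0 := by nlinarith [hκ.1, hκ.2]
    have p2 : HasDerivAt (fun κ : ℝ => κ ^ 2 - 1) (2 * κ) κ := by
      simpa using (hasDerivAt_pow 2 κ).sub_const 1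
    have d1 := ((hasDerivAt_log_weight hκ).mul p2).mul ((hdd hNs hκ').const_mul (a ^ 2))
    have d2 := d1.sub ((hdd hE hκ').const_mul 2)
    have q1 := (hdd hNs hκ').unique (((hdd hH hκ').add (((hdd hE hκ').const_mul 2).add
      ((hdd hk hκ').const_mul 4))))
    -- the relation `H = v² N` differentiated along the scaling
    have q2 : dd e0 (eul (eul h)) (κ * a, x) * a = 2 * κ * a ^ 2 * N (κ * a, x) +
        (κ * a) ^ 2 * (dd e0 N (κ * a, x) * a) := by
      have r := (((hasDerivAt_id κ).mul_const a).pow 2).mul (hdd hNs hκ')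
      refine ((hdd hH hκ').unique (r.congr_of_eventuallyEq ?_)).trans ?_
      · filter_upwards [Ioo_mem_nhds hκ.1 hκ.2] with u hu
        exact hHN _ (scale_mem_cyl hz (Ioo_subset_Icc_self hu))
      · simp only [id, Pi.pow_apply]; push_cast; ring
    have q3 : a * dd e0 (eul h) (κ * a, x) = κ * a ^ 2 * N (κ * a, x) := by
      have := hHN _ hm
      rw [eul] at this
      simp only at this
      refine mul_left_cancel₀ hκ.1.ne' ?_
      linear_combination this
    refine d2.congr_deriv ?_
    simp only [hI, smul_eq_mul, Pi.mul_apply]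
    have q4 : -(2 * κ) / (1 - κ ^ 2) * (κ ^ 2 - 1) = 2 * κ := by
      field_simp; ring
    rw [q4]
    linear_combination (-2 : ℝ) * q3 - Real.log (1 - κ ^ 2) * q2 -
      Real.log (1 - κ ^ 2) * a ^ 2 * q1
  have hsum : IntegrableOn (fun κ => (1 - a ^ 2) * I (eul (eul h)) κ - 2 * a ^ 2 * I (eul h) κ -
      4 * a ^ 2 * I k κ) (Icc 0 1) :=
    (((hint hH).const_mul _).sub ((hint hE).const_mul _)).sub ((hint hk).const_mul _)
  have hFT := intervalIntegral.integral_eq_sub_of_hasDerivAt_of_le zero_le_one hcont hder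
    ((intervalIntegrable_iff_integrableOn_Icc_of_le zero_le_one).2 hsum)
  have hsum' : IntegrableOn (fun κ => (1 - a ^ 2) * I (eul (eul h)) κ - 2 * a ^ 2 * I (eul h) κ)
      (Icc 0 1) := ((hint hH).const_mul _).sub ((hint hE).const_mul _)
  rw [intervalIntegral.integral_of_le zero_le_one, ← integral_Icc_eq_integral_Ioc,
    integral_sub hsum' ((hint hk).const_mul _),
    integral_sub ((hint hH).const_mul _) ((hint hE).const_mul _), integral_const_mul,
    integral_const_mul, integral_const_mul] at hFT
  have F1 : F 1 = -2 * eul h (a, x) := by simp [hF]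
  have hE0 : eul h (0, x) = 0 := by simp [eul]
  have F0 : F 0 = 0 := by simp [hF, hE0]
  rw [F1, F0] at hFT
  change (1 - a ^ 2) * (∫ κ in Icc (0 : ℝ) 1, I (eul (eul h)) κ) -
    2 * a ^ 2 * (∫ κ in Icc (0 : ℝ) 1, I (eul h) κ) =
    4 * a ^ 2 * (∫ κ in Icc (0 : ℝ) 1, I k κ) - 2 * eul h (a, x)
  linarith

/-- The equation of circle means in terms of the Euler operator. -/
lemma nmean_eul {f : E3 → ℝ} (hf : SmoothOnSphere f) {z : ℝ × E3} (hz : z ∈ cyl) :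
    (1 - z.1 ^ 2) * eul (eul (nmean f)) z - 2 * z.1 ^ 2 * eul (nmean f) z =
      4 * z.1 ^ 2 * (‖z.2‖ ^ 2 * lapx (nmean f) z) := by
  obtain ⟨v, x⟩ := z
  have h4 := dd_mul isOpen_cyl (G := Prod.fst) contDiff_fst.contDiffOn
    (smooth_dd isOpen_cyl (smooth_nmean hf) e0) e0 hz
  have h5 : dd e0 (Prod.fst : ℝ × E3 → ℝ) (v, x) = 1 := by
    unfold dd
    rw [fderiv_fst]; simp [e0]
  rw [h5] at h4
  have h6 : eul (eul (nmean f)) (v, x) = v * (v * dd e0 (dd e0 (nmean f)) (v, x) +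
    1 * dd e0 (nmean f) (v, x)) := by
    rw [← h4]; rfl
  rw [h6]
  unfold eul
  simp only
  by_cases hv : v = 0
  · simp [hv]
  · linear_combination v * nmean_pde hf hv hz

/-! ### Existence -/

/-- The half-angle radius `√((1 - s) / 2)` attached to the height `s`. -/
def rad (s : ℝ) : ℝ := √((1 - s) / 2)

lemma rad_sq {s : ℝ} (h : s < 1) : rad s ^ 2 = (1 - s) / 2 := Real.sq_sqrt (by linarith)

lemma rad_pos {s : ℝ} (h : s < 1) : 0 < rad s := Real.sqrt_pos.2 (by linarith)

lemma rad_mem_cyl {z : ℝ × E3} (hz : z ∈ cyl) : (rad z.1, z.2) ∈ cyl := by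
  obtain ⟨h1, h2⟩ := abs_lt.1 hz.1
  refine ⟨?_, hz.2⟩
  rw [abs_of_pos (rad_pos h2)]
  exact (Real.sqrt_lt' one_pos).2 (by linarith)

lemma hasDerivAt_rad {s : ℝ} (h : s < 1) : HasDerivAt rad (-(4 * rad s)⁻¹) s := by
  have h1 : HasDerivAt (fun s : ℝ => (1 - s) / 2) (-1 / 2) s := by
    simpa using ((hasDerivAt_id s).const_sub 1).div_const 2
  refine (h1.sqrt (by linarith)).congr_deriv ?_
  have := (rad_pos h).ne'
  change -1 / 2 / (2 * rad s) = _
  field_simp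
  norm_num

/-- Composition with the half-angle substitution. -/
def atHeight (h : ℝ × E3 → ℝ) (z : ℝ × E3) : ℝ := h (rad z.1, z.2)

lemma smooth_atHeight {h : ℝ × E3 → ℝ} (hh : ContDiffOn ℝ (⊤ : ℕ∞) h cyl) :
    ContDiffOn ℝ (⊤ : ℕ∞) (atHeight h) cyl := by
  refine hh.comp (f := fun z : ℝ × E3 => (rad z.1, z.2)) ?_ fun z hz => rad_mem_cyl hz
  refine ContDiffOn.prodMk ?_ contDiff_snd.contDiffOn
  refine ContDiffOn.sqrt (ContDiff.contDiffOn (by fun_prop)) fun z hz => ?_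
  have := (abs_lt.1 hz.1).2
  have : 0 < (1 - z.1) / 2 := by linarith
  exact this.ne'

lemma dd_e0_atHeight {h : ℝ × E3 → ℝ} (hh : ContDiffOn ℝ (⊤ : ℕ∞) h cyl) {z : ℝ × E3}
    (hz : z ∈ cyl) : dd e0 (atHeight h) z = -(4 * rad z.1)⁻¹ * dd e0 h (rad z.1, z.2) := by
  refine (hasDerivAt_fst isOpen_cyl (smooth_atHeight hh) (t := z.1) (x := z.2) hz).unique ?_
  refine ((hasDerivAt_fst isOpen_cyl hh (rad_mem_cyl hz)).comp z.1
    (hasDerivAt_rad (abs_lt.1 hz.1).2)).congr_deriv ?_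
  ring

lemma dd_e0_e0_atHeight {h : ℝ × E3 → ℝ} (hh : ContDiffOn ℝ (⊤ : ℕ∞) h cyl) {z : ℝ × E3}
    (hz : z ∈ cyl) : dd e0 (dd e0 (atHeight h)) z =
      (rad z.1)⁻¹ ^ 2 / 16 * dd e0 (dd e0 h) (rad z.1, z.2) -
        (rad z.1)⁻¹ ^ 3 / 16 * dd e0 h (rad z.1, z.2) := by
  have hs := (abs_lt.1 hz.1).2
  have hr := (rad_pos hs).ne'
  refine (hasDerivAt_fst isOpen_cyl (smooth_dd isOpen_cyl (smooth_atHeight hh) e0)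
    (t := z.1) (x := z.2) hz).unique ?_
  have h1 := (((hasDerivAt_rad hs).const_mul 4).inv (by positivity)).neg.mul
    ((hasDerivAt_fst isOpen_cyl (smooth_dd isOpen_cyl hh e0) (rad_mem_cyl hz)).comp z.1
      (hasDerivAt_rad hs))
  refine (h1.congr_of_eventuallyEq ?_).congr_deriv ?_
  · have hc : Continuous fun s : ℝ => (s, z.2) := by fun_prop
    filter_upwards [(isOpen_cyl.preimage hc).mem_nhds hz] with s hs'
    exact dd_e0_atHeight hh hs'
  · simp only [Function.comp, Pi.neg_apply, Pi.inv_apply]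
    field_simp
    ring

lemma dd_es_atHeight {h : ℝ × E3 → ℝ} (hh : ContDiffOn ℝ (⊤ : ℕ∞) h cyl) (i : Fin 3)
    {z : ℝ × E3} (hz : z ∈ cyl) : dd (es i) (atHeight h) z = atHeight (dd (es i) h) z := by
  refine dd_es_eq isOpen_cyl (smooth_atHeight hh) (t := z.1) (x := z.2) hz ?_
  have h1 := hasDerivAt_curve isOpen_cyl hh (hasDerivAt_line (rad z.1) z.2 i)
    (by simpa using rad_mem_cyl hz)
  simp only [zero_smul, add_zero] at h1
  exact h1

lemma lapx_atHeight {h : ℝ × E3 → ℝ} (hh : ContDiffOn ℝ (⊤ : ℕ∞) h cyl)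
    {z : ℝ × E3} (hz : z ∈ cyl) : lapx (atHeight h) z = lapx h (rad z.1, z.2) := by
  unfold lapx
  refine Finset.sum_congr rfl fun i _ => ?_
  rw [dd_congr isOpen_cyl (fun y hy => dd_es_atHeight hh i hy) (es i) hz,
    dd_es_atHeight (smooth_dd isOpen_cyl hh _) i hz]
  rfl

/-- The Legendre operator `(1 - s²) ∂ₛ² - 2 s ∂ₛ`. -/
def leg (B : ℝ × E3 → ℝ) (z : ℝ × E3) : ℝ :=
  (1 - z.1 ^ 2) * dd e0 (dd e0 B) z - 2 * z.1 * dd e0 B z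

lemma eul_eul {h : ℝ × E3 → ℝ} (hh : ContDiffOn ℝ (⊤ : ℕ∞) h cyl) {z : ℝ × E3} (hz : z ∈ cyl) :
    eul (eul h) z = z.1 ^ 2 * dd e0 (dd e0 h) z + z.1 * dd e0 h z := by
  have h4 := dd_mul isOpen_cyl (G := Prod.fst) contDiff_fst.contDiffOn
    (smooth_dd isOpen_cyl hh e0) e0 hz
  have h5 : dd e0 (Prod.fst : ℝ × E3 → ℝ) z = 1 := by
    unfold dd
    rw [fderiv_fst]; simp [e0]
  rw [h5] at h4
  change z.1 * dd e0 (fun z => Prod.fst z * dd e0 h z) z = _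
  rw [h4]
  ring

lemma leg_atHeight {h : ℝ × E3 → ℝ} (hh : ContDiffOn ℝ (⊤ : ℕ∞) h cyl) {z : ℝ × E3}
    (hz : z ∈ cyl) : 4 * rad z.1 ^ 2 * leg (atHeight h) z =
      (1 - rad z.1 ^ 2) * eul (eul h) (rad z.1, z.2)
        - 2 * rad z.1 ^ 2 * eul h (rad z.1, z.2) := by
  have hs := (abs_lt.1 hz.1).2
  have hr := (rad_pos hs).ne'
  rw [eul_eul hh (rad_mem_cyl hz)]
  unfold leg eul
  rw [dd_e0_e0_atHeight hh hz, dd_e0_atHeight hh hz]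
  have h2 : z.1 = 1 - 2 * rad z.1 ^ 2 := by rw [rad_sq hs]; ring
  simp only
  generalize rad z.1 = a at *
  rw [h2]
  field_simp
  ring

lemma leg_add {G H : ℝ × E3 → ℝ} (hG : ContDiffOn ℝ (⊤ : ℕ∞) G cyl)
    (hH : ContDiffOn ℝ (⊤ : ℕ∞) H cyl) {z : ℝ × E3} (hz : z ∈ cyl) :
    leg (fun z => G z + H z) z = leg G z + leg H z := by
  unfold leg
  rw [dd_congr isOpen_cyl (fun y hy => dd_add isOpen_cyl hG hH e0 hy) e0 hz,
    dd_add isOpen_cyl hG hH e0 hz,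
    dd_add isOpen_cyl (smooth_dd isOpen_cyl hG _) (smooth_dd isOpen_cyl hH _) _ hz]
  ring

lemma leg_mul {G H : ℝ × E3 → ℝ} (hG : ContDiffOn ℝ (⊤ : ℕ∞) G cyl)
    (hH : ContDiffOn ℝ (⊤ : ℕ∞) H cyl) {z : ℝ × E3} (hz : z ∈ cyl) :
    leg (fun z => G z * H z) z =
      G z * leg H z + 2 * (1 - z.1 ^ 2) * dd e0 G z * dd e0 H z + leg G z * H z := by
  have hG' := smooth_dd isOpen_cyl hG e0
  have hH' := smooth_dd isOpen_cyl hH e0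
  unfold leg
  rw [dd_congr isOpen_cyl (fun y hy => dd_mul isOpen_cyl hG hH e0 hy) e0 hz,
    dd_mul isOpen_cyl hG hH e0 hz,
    dd_add isOpen_cyl (hG.mul hH') (hG'.mul hH) _ hz,
    dd_mul isOpen_cyl hG hH' _ hz, dd_mul isOpen_cyl hG' hH _ hz]
  ring

/-- The logarithm `ln((1 + s) / (1 - s))`, a solution of the Legendre equation. -/
def logH (s : ℝ) : ℝ := Real.log (1 + s) - Real.log (1 - s)

lemma hasDerivAt_logH {s : ℝ} (h : |s| < 1) : HasDerivAt logH (2 / (1 - s ^ 2)) s := by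
  obtain ⟨h1, h2⟩ := abs_lt.1 h
  have a1 : 1 + s ≠ 0 := by linarith
  have a2 : 1 - s ≠ 0 := by linarith
  have d1 := ((hasDerivAt_id s).const_add 1).log (by simpa using a1)
  have d2 := ((hasDerivAt_id s).const_sub 1).log (by simpa using a2)
  refine (d1.sub d2).congr_deriv ?_
  have : 1 - s ^ 2 = (1 - s) * (1 + s) := by ring
  rw [this]
  simp only [id]
  field_simp
  ring

lemma smooth_logH : ContDiffOn ℝ (⊤ : ℕ∞) (fun z : ℝ × E3 => logH z.1) cyl := by
  refine ContDiffOn.sub ?_ ?_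
  · exact ContDiffOn.log (ContDiff.contDiffOn (by fun_prop)) fun z hz => by
      have := (abs_lt.1 hz.1).1
      linarith
  · exact ContDiffOn.log (ContDiff.contDiffOn (by fun_prop)) fun z hz => by
      have := (abs_lt.1 hz.1).2
      linarith

lemma dd_e0_logH {z : ℝ × E3} (hz : z ∈ cyl) :
    dd e0 (fun z : ℝ × E3 => logH z.1) z = 2 / (1 - z.1 ^ 2) :=
  (hasDerivAt_fst isOpen_cyl smooth_logH (t := z.1) (x := z.2) hz).unique (hasDerivAt_logH hz.1)

lemma leg_logH {z : ℝ × E3} (hz : z ∈ cyl) : leg (fun z : ℝ × E3 => logH z.1) z = 0 := by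
  have hn : 1 - z.1 ^ 2 ≠ 0 := by
    have := abs_lt.1 hz.1
    nlinarith [this.1, this.2]
  have h2 : dd e0 (dd e0 fun z : ℝ × E3 => logH z.1) z = 4 * z.1 / (1 - z.1 ^ 2) ^ 2 := by
    refine (hasDerivAt_fst isOpen_cyl (smooth_dd isOpen_cyl smooth_logH e0)
      (t := z.1) (x := z.2) hz).unique ?_
    have h1 : HasDerivAt (fun s : ℝ => 1 - s ^ 2) (-(2 * z.1)) z.1 := by
      simpa using (hasDerivAt_pow 2 z.1).const_sub 1
    refine (((hasDerivAt_const z.1 (2 : ℝ)).div h1 hn).congr_of_eventuallyEq ?_).congr_deriv ?_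
    · have hc : Continuous fun s : ℝ => (s, z.2) := by fun_prop
      filter_upwards [(isOpen_cyl.preimage hc).mem_nhds hz] with s hs using dd_e0_logH hs
    · ring
  unfold leg
  rw [h2, dd_e0_logH hz]
  field_simp
  ring

/-- The solution on the cylinder: circle means of the data, with a logarithmic factor for the
first datum, corrected by the logarithmic potential. -/
def sol (N01 N0 : E3 → ℝ) (z : ℝ × E3) : ℝ :=
  atHeight (nmean N0) z + (logH z.1 * atHeight (nmean N01) z
    + (-2) * atHeight (logPot (nmean N01)) z)

lemma smooth_sol {N01 N0 : E3 → ℝ} (h01 : SmoothOnSphere N01) (h0 : SmoothOnSphere N0) :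
    ContDiffOn ℝ (⊤ : ℕ∞) (sol N01 N0) cyl :=
  (smooth_atHeight (smooth_nmean h0)).add
    ((smooth_logH.mul (smooth_atHeight (smooth_nmean h01))).add
      (contDiffOn_const.mul (smooth_atHeight (smooth_logPot (smooth_nmean h01)))))

lemma leg_sol {N01 N0 : E3 → ℝ} (h01 : SmoothOnSphere N01) (h0 : SmoothOnSphere N0)
    {z : ℝ × E3} (hz : z ∈ cyl) : leg (sol N01 N0) z = ‖z.2‖ ^ 2 * lapx (sol N01 N0) z := by
  have s0 := smooth_atHeight (smooth_nmean h0)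
  have n1 := smooth_nmean h01
  have s1 := smooth_atHeight n1
  have sp := smooth_logPot n1
  have sP := smooth_atHeight sp
  have hm := rad_mem_cyl hz
  have hs := (abs_lt.1 hz.1).2
  have hr := (rad_pos hs).ne'
  have c : ContDiffOn ℝ (⊤ : ℕ∞) (fun _ : ℝ × E3 => (-2 : ℝ)) cyl := contDiffOn_const
  have hn : 1 - z.1 ^ 2 ≠ 0 := by
    have := abs_lt.1 hz.1
    nlinarith [this.1, this.2]
  have hc : ∀ y, dd e0 (fun _ : ℝ × E3 => (-2 : ℝ)) y = 0 := fun y => by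
    unfold dd; simp
  have hlc : leg (fun _ : ℝ × E3 => (-2 : ℝ)) z = 0 := by
    unfold leg
    rw [hc, dd_congr isOpen_univ (fun y _ => hc y) e0 (mem_univ z)]
    unfold dd; simp
  unfold sol
  rw [leg_add s0 ((smooth_logH.mul s1).add (c.mul sP)) hz,
    leg_add (smooth_logH.mul s1) (c.mul sP) hz, leg_mul smooth_logH s1 hz, leg_mul c sP hz,
    lapx_add isOpen_cyl s0 ((smooth_logH.mul s1).add (c.mul sP)) hz,
    lapx_add isOpen_cyl (smooth_logH.mul s1) (c.mul sP) hz,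
    lapx_fst_mul isOpen_cyl smooth_logH s1 hz, lapx_fst_mul (l := fun _ => -2) isOpen_cyl c sP hz,
    leg_logH hz, dd_e0_logH hz, hc, hlc, lapx_atHeight (smooth_nmean h0) hz, lapx_atHeight n1 hz,
    lapx_atHeight sp hz, dd_e0_atHeight n1 hz]
  have E0 := (leg_atHeight (smooth_nmean h0) hz).trans (nmean_eul h0 hm)
  have E1 := (leg_atHeight n1 hz).trans (nmean_eul h01 hm)
  have hk : ContDiffOn ℝ (⊤ : ℕ∞) (fun z : ℝ × E3 => ‖z.2‖ ^ 2 * lapx (nmean N01) z) cyl :=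
    ((contDiff_snd.norm_sq ℝ).contDiffOn).mul (smooth_lapx isOpen_cyl n1)
  have E2 := (leg_atHeight sp hz).trans (logPot_pde n1 hk (fun y hy => nmean_eul h01 hy) hm)
  rw [← lapx_logPot n1 hm] at E2
  simp only [eul] at E2
  have hk4 : 4 * rad z.1 ^ 2 ≠ 0 := by positivity
  refine mul_left_cancel₀ hk4 ?_
  have e3 : 2 * (1 - z.1 ^ 2) * (2 / (1 - z.1 ^ 2)) = 4 := by field_simp; norm_num
  have e4 : rad z.1 * (4 * rad z.1)⁻¹ = 1 / 4 := by field_simp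
  linear_combination E0 + logH z.1 * E1 - 2 * E2 + 4 * rad z.1 ^ 2 *
    (-(4 * rad z.1)⁻¹ * dd e0 (nmean N01) (rad z.1, z.2)) * e3 -
    16 * rad z.1 * dd e0 (nmean N01) (rad z.1, z.2) * e4

lemma hom_sol {N01 N0 : E3 → ℝ} (h01 : SmoothOnSphere N01) : Hom0 (sol N01 N0) := by
  intro s x h c hc
  have hm : (rad s, x) ∈ cyl := rad_mem_cyl h
  have hd := (nmean_hom N01).dd_e0 (smooth_nmean h01)
  have hP : logPot (nmean N01) (rad s, c • x) = logPot (nmean N01) (rad s, x) := by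
    unfold logPot
    refine setIntegral_congr_fun measurableSet_Icc fun κ hκ => ?_
    have := hd _ _ (scale_mem_cyl hm hκ) c hc
    simp only at this ⊢
    rw [this]
  simp only [sol, atHeight]
  rw [nmean_hom N0 _ _ hm c hc, nmean_hom N01 _ _ hm c hc, hP]

lemma tendsto_rad : Tendsto rad (𝓝[<] 1) (𝓝[>] 0) := by
  refine tendsto_nhdsWithin_iff.2 ⟨?_, ?_⟩
  · have : Continuous rad := by unfold rad; fun_prop
    have h := (this.tendsto 1).mono_left (nhdsWithin_le_nhds (s := Iio 1))
    simpa [rad] using h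
  · filter_upwards [self_mem_nhdsWithin] with s hs using rad_pos hs

/-- The behaviour of the solution at the light cone: the logarithm only meets differences of circle
means which vanish linearly in the radius. -/
lemma tendsto_sol {N01 N0 : E3 → ℝ} (h01 : SmoothOnSphere N01) (h0 : SmoothOnSphere N0) {ω : E3}
    (hω : ‖ω‖ = 1) : Tendsto (fun s : ℝ => sol N01 N0 (s, ω) - Real.log (2 / (1 - s)) * N01 ω)
      (𝓝[<] 1) (𝓝 (N0 ω)) := by
  have hne : ω ≠ 0 := by
    rw [← norm_pos_iff, hω]; exact one_pos
  have hm : ((0 : ℝ), ω) ∈ cyl := ⟨by simp, hne⟩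
  have n1 := smooth_nmean h01
  have lim : ∀ {g : ℝ × E3 → ℝ}, ContDiffOn ℝ (⊤ : ℕ∞) g cyl →
      Tendsto (fun s => g (rad s, ω)) (𝓝[<] 1) (𝓝 (g (0, ω))) := fun hg =>
    (hasDerivAt_fst isOpen_cyl hg hm).continuousAt.tendsto.comp
      (tendsto_rad.mono_right nhdsWithin_le_nhds)
  have l0 := lim (smooth_nmean h0)
  have l1 := lim n1
  have l2 := lim (smooth_logPot n1)
  rw [nmean_zero h0.1 hne] at l0
  rw [nmean_zero h01.1 hne] at l1
  have hP : logPot (nmean N01) (0, ω) = 0 := by simp [logPot]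
  rw [hP] at l2
  have l3 : Tendsto (fun s : ℝ => Real.log (1 + s)) (𝓝[<] 1) (𝓝 (Real.log 2)) := by
    have : ContinuousAt (fun s : ℝ => Real.log (1 + s)) 1 :=
      ContinuousAt.log (by fun_prop) (by norm_num)
    have h := this.tendsto.mono_left (nhdsWithin_le_nhds (s := Iio 1))
    norm_num at h
    exact h
  have l4 : Tendsto (fun a : ℝ => (a * Real.log 2 + 2 * (a * Real.log a)) *
      slope (fun a => nmean N01 (a, ω)) 0 a) (𝓝[>] 0) (𝓝 0) := by
    have h1 := (hasDerivAt_iff_tendsto_slope.1 (hasDerivAt_fst isOpen_cyl n1 hm)).mono_left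
      (nhdsWithin_mono 0 fun a (ha : 0 < a) => (ha.ne' : a ≠ 0))
    have h2 : Continuous fun a : ℝ => a * Real.log 2 + 2 * (a * Real.log a) :=
      (continuous_id.mul continuous_const).add (continuous_const.mul Real.continuous_mul_log)
    have h3 := (h2.tendsto 0).mono_left (nhdsWithin_le_nhds (s := Ioi 0))
    simpa using h3.mul h1
  have key := ((l0.add ((l3.mul l1).sub_const (Real.log 2 * N01 ω))).sub
    (l4.comp tendsto_rad)).sub (l2.const_mul 2)
  have e : N0 ω + (Real.log 2 * N01 ω - Real.log 2 * N01 ω) - 0 - 2 * 0 = N0 ω := by ring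
  rw [e] at key
  refine key.congr' ?_
  filter_upwards [self_mem_nhdsWithin] with s hs
  have hs1 : s < 1 := hs
  have hr := rad_pos hs1
  have e1 : Real.log (1 - s) = Real.log 2 + 2 * Real.log (rad s) := by
    have : 1 - s = 2 * rad s ^ 2 := by rw [rad_sq hs1]; ring
    rw [this, Real.log_mul two_ne_zero (by positivity), Real.log_pow]
    push_cast; ring
  rw [Real.log_div two_ne_zero (by linarith)]
  simp only [sol, atHeight, logH, Function.comp, slope_def_field, sub_zero, nmean_zero h01.1 hne]
  have e2 : rad s * ((nmean N01 (rad s, ω) - N01 ω) / rad s) = nmean N01 (rad s, ω) - N01 ω := by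
    field_simp
  linear_combination (-Real.log 2 - 2 * Real.log (rad s)) * e2 +
    (nmean N01 (rad s, ω) - N01 ω) * e1

lemma exists_solution {N01 N0 : E3 → ℝ} (h01 : SmoothOnSphere N01) (h0 : SmoothOnSphere N0) :
    IsExtHomOne N01 N0 fun t x => toExt (sol N01 N0) (t, x) := by
  have hS := smooth_sol h01 h0
  refine ⟨smooth_toExt hS, fun t x h => ?_, fun c hc t x h => ?_, fun ω hω => ?_⟩
  · exact (wave_iff hS (hom_sol h01) h).2 (leg_sol h01 h0 (mem_cyl_of_ext h))
  · have hm := mem_cyl_of_ext h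
    have hx : ‖x‖ ≠ 0 := norm_ne_zero_iff.2 hm.2
    have e1 : c * t * ‖c • x‖⁻¹ = t * ‖x‖⁻¹ := by
      rw [norm_smul, Real.norm_of_nonneg hc.le]
      field_simp
    simp only [toExt]
    rw [e1, hom_sol h01 _ _ hm c hc, norm_smul, Real.norm_of_nonneg hc.le, mul_inv, mul_assoc]
  · simpa [toExt, hω] using tendsto_sol h01 h0 hω

/-! ### Weighted inner products -/

/-- A bump function on the real line, equal to one near `1` and supported in `[1/2, 3/2]`. -/
def bump1 : ContDiffBump (1 : ℝ) := ⟨1 / 4, 1 / 2, by norm_num, by norm_num⟩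

/-- A smooth radial weight supported in a shell around the unit sphere. For functions homogeneous
of degree zero, integration against it plays the role of integration over the sphere. -/
def wgt (x : E3) : ℝ := bump1 (‖x‖ ^ 2)

/-- A compact shell around the unit sphere. -/
def shell : Set E3 := {x : E3 | ‖x‖ ^ 2 ∈ Icc (1 / 2 : ℝ) (3 / 2)}

lemma isCompact_shell : IsCompact shell := by
  refine (isCompact_closedBall (0 : E3) 2).of_isClosed_subset ?_ fun x hx => ?_
  · exact isClosed_Icc.preimage (f := fun x : E3 => ‖x‖ ^ 2) (by fun_prop)
  · have h := hx.2
    rw [mem_closedBall_zero_iff]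
    nlinarith [norm_nonneg x]

lemma measurableSet_shell : MeasurableSet shell := isCompact_shell.measurableSet

lemma shell_ne {x : E3} (hx : x ∈ shell) : x ≠ 0 := by
  rintro rfl
  have := hx.1
  norm_num at this

lemma shell_mem_cyl {s : ℝ} (hs : |s| < 1) {x : E3} (hx : x ∈ shell) : (s, x) ∈ cyl :=
  ⟨hs, shell_ne hx⟩

lemma contDiff_wgt : ContDiff ℝ (⊤ : ℕ∞) wgt := bump1.contDiff.comp (contDiff_id.norm_sq ℝ)

lemma wgt_nonneg (x : E3) : 0 ≤ wgt x := bump1.nonneg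

lemma wgt_eq_one {x : E3} (hx : ‖x‖ = 1) : wgt x = 1 := by
  unfold wgt
  refine bump1.one_of_mem_closedBall ?_
  simp [hx, bump1]

lemma wgt_eq_zero {x : E3} (hx : x ∉ shell) : wgt x = 0 := by
  unfold wgt
  refine bump1.zero_of_le_dist ?_
  rw [Real.dist_eq]
  change (1 / 2 : ℝ) ≤ _
  by_contra h
  rw [not_le, abs_lt] at h
  exact hx ⟨by linarith [h.1], by linarith [h.2]⟩

/-- Integration over the shell against the weight. -/
def wint (f : E3 → ℝ) : ℝ := ∫ x in shell, wgt x • f x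

/-- The weighted `L²` norm on the shell. -/
def wnorm (f : E3 → ℝ) : ℝ := √(wint fun x => f x ^ 2)

lemma wint_integrable {f : E3 → ℝ} (hf : ContinuousOn f shell) :
    IntegrableOn (fun x => wgt x • f x) shell :=
  (contDiff_wgt.continuous.continuousOn.smul hf).integrableOn_compact isCompact_shell

lemma wint_congr {f g : E3 → ℝ} (h : ∀ x ∈ shell, f x = g x) : wint f = wint g :=
  setIntegral_congr_fun measurableSet_shell fun x hx => by simp only [h x hx]

lemma wint_add {f g : E3 → ℝ} (hf : ContinuousOn f shell) (hg : ContinuousOn g shell) :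
    wint (fun x => f x + g x) = wint f + wint g := by
  unfold wint
  simp only [smul_add]
  exact integral_add (wint_integrable hf) (wint_integrable hg)

lemma wint_const_mul (c : ℝ) (f : E3 → ℝ) : wint (fun x => c * f x) = c * wint f := by
  unfold wint
  rw [← integral_const_mul]
  refine integral_congr_ae (Eventually.of_forall fun x => ?_)
  simp only [smul_eq_mul]
  ring

lemma wint_nonneg {f : E3 → ℝ} (h : ∀ x ∈ shell, 0 ≤ f x) : 0 ≤ wint f :=
  setIntegral_nonneg measurableSet_shell fun x hx => mul_nonneg (wgt_nonneg x) (h x hx)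

lemma wnorm_nonneg (f : E3 → ℝ) : 0 ≤ wnorm f := Real.sqrt_nonneg _

lemma wnorm_sq (f : E3 → ℝ) : wnorm f ^ 2 = wint fun x => f x ^ 2 :=
  Real.sq_sqrt (wint_nonneg fun _ _ => sq_nonneg _)

lemma wnorm_congr {f g : E3 → ℝ} (h : ∀ x ∈ shell, f x = g x) : wnorm f = wnorm g := by
  unfold wnorm
  rw [wint_congr fun x hx => by rw [h x hx]]

lemma wnorm_const_mul (c : ℝ) (f : E3 → ℝ) : wnorm (fun x => c * f x) = |c| * wnorm f := by
  unfold wnorm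
  simp only [mul_pow]
  rw [wint_const_mul, Real.sqrt_mul (sq_nonneg c), Real.sqrt_sq_eq_abs]

lemma wint_quad {f g : E3 → ℝ} (hf : ContinuousOn f shell) (hg : ContinuousOn g shell) (t : ℝ) :
    wint (fun x => (t * f x + g x) ^ 2) =
      wnorm f ^ 2 * (t * t) + 2 * wint (fun x => f x * g x) * t + wnorm g ^ 2 := by
  have e : ∀ x ∈ shell, (t * f x + g x) ^ 2 =
      t * t * f x ^ 2 + (2 * t * (f x * g x) + g x ^ 2) := fun x _ => by ring
  have c1 : ContinuousOn (fun x => t * t * f x ^ 2) shell := continuousOn_const.mul (hf.pow 2)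
  have c2 : ContinuousOn (fun x => 2 * t * (f x * g x)) shell :=
    continuousOn_const.mul (hf.mul hg)
  have c3 : ContinuousOn (fun x => g x ^ 2) shell := hg.pow 2
  have c4 : ContinuousOn (fun x => 2 * t * (f x * g x) + g x ^ 2) shell := c2.add c3
  rw [wint_congr e, wint_add c1 c4, wint_add c2 c3, wint_const_mul, wint_const_mul,
    wnorm_sq, wnorm_sq]
  ring

/-- The Cauchy–Schwarz inequality. -/
lemma wint_mul_le {f g : E3 → ℝ} (hf : ContinuousOn f shell) (hg : ContinuousOn g shell) :
    |wint (fun x => f x * g x)| ≤ wnorm f * wnorm g := by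
  have h := discrim_le_zero fun t => (wint_quad hf hg t) ▸ wint_nonneg fun x _ => sq_nonneg _
  unfold discrim at h
  refine abs_le_of_sq_le_sq ?_ (mul_nonneg (wnorm_nonneg _) (wnorm_nonneg _))
  nlinarith

lemma wnorm_add_le {f g : E3 → ℝ} (hf : ContinuousOn f shell) (hg : ContinuousOn g shell) :
    wnorm (fun x => f x + g x) ≤ wnorm f + wnorm g := by
  refine abs_le_of_sq_le_sq' ?_ (add_nonneg (wnorm_nonneg _) (wnorm_nonneg _)) |>.2
  have h := wint_quad hf hg 1
  have h2 := (abs_le.1 (wint_mul_le hf hg)).2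
  simp only [one_mul] at h
  rw [wnorm_sq, h]
  nlinarith

/-- Fatou's lemma for the weighted norm. -/
lemma wnorm_le_of_tendsto {F : ℕ → E3 → ℝ} {f : E3 → ℝ} (hF : ∀ n, ContinuousOn (F n) shell)
    (hf : ContinuousOn f shell) (hlim : ∀ x ∈ shell, Tendsto (fun n => F n x) atTop (𝓝 (f x)))
    {M : ℝ} (hM : ∀ n, wnorm (F n) ≤ M) : wnorm f ≤ M := by
  have hM0 : 0 ≤ M := (wnorm_nonneg _).trans (hM 0)
  refine Real.sqrt_le_iff.2 ⟨hM0, ?_⟩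
  have key : ∀ g : E3 → ℝ, ContinuousOn g shell → ENNReal.ofReal (wint fun x => g x ^ 2) =
      ∫⁻ x in shell, ENNReal.ofReal (wgt x • g x ^ 2) := fun g hg => by
    have hi : IntegrableOn (fun x => wgt x • g x ^ 2) shell := wint_integrable (hg.pow 2)
    exact ofReal_integral_eq_lintegral_ofReal hi (Eventually.of_forall fun x =>
      mul_nonneg (wgt_nonneg x) (sq_nonneg (g x)))
  have h1 : ∫⁻ x in shell, ENNReal.ofReal (wgt x • f x ^ 2) =
      ∫⁻ x in shell, liminf (fun n => ENNReal.ofReal (wgt x • F n x ^ 2)) atTop := by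
    refine setLIntegral_congr_fun measurableSet_shell fun x hx => ?_
    have ht : Tendsto (fun n => ENNReal.ofReal (wgt x • F n x ^ 2)) atTop
        (𝓝 (ENNReal.ofReal (wgt x • f x ^ 2))) :=
      ENNReal.tendsto_ofReal (((hlim x hx).pow 2).const_smul (wgt x))
    exact ht.liminf_eq.symm
  have hm : ∀ n, AEMeasurable (fun x => ENNReal.ofReal (wgt x • F n x ^ 2))
      (volume.restrict shell) := fun n => by
    have hi : IntegrableOn (fun x => wgt x • F n x ^ 2) shell := wint_integrable ((hF n).pow 2)
    exact hi.aestronglyMeasurable.aemeasurable.ennreal_ofReal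
  have h2 : liminf (fun n => ∫⁻ x in shell, ENNReal.ofReal (wgt x • F n x ^ 2)) atTop ≤
      ENNReal.ofReal (M ^ 2) := by
    refine liminf_le_of_frequently_le' (Eventually.of_forall fun n => ?_).frequently
    rw [← key _ (hF n), ← wnorm_sq]
    exact ENNReal.ofReal_le_ofReal (pow_le_pow_left₀ (wnorm_nonneg _) (hM n) 2)
  rw [← ENNReal.ofReal_le_ofReal_iff (sq_nonneg M), key f hf, h1]
  exact (lintegral_liminf_le' hm).trans h2

lemma eq_zero_of_wnorm {f : E3 → ℝ} (hf : ContinuousOn f shell) (h : wnorm f = 0) {x : E3}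
    (hx : ‖x‖ = 1) : f x = 0 := by
  have h1 : ∫ x in shell, wgt x • f x ^ 2 = 0 := by
    have := wnorm_sq f
    rw [h] at this
    simpa [wint] using this.symm
  have hx' : x ∈ interior shell := by
    refine mem_interior.2 ⟨{x : E3 | ‖x‖ ^ 2 ∈ Ioo (1 / 2 : ℝ) (3 / 2)},
      fun y hy => Ioo_subset_Icc_self hy, isOpen_Ioo.preimage (by fun_prop), ?_⟩
    simp only [mem_ofPred_eq, hx]; norm_num
  have h2 := (setIntegral_eq_zero_iff_of_nonneg_ae
    (Eventually.of_forall fun x => mul_nonneg (wgt_nonneg x) (sq_nonneg (f x)))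
    (wint_integrable (hf.pow 2))).1 h1
  have h3 : (fun x => wgt x • f x ^ 2) =ᵐ[volume.restrict (interior shell)] fun _ => 0 :=
    ae_restrict_of_ae_restrict_of_subset interior_subset h2
  have h4 := Measure.eqOn_open_of_ae_eq h3 isOpen_interior
    ((contDiff_wgt.continuous.continuousOn.smul (hf.pow 2)).mono interior_subset)
    continuousOn_const hx'
  simpa [wgt_eq_one hx] using h4

lemma continuousOn_slice {G : ℝ × E3 → ℝ} (hG : ContDiffOn ℝ (⊤ : ℕ∞) G cyl) {s : ℝ}
    (hs : |s| < 1) : ContinuousOn (fun x => G (s, x)) shell :=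
  hG.continuousOn.comp (f := fun x : E3 => (s, x)) (by fun_prop) fun _ hx => shell_mem_cyl hs hx

lemma hasDerivAt_wint {G : ℝ × E3 → ℝ} (hG : ContDiffOn ℝ (⊤ : ℕ∞) G cyl) {s : ℝ}
    (hs : |s| < 1) :
    HasDerivAt (fun s => wint fun x => G (s, x)) (wint fun x => dd e0 G (s, x)) s := by
  have hw : IntegrableOn wgt shell :=
    contDiff_wgt.continuous.continuousOn.integrableOn_compact isCompact_shell
  have hO : IsOpen {s : ℝ | |s| < 1} := isOpen_lt continuous_abs continuous_const
  have hsub : ∀ s ∈ {s : ℝ | |s| < 1}, ∀ x ∈ shell, (s, x) ∈ cyl :=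
    fun _ hs _ hx => shell_mem_cyl hs hx
  have h1 := smooth_differentiableAt hO
    (contDiffOn_param isCompact_shell hw hO isOpen_cyl hsub hG) hs
  have h2 := dd_param isCompact_shell hw hO isOpen_cyl hsub hG hs 1
  refine h1.hasDerivAt.congr_deriv ?_
  rw [← fderiv_apply_one_eq_deriv]
  exact h2

/-- A bound on the norm of the derivative bounds the norm of increments. -/
lemma wnorm_sub_le {F : ℝ × E3 → ℝ} (hF : ContDiffOn ℝ (⊤ : ℕ∞) F cyl) {s₁ s₂ : ℝ} (h0 : -1 < s₁)
    (h12 : s₁ ≤ s₂) (h1 : s₂ < 1) {b b' : ℝ → ℝ} (hb : ∀ s ∈ Icc s₁ s₂, HasDerivAt b (b' s) s)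
    (hbd : ∀ s ∈ Icc s₁ s₂, wnorm (fun x => dd e0 F (s, x)) ≤ b' s) :
    wnorm (fun x => F (s₂, x) - F (s₁, x)) ≤ b s₂ - b s₁ := by
  have habs : ∀ s ∈ Icc s₁ s₂, |s| < 1 := fun s hs =>
    abs_lt.2 ⟨h0.trans_le hs.1, hs.2.trans_lt h1⟩
  have m1 := left_mem_Icc.2 h12
  have m2 := right_mem_Icc.2 h12
  have c1 := continuousOn_slice hF (habs s₁ m1)
  have c2 := continuousOn_slice hF (habs s₂ m2)
  set g : E3 → ℝ := fun x => F (s₂, x) - F (s₁, x) with hg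
  have cg : ContinuousOn g shell := c2.sub c1
  -- the increment frozen as a function on the cylinder
  have hgs : ∀ s, |s| < 1 → ContDiffOn ℝ (⊤ : ℕ∞) (fun z : ℝ × E3 => F (s, z.2)) cyl :=
    fun s hs => hF.comp (f := fun z : ℝ × E3 => (s, z.2)) (ContDiff.contDiffOn (by fun_prop))
      fun z hz => ⟨hs, hz.2⟩
  have hG : ContDiffOn ℝ (⊤ : ℕ∞) (fun z : ℝ × E3 => g z.2) cyl :=
    (hgs _ (habs s₂ m2)).sub (hgs _ (habs s₁ m1))
  have hFg := hF.mul hG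
  have hd : ∀ s ∈ Icc s₁ s₂, HasDerivAt (fun s => wint fun x => F (s, x) * g x)
      (wint fun x => dd e0 F (s, x) * g x) s := fun s hs => by
    refine (hasDerivAt_wint hFg (habs s hs)).congr_deriv (wint_congr fun x hx => ?_)
    have h3 := hasDerivAt_fst isOpen_cyl hFg (shell_mem_cyl (habs s hs) hx)
    exact h3.unique ((hasDerivAt_fst isOpen_cyl hF
      (shell_mem_cyl (habs s hs) hx)).mul_const (g x))
  have hmono : MonotoneOn (fun s => b s * wnorm g - wint fun x => F (s, x) * g x)
      (Icc s₁ s₂) := by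
    have hd' := fun s hs => ((hb s hs).mul_const (wnorm g)).sub (hd s hs)
    refine monotoneOn_of_deriv_nonneg (convex_Icc _ _)
      (fun s hs => (hd' s hs).continuousAt.continuousWithinAt)
      (fun s hs => (hd' s (interior_subset hs)).differentiableAt.differentiableWithinAt)
      fun s hs => ?_
    have hs' := interior_subset hs
    have e := (hd' s hs').deriv
    change deriv (fun s => b s * wnorm g - wint fun x => F (s, x) * g x) s = _ at e
    rw [e, sub_nonneg]
    refine (le_abs_self _).trans ((wint_mul_le
      (continuousOn_slice (smooth_dd isOpen_cyl hF e0) (habs s hs')) cg).trans ?_)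
    exact mul_le_mul_of_nonneg_right (hbd s hs') (wnorm_nonneg _)
  have hb12 : b s₁ ≤ b s₂ := by
    have : MonotoneOn b (Icc s₁ s₂) := monotoneOn_of_deriv_nonneg (convex_Icc _ _)
      (fun s hs => (hb s hs).continuousAt.continuousWithinAt)
      (fun s hs => (hb s (interior_subset hs)).differentiableAt.differentiableWithinAt)
      fun s hs => by
        rw [(hb s (interior_subset hs)).deriv]
        exact (wnorm_nonneg _).trans (hbd s (interior_subset hs))
    exact this m1 m2 h12
  have hfin := hmono m1 m2 h12
  simp only at hfin
  have hsq : wnorm g ^ 2 = (wint fun x => F (s₂, x) * g x) - wint fun x => F (s₁, x) * g x := by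
    have e : ∀ x ∈ shell, F (s₂, x) * g x = F (s₁, x) * g x + g x ^ 2 := fun x _ => by
      simp only [hg]; ring
    have c3 : ContinuousOn (fun x => F (s₁, x) * g x) shell := c1.mul cg
    have c4 : ContinuousOn (fun x => g x ^ 2) shell := cg.pow 2
    rw [wnorm_sq, wint_congr e, wint_add c3 c4]
    ring
  rcases (wnorm_nonneg g).eq_or_lt with h | h
  · rw [← h]; linarith
  · refine le_of_mul_le_mul_right ?_ h
    nlinarith

/-! ### Green's formula and the Legendre flow -/

lemma hasFDerivAt_slice {q : ℝ × E3 → ℝ} (hq : ContDiffOn ℝ (⊤ : ℕ∞) q cyl) {s : ℝ} {x : E3}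
    (h : (s, x) ∈ cyl) : HasFDerivAt (fun y => q (s, y))
      ((fderiv ℝ q (s, x)).comp (ContinuousLinearMap.inr ℝ ℝ E3)) x :=
  (smooth_differentiableAt isOpen_cyl hq h).hasFDerivAt.comp x (hasFDerivAt_prodMk_right s x)

/-- The divergence theorem for functions vanishing off the shell. -/
lemma integral_dd_es {q : ℝ × E3 → ℝ} (hq : ContDiffOn ℝ (⊤ : ℕ∞) q cyl)
    (h0 : ∀ z : ℝ × E3, z.2 ∉ shell → q z = 0) {s : ℝ} (hs : |s| < 1) (i : Fin 3) :
    ∫ x in shell, dd (es i) q (s, x) = 0 := by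
  set u : E3 → ℝ := fun x => q (s, x) with hu
  have hloc : ∀ x ∉ shell, u =ᶠ[𝓝 x] fun _ => 0 := fun x hx => by
    filter_upwards [isCompact_shell.isClosed.isOpen_compl.mem_nhds hx] with y hy
    exact h0 (s, y) hy
  have hsm : ContDiff ℝ 1 u := by
    refine contDiff_iff_contDiffAt.2 fun x => ?_
    by_cases hx : x ∈ shell
    · have hz := shell_mem_cyl hs hx
      exact ((hq.contDiffAt (isOpen_cyl.mem_nhds hz)).of_le (by simp)).comp x
        (ContDiff.contDiffAt (f := fun y : E3 => (s, y)) (by fun_prop))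
    · exact contDiffAt_const.congr_of_eventuallyEq (hloc x hx)
  have hcs : HasCompactSupport u :=
    HasCompactSupport.intro isCompact_shell fun x hx => h0 (s, x) hx
  have hd : Differentiable ℝ u := hsm.differentiable (by simp)
  have hcd : Continuous fun x => fderiv ℝ u x (EuclideanSpace.single i 1) :=
    (hsm.continuous_fderiv (by simp)).clm_apply continuous_const
  have hcds : HasCompactSupport fun x => fderiv ℝ u x (EuclideanSpace.single i 1) :=
    hcs.fderiv_apply ℝ (EuclideanSpace.single i 1)
  have key := integral_mul_fderiv_eq_neg_fderiv_mul_of_integrable (μ := (volume : Measure E3))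
    (f := fun _ : E3 => (1 : ℝ)) (g := u) (v := EuclideanSpace.single i 1)
    (by simp) (by simpa using hcd.integrable_of_hasCompactSupport hcds)
    (by simpa using hsm.continuous.integrable_of_hasCompactSupport hcs)
    (fun x _ => by fun_prop) (fun x _ => hd x)
  have hz : ∀ x ∉ shell, fderiv ℝ u x (EuclideanSpace.single i 1) = 0 := fun x hx => by
    rw [(hloc x hx).fderiv_eq]; simp
  rw [← setIntegral_eq_integral_of_forall_compl_eq_zero (s := shell)
    (fun x hx => by rw [hz x hx, mul_zero])] at key
  have e : ∫ x in shell, dd (es i) q (s, x) =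
      ∫ x in shell, 1 * fderiv ℝ u x (EuclideanSpace.single i 1) := by
    refine setIntegral_congr_fun measurableSet_shell fun x hx => ?_
    have := (hasFDerivAt_slice hq (shell_mem_cyl hs hx)).fderiv
    simp only [hu, this]
    simp [dd, es]
  rw [e, key]
  simp

/-- The weight occurring in Green's formula, as a function on the cylinder. -/
def gw (z : ℝ × E3) : ℝ := wgt z.2 * ‖z.2‖ ^ 2

lemma smooth_gw : ContDiffOn ℝ (⊤ : ℕ∞) gw cyl :=
  ((contDiff_wgt.comp contDiff_snd).mul (contDiff_snd.norm_sq ℝ)).contDiffOn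

lemma dd_es_gw {s : ℝ} {x : E3} (h : (s, x) ∈ cyl) (i : Fin 3) :
    dd (es i) gw (s, x) = 2 * deriv (fun ρ => bump1 ρ * ρ) (‖x‖ ^ 2) * x i := by
  have hd : DifferentiableAt ℝ (fun ρ => bump1 ρ * ρ) (‖x‖ ^ 2) :=
    ((bump1.contDiff (n := 1)).differentiable (by simp) _).mul differentiableAt_id
  refine dd_es_eq isOpen_cyl smooth_gw h ?_
  have hl : HasDerivAt (fun ε : ℝ => x + ε • (EuclideanSpace.single i 1 : E3))
      (EuclideanSpace.single i 1) 0 := by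
    simpa using ((hasDerivAt_id (0 : ℝ)).smul_const (EuclideanSpace.single i 1 : E3)).const_add x
  have h2 := hl.norm_sq
  simp only [zero_smul, add_zero] at h2
  have h3 := HasDerivAt.comp_of_eq (h₂ := fun ρ => bump1 ρ * ρ) 0 hd.hasDerivAt h2 (by simp)
  refine h3.congr_deriv ?_
  rw [EuclideanSpace.inner_single_right]
  simp
  ring

/-- Green's formula on spheres: the derivative of the radial weight drops out because `G` has no
radial derivative. -/
lemma wint_green {F G : ℝ × E3 → ℝ} (hF : ContDiffOn ℝ (⊤ : ℕ∞) F cyl)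
    (hG : ContDiffOn ℝ (⊤ : ℕ∞) G cyl) (h0 : Hom0 G) {s : ℝ} (hs : |s| < 1) :
    wint (fun x => F (s, x) * (‖x‖ ^ 2 * lapx G (s, x))) =
      - wint (fun x => ‖x‖ ^ 2 * ∑ i, dd (es i) F (s, x) * dd (es i) G (s, x)) := by
  have hGi := fun i => smooth_dd isOpen_cyl hG (es i)
  have hFi := fun i => smooth_dd isOpen_cyl hF (es i)
  have hFG : ∀ i, ContDiffOn ℝ (⊤ : ℕ∞) (fun z => F z * dd (es i) G z) cyl :=
    fun i => hF.mul (hGi i)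
  have hq : ∀ i, ContDiffOn ℝ (⊤ : ℕ∞) (fun z => gw z * (F z * dd (es i) G z)) cyl :=
    fun i => smooth_gw.mul (hFG i)
  have hI := fun i => integral_dd_es (hq i) (fun z hz => by simp [gw, wgt_eq_zero hz]) hs i
  have hint : ∀ i ∈ (Finset.univ : Finset (Fin 3)), IntegrableOn
      (fun x => dd (es i) (fun z => gw z * (F z * dd (es i) G z)) (s, x)) shell := fun i _ =>
    (continuousOn_slice (smooth_dd isOpen_cyl (hq i) (es i)) hs).integrableOn_compact
      isCompact_shell
  have hsum := integral_finsetSum (μ := volume.restrict shell) Finset.univ hint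
  rw [Finset.sum_congr rfl fun i _ => hI i, Finset.sum_const_zero] at hsum
  have c1 : ContinuousOn (fun x => F (s, x) * (‖x‖ ^ 2 * lapx G (s, x))) shell :=
    (continuousOn_slice hF hs).mul (ContinuousOn.mul (by fun_prop)
      (continuousOn_slice (smooth_lapx isOpen_cyl hG) hs))
  have c2 : ContinuousOn (fun x => ‖x‖ ^ 2 * ∑ i, dd (es i) F (s, x) * dd (es i) G (s, x))
      shell := by
    refine ContinuousOn.mul (by fun_prop) (continuousOn_finsetSum _ fun i _ => ?_)
    exact (continuousOn_slice (hFi i) hs).mul (continuousOn_slice (hGi i) hs)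
  rw [eq_neg_iff_add_eq_zero, ← wint_add c1 c2, ← hsum]
  refine setIntegral_congr_fun measurableSet_shell fun x hx => ?_
  have hz := shell_mem_cyl hs hx
  have hE := h0.euler hG hz
  simp only [dd_mul isOpen_cyl smooth_gw (hFG _) _ hz, dd_mul isOpen_cyl hF (hGi _) _ hz,
    dd_es_gw hz]
  unfold lapx
  rw [Fin.sum_univ_three] at *
  simp only [Fin.sum_univ_three, gw, smul_eq_mul]
  linear_combination (-2 * deriv (fun ρ => bump1 ρ * ρ) (‖x‖ ^ 2) * F (s, x)) * hE

/-- The solutions of the Legendre-type equation on the cylinder corresponding to homogeneous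
degree `-1` solutions of the wave equation. -/
def IsLeg (B : ℝ × E3 → ℝ) : Prop :=
  ContDiffOn ℝ (⊤ : ℕ∞) B cyl ∧ Hom0 B ∧ ∀ z ∈ cyl, leg B z = ‖z.2‖ ^ 2 * lapx B z

lemma smooth_leg {B : ℝ × E3 → ℝ} (hB : ContDiffOn ℝ (⊤ : ℕ∞) B cyl) :
    ContDiffOn ℝ (⊤ : ℕ∞) (leg B) cyl := by
  have h1 := smooth_dd isOpen_cyl hB e0
  exact (ContDiffOn.mul (ContDiff.contDiffOn (by fun_prop)) (smooth_dd isOpen_cyl h1 e0)).sub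
    (ContDiffOn.mul (ContDiff.contDiffOn (by fun_prop)) h1)

lemma Hom0.legendre {B : ℝ × E3 → ℝ} (hB : ContDiffOn ℝ (⊤ : ℕ∞) B cyl) (h0 : Hom0 B) :
    Hom0 (leg B) := by
  intro s x h c hc
  have h1 := h0.dd_e0 hB
  have h2 := h1.dd_e0 (smooth_dd isOpen_cyl hB e0)
  change (1 - s ^ 2) * dd e0 (dd e0 B) (s, c • x) - 2 * s * dd e0 B (s, c • x) =
    (1 - s ^ 2) * dd e0 (dd e0 B) (s, x) - 2 * s * dd e0 B (s, x)
  rw [h1 s x h c hc, h2 s x h c hc]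

lemma lapx_dd_e0 {B : ℝ × E3 → ℝ} (hB : ContDiffOn ℝ (⊤ : ℕ∞) B cyl) {z : ℝ × E3}
    (hz : z ∈ cyl) : lapx (dd e0 B) z = dd e0 (lapx B) z := by
  have h2 := fun i => smooth_dd isOpen_cyl (smooth_dd isOpen_cyl hB (es i)) (es i)
  have e1 : ∀ i, dd (es i) (dd (es i) (dd e0 B)) z = dd e0 (dd (es i) (dd (es i) B)) z :=
    fun i => by
      rw [dd_congr isOpen_cyl (fun y hy => dd_comm isOpen_cyl hB (es i) e0 hy) (es i) hz,
        dd_comm isOpen_cyl (smooth_dd isOpen_cyl hB (es i)) (es i) e0 hz]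
  have e2 : lapx B = fun z => dd (es 0) (dd (es 0) B) z + (dd (es 1) (dd (es 1) B) z +
      dd (es 2) (dd (es 2) B) z) := by
    funext z; unfold lapx; rw [Fin.sum_univ_three]; ring
  rw [e2, dd_add isOpen_cyl (h2 0) ((h2 1).add (h2 2)), dd_add isOpen_cyl (h2 1) (h2 2) _ hz]
  · unfold lapx
    rw [Fin.sum_univ_three, e1, e1, e1]; ring
  · exact hz

/-- Applying the Legendre operator to a solution gives another solution. -/
lemma IsLeg.legendre {B : ℝ × E3 → ℝ} (h : IsLeg B) : IsLeg (leg B) := by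
  obtain ⟨hB, h0, he⟩ := h
  have h1 := smooth_dd isOpen_cyl hB e0
  have h2 := smooth_dd isOpen_cyl h1 e0
  have hL := smooth_lapx isOpen_cyl hB
  refine ⟨smooth_leg hB, h0.legendre hB, fun z hz => ?_⟩
  have hr : ContDiffOn ℝ (⊤ : ℕ∞) (fun z : ℝ × E3 => ‖z.2‖ ^ 2) cyl :=
    (contDiff_snd.norm_sq ℝ).contDiffOn
  have hr0 : ∀ y ∈ cyl, dd e0 (fun z : ℝ × E3 => ‖z.2‖ ^ 2) y = 0 := fun y hy =>
    (hasDerivAt_fst isOpen_cyl hr (t := y.1) (x := y.2) hy).unique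
      (hasDerivAt_const y.1 (‖y.2‖ ^ 2))
  -- the left side is `‖x‖²` times the Legendre operator of the Laplacian
  have a1 : ∀ H : ℝ × E3 → ℝ, ContDiffOn ℝ (⊤ : ℕ∞) H cyl → ∀ y ∈ cyl,
      dd e0 (fun z => ‖z.2‖ ^ 2 * H z) y = ‖y.2‖ ^ 2 * dd e0 H y := fun H hH y hy => by
    rw [dd_mul isOpen_cyl hr hH e0 hy, hr0 y hy]; ring
  have a2 : ∀ y ∈ cyl, dd e0 (leg B) y = ‖y.2‖ ^ 2 * dd e0 (lapx B) y := fun y hy => by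
    rw [dd_congr isOpen_cyl he e0 hy, a1 _ hL y hy]
  have a3 : dd e0 (dd e0 (leg B)) z = ‖z.2‖ ^ 2 * dd e0 (dd e0 (lapx B)) z := by
    rw [dd_congr isOpen_cyl a2 e0 hz, a1 _ (smooth_dd isOpen_cyl hL e0) z hz]
  have b1 : leg B = fun z => (1 - z.1 ^ 2) * dd e0 (dd e0 B) z + (-2 * z.1) * dd e0 B z := by
    funext z; unfold leg; ring
  have s1 : ContDiffOn ℝ (⊤ : ℕ∞) (fun z : ℝ × E3 => (1 - z.1 ^ 2)) cyl :=
    ContDiff.contDiffOn (by fun_prop)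
  have s2 : ContDiffOn ℝ (⊤ : ℕ∞) (fun z : ℝ × E3 => (-2 * z.1)) cyl :=
    ContDiff.contDiffOn (by fun_prop)
  have b2 : lapx (leg B) z = (1 - z.1 ^ 2) * dd e0 (dd e0 (lapx B)) z
      + (-2 * z.1) * dd e0 (lapx B) z := by
    rw [b1, lapx_add isOpen_cyl (s1.mul h2) (s2.mul h1) hz,
      lapx_fst_mul (l := fun s => 1 - s ^ 2) isOpen_cyl s1 h2 hz,
      lapx_fst_mul (l := fun s => -2 * s) isOpen_cyl s2 h1 hz, lapx_dd_e0 h1 hz, lapx_dd_e0 hB hz,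
      dd_congr isOpen_cyl (fun y hy => lapx_dd_e0 hB hy) e0 hz]
  rw [b2]
  change (1 - z.1 ^ 2) * dd e0 (dd e0 (leg B)) z - 2 * z.1 * dd e0 (leg B) z = _
  rw [a2 z hz, a3]
  ring

/-! ### Energy estimates near the light cone -/

lemma IsLeg.dd_e0_leg {B : ℝ × E3 → ℝ} (h : IsLeg B) {z : ℝ × E3} (hz : z ∈ cyl) :
    dd e0 (leg B) z = ‖z.2‖ ^ 2 * lapx (dd e0 B) z := by
  have hr : ContDiffOn ℝ (⊤ : ℕ∞) (fun z : ℝ × E3 => ‖z.2‖ ^ 2) cyl :=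
    (contDiff_snd.norm_sq ℝ).contDiffOn
  have hr0 : dd e0 (fun z : ℝ × E3 => ‖z.2‖ ^ 2) z = 0 :=
    (hasDerivAt_fst isOpen_cyl hr (t := z.1) (x := z.2) hz).unique
      (hasDerivAt_const z.1 (‖z.2‖ ^ 2))
  rw [dd_congr isOpen_cyl h.2.2 e0 hz, dd_mul isOpen_cyl hr (smooth_lapx isOpen_cyl h.1) e0 hz,
    hr0, lapx_dd_e0 h.1 hz]
  ring

/-- The momentum `(1 - s²) ∂ₛB`; the Legendre operator is its derivative. -/
def mom (B : ℝ × E3 → ℝ) (z : ℝ × E3) : ℝ := (1 - z.1 ^ 2) * dd e0 B z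

lemma smooth_mom {B : ℝ × E3 → ℝ} (hB : ContDiffOn ℝ (⊤ : ℕ∞) B cyl) :
    ContDiffOn ℝ (⊤ : ℕ∞) (mom B) cyl :=
  ContDiffOn.mul (ContDiff.contDiffOn (by fun_prop)) (smooth_dd isOpen_cyl hB e0)

lemma hasDerivAt_one_sub_sq (s : ℝ) : HasDerivAt (fun s : ℝ => 1 - s ^ 2) (-(2 * s)) s := by
  simpa using (hasDerivAt_pow 2 s).const_sub 1

lemma dd_e0_mom {B : ℝ × E3 → ℝ} (hB : ContDiffOn ℝ (⊤ : ℕ∞) B cyl) {z : ℝ × E3} (hz : z ∈ cyl) :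
    dd e0 (mom B) z = leg B z := by
  refine (hasDerivAt_fst isOpen_cyl (smooth_mom hB) (t := z.1) (x := z.2) hz).unique ?_
  refine ((hasDerivAt_one_sub_sq z.1).mul
    (hasDerivAt_fst isOpen_cyl (smooth_dd isOpen_cyl hB e0) hz)).congr_deriv ?_
  unfold leg
  ring

lemma one_sub_sq_pos {s : ℝ} (hs : |s| < 1) : 0 < 1 - s ^ 2 := by
  have := abs_lt.1 hs
  nlinarith [this.1, this.2]

/-- The kinetic energy of a solution at height `s`. -/
def kin (B : ℝ × E3 → ℝ) (s : ℝ) : ℝ := wint fun x => mom B (s, x) ^ 2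

/-- The potential energy of a solution at height `s`: the Dirichlet form, written through the
equation. -/
def pot (B : ℝ × E3 → ℝ) (s : ℝ) : ℝ := - wint fun x => B (s, x) * leg B (s, x)

lemma kin_nonneg (B : ℝ × E3 → ℝ) (s : ℝ) : 0 ≤ kin B s := wint_nonneg fun _ _ => sq_nonneg _

lemma kin_eq (B : ℝ × E3 → ℝ) (s : ℝ) : kin B s = wnorm (fun x => mom B (s, x)) ^ 2 :=
  (wnorm_sq _).symm

lemma IsLeg.pot_nonneg {B : ℝ × E3 → ℝ} (h : IsLeg B) {s : ℝ} (hs : |s| < 1) : 0 ≤ pot B s := by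
  unfold pot
  rw [wint_congr fun x hx => by rw [h.2.2 _ (shell_mem_cyl hs hx)], wint_green h.1 h.1 h.2.1 hs,
    neg_neg]
  exact wint_nonneg fun x _ => mul_nonneg (sq_nonneg _)
    (Finset.sum_nonneg fun i _ => mul_self_nonneg _)

lemma IsLeg.hasDerivAt_pot {B : ℝ × E3 → ℝ} (h : IsLeg B) {s : ℝ} (hs : |s| < 1) :
    HasDerivAt (pot B) (-2 * wint fun x => dd e0 B (s, x) * leg B (s, x)) s := by
  have hB' := smooth_dd isOpen_cyl h.1 e0
  have hL := smooth_leg h.1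
  have h1 := (hasDerivAt_wint (G := fun z => B z * leg B z) (h.1.mul hL) hs).neg
  refine h1.congr_deriv ?_
  have c1 : ContinuousOn (fun x => B (s, x) * dd e0 (leg B) (s, x)) shell :=
    (continuousOn_slice h.1 hs).mul (continuousOn_slice (smooth_dd isOpen_cyl hL e0) hs)
  have c2 : ContinuousOn (fun x => dd e0 B (s, x) * leg B (s, x)) shell :=
    (continuousOn_slice hB' hs).mul (continuousOn_slice hL hs)
  rw [wint_congr fun x hx => dd_mul isOpen_cyl h.1 hL e0 (shell_mem_cyl hs hx), wint_add c1 c2]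
  -- symmetry of the Dirichlet form
  have e : (wint fun x => B (s, x) * dd e0 (leg B) (s, x)) =
      wint fun x => dd e0 B (s, x) * leg B (s, x) := by
    rw [wint_congr fun x hx => by rw [h.dd_e0_leg (shell_mem_cyl hs hx)],
      wint_green h.1 hB' (h.2.1.dd_e0 h.1) hs,
      wint_congr (f := fun x => dd e0 B (s, x) * leg B (s, x)) fun x hx => by
        rw [h.2.2 _ (shell_mem_cyl hs hx)],
      wint_green hB' h.1 h.2.1 hs]
    refine congrArg _ (wint_congr fun x _ => ?_)
    simp only [mul_comm]
  rw [e]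
  ring

lemma hasDerivAt_kin {B : ℝ × E3 → ℝ} (hB : ContDiffOn ℝ (⊤ : ℕ∞) B cyl) {s : ℝ} (hs : |s| < 1) :
    HasDerivAt (kin B) (2 * (1 - s ^ 2) * wint fun x => dd e0 B (s, x) * leg B (s, x)) s := by
  have hm := smooth_mom hB
  have h1 := hasDerivAt_wint (G := fun z => mom B z ^ 2) (hm.pow 2) hs
  refine h1.congr_deriv ?_
  rw [← wint_const_mul]
  refine wint_congr fun x hx => ?_
  have hz := shell_mem_cyl hs hx
  have e : (fun z => mom B z ^ 2) = fun z => mom B z * mom B z := by funext z; ring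
  rw [e, dd_mul isOpen_cyl hm hm e0 hz, dd_e0_mom hB hz]
  simp only [mom]
  ring

lemma IsLeg.hasDerivAt_energy {B : ℝ × E3 → ℝ} (h : IsLeg B) {s : ℝ} (hs : |s| < 1) :
    HasDerivAt (fun s => kin B s + (1 - s ^ 2) * pot B s) (-(2 * s) * pot B s) s := by
  refine ((hasDerivAt_kin h.1 hs).add
    ((hasDerivAt_one_sub_sq s).mul (h.hasDerivAt_pot hs))).congr_deriv ?_
  ring

lemma abs_lt_one_of_Ico {s : ℝ} (hs : s ∈ Ico (0 : ℝ) 1) : |s| < 1 := by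
  rw [abs_of_nonneg hs.1]; exact hs.2

lemma IsLeg.kin_le {B : ℝ × E3 → ℝ} (h : IsLeg B) {s : ℝ} (hs : s ∈ Ico (0 : ℝ) 1) :
    kin B s ≤ kin B 0 + pot B 0 := by
  have hd := fun s (hs : s ∈ Ico (0 : ℝ) 1) => h.hasDerivAt_energy (abs_lt_one_of_Ico hs)
  have hmono : AntitoneOn (fun s => kin B s + (1 - s ^ 2) * pot B s) (Ico 0 1) := by
    refine antitoneOn_of_deriv_nonpos (convex_Ico _ _)
      (fun s hs => (hd s hs).continuousAt.continuousWithinAt)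
      (fun s hs => (hd s (interior_subset hs)).differentiableAt.differentiableWithinAt)
      fun s hs => ?_
    have hs' := interior_subset hs
    rw [(hd s hs').deriv]
    have := h.pot_nonneg (abs_lt_one_of_Ico hs')
    nlinarith [mul_nonneg hs'.1 this]
  have h1 := hmono (left_mem_Ico.2 one_pos) hs hs.1
  have h2 := mul_nonneg (one_sub_sq_pos (abs_lt_one_of_Ico hs)).le
    (h.pot_nonneg (abs_lt_one_of_Ico hs))
  simp only at h1
  linarith

/-- The derivative of a function in terms of a bound on its momentum. -/
lemma wnorm_dd_le {B : ℝ × E3 → ℝ} {s c : ℝ} (hs : s ∈ Ico (0 : ℝ) 1)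
    (hc : wnorm (fun x => mom B (s, x)) ≤ c) :
    wnorm (fun x => dd e0 B (s, x)) ≤ c * (1 - s)⁻¹ := by
  have hp := one_sub_sq_pos (abs_lt_one_of_Ico hs)
  have h1 : 0 < 1 - s := by linarith [hs.2]
  have e : (fun x => mom B (s, x)) = fun x => (1 - s ^ 2) * dd e0 B (s, x) := rfl
  rw [e, wnorm_const_mul, abs_of_pos hp] at hc
  rw [← div_eq_mul_inv, le_div_iff₀ h1]
  have := wnorm_nonneg fun x => dd e0 B (s, x)
  nlinarith [mul_nonneg hs.1 h1.le, mul_nonneg (mul_nonneg hs.1 h1.le) this]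

lemma hasDerivAt_one_sub_rpow {s : ℝ} (hs : s < 1) (a : ℝ) :
    HasDerivAt (fun s : ℝ => (1 - s) ^ a) (-(a * (1 - s) ^ (a - 1))) s := by
  have h := ((hasDerivAt_id s).const_sub 1).rpow_const (p := a)
    (Or.inl (by simpa using (sub_pos.2 hs).ne'))
  refine h.congr_deriv ?_
  simp

/-- Integration of a power bound on the derivative. -/
lemma wnorm_sub_le_rpow {F : ℝ × E3 → ℝ} (hF : ContDiffOn ℝ (⊤ : ℕ∞) F cyl) {C a : ℝ} (ha : a ≠ 0)
    (hC : ∀ s ∈ Ico (0 : ℝ) 1, wnorm (fun x => dd e0 F (s, x)) ≤ C * (1 - s) ^ (a - 1))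
    {s₁ s₂ : ℝ} (h0 : 0 ≤ s₁) (h12 : s₁ ≤ s₂) (h1 : s₂ < 1) :
    wnorm (fun x => F (s₂, x) - F (s₁, x)) ≤ C / a * ((1 - s₁) ^ a - (1 - s₂) ^ a) := by
  have := wnorm_sub_le hF (by linarith) h12 h1 (b := fun s => -(C / a) * (1 - s) ^ a)
    (b' := fun s => C * (1 - s) ^ (a - 1))
    (fun s hs => ((hasDerivAt_one_sub_rpow (hs.2.trans_lt h1) a).const_mul _).congr_deriv
      (by field_simp))
    (fun s hs => hC s ⟨h0.trans hs.1, hs.2.trans_lt h1⟩)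
  linarith

/-- Fatou's lemma for the weighted norm, as the height tends to `1`. -/
lemma wnorm_le_of_tendsto_left {F : ℝ → E3 → ℝ} {f : E3 → ℝ} {s M : ℝ} (hs : s < 1)
    (hF : ∀ s' ∈ Ioo s 1, ContinuousOn (F s') shell) (hf : ContinuousOn f shell)
    (hlim : ∀ x ∈ shell, Tendsto (fun s' => F s' x) (𝓝[<] 1) (𝓝 (f x)))
    (hM : ∀ s' ∈ Ioo s 1, wnorm (F s') ≤ M) : wnorm f ≤ M := by
  obtain ⟨u, -, hu, hul⟩ := exists_seq_strictMono_tendsto' hs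
  have hu' : Tendsto u atTop (𝓝[<] 1) :=
    tendsto_nhdsWithin_iff.2 ⟨hul, Eventually.of_forall fun n => (hu n).2⟩
  exact wnorm_le_of_tendsto (F := fun n => F (u n)) (fun n => hF _ (hu n)) hf
    (fun x hx => (hlim x hx).comp hu') fun n => hM _ (hu n)

lemma wnorm_neg (f : E3 → ℝ) : wnorm (fun x => - f x) = wnorm f := by
  have := wnorm_const_mul (-1) f
  simpa using this

/-! ### Uniqueness -/

/-- The time derivative of `leg B` is at most `M (1 - s)^(-5/4)`, by the energy bound; integrating
once, `leg B` grows at most like `(1 - s)^(-1/4)`. -/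
lemma IsLeg.leg_growth {B : ℝ × E3 → ℝ} (h : IsLeg B) :
    ∃ C, 0 ≤ C ∧ ∀ s ∈ Ico (0 : ℝ) 1, wnorm (fun x => leg B (s, x)) ≤ C * (1 - s) ^ (-1 / 4 : ℝ) := by
  have hL := h.legendre
  set M := √(kin (leg B) 0 + pot (leg B) 0)
  have hM : 0 ≤ M := Real.sqrt_nonneg _
  have hd : ∀ s ∈ Ico (0 : ℝ) 1, wnorm (fun x => dd e0 (leg B) (s, x)) ≤
      M * (1 - s) ^ ((-1 / 4 : ℝ) - 1) := fun s hs => by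
    have h1 : 0 < 1 - s := by linarith [hs.2]
    have hm : wnorm (fun x => mom (leg B) (s, x)) ≤ M := by
      refine Real.le_sqrt_of_sq_le ?_
      rw [← kin_eq]
      exact hL.kin_le hs
    refine (wnorm_dd_le hs hm).trans (mul_le_mul_of_nonneg_left ?_ hM)
    rw [← Real.rpow_neg_one]
    exact Real.rpow_le_rpow_of_exponent_ge h1 (by linarith [hs.1]) (by norm_num)
  set N := wnorm (fun x => leg B (0, x))
  have hN : 0 ≤ N := wnorm_nonneg _
  refine ⟨N + 4 * M, by positivity, fun s hs => ?_⟩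
  have h1 : 0 < 1 - s := by linarith [hs.2]
  have hone : 1 ≤ (1 - s) ^ (-1 / 4 : ℝ) :=
    Real.one_le_rpow_of_pos_of_le_one_of_nonpos h1 (by linarith [hs.1]) (by norm_num)
  have key := wnorm_sub_le_rpow hL.1 (by norm_num) hd le_rfl hs.1 hs.2
  have c0 := continuousOn_slice hL.1 (s := 0) (by simp)
  have c1 := continuousOn_slice hL.1 (abs_lt_one_of_Ico hs)
  have hadd := wnorm_add_le (f := fun x => leg B (s, x) - leg B (0, x))
    (g := fun x => leg B (0, x)) (c1.sub c0) c0
  simp only [sub_add_cancel] at hadd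
  rw [sub_zero, Real.one_rpow] at key
  have e : M / (-1 / 4) * (1 - (1 - s) ^ (-1 / 4 : ℝ)) = 4 * M * ((1 - s) ^ (-1 / 4 : ℝ) - 1) := by
    ring
  rw [e] at key
  nlinarith

/-- Increments of the momentum up to the light cone. -/
lemma IsLeg.mom_sub_le {B : ℝ × E3 → ℝ} (h : IsLeg B) : ∃ C, 0 ≤ C ∧
    (∀ s ∈ Ico (0 : ℝ) 1, wnorm (fun x => leg B (s, x)) ≤ C * (1 - s) ^ (-1 / 4 : ℝ)) ∧
    ∀ s₁ s₂ : ℝ, 0 ≤ s₁ → s₁ ≤ s₂ → s₂ < 1 →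
      wnorm (fun x => mom B (s₂, x) - mom B (s₁, x)) ≤ 2 * C * (1 - s₁) ^ (3 / 4 : ℝ) := by
  obtain ⟨C, hC, hb⟩ := h.leg_growth
  refine ⟨C, hC, hb, fun s₁ s₂ h0 h12 h1 => ?_⟩
  have hd : ∀ s ∈ Ico (0 : ℝ) 1, wnorm (fun x => dd e0 (mom B) (s, x)) ≤
      C * (1 - s) ^ ((3 / 4 : ℝ) - 1) := fun s hs => by
    rw [wnorm_congr fun x hx => dd_e0_mom h.1 (shell_mem_cyl (abs_lt_one_of_Ico hs) hx)]
    refine (hb s hs).trans_eq ?_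
    norm_num
  have key := wnorm_sub_le_rpow (smooth_mom h.1) (by norm_num) hd h0 h12 h1
  have p1 : 0 ≤ (1 - s₁) ^ (3 / 4 : ℝ) := Real.rpow_nonneg (by linarith) _
  have p2 : 0 ≤ (1 - s₂) ^ (3 / 4 : ℝ) := Real.rpow_nonneg (by linarith) _
  have e : C / (3 / 4) = 4 / 3 * C := by ring
  rw [e] at key
  nlinarith [mul_nonneg hC p1, mul_nonneg hC p2]

lemma tendsto_logH : Tendsto logH (𝓝[<] 1) atTop := by
  have h1 : Tendsto (fun s : ℝ => Real.log (1 + s)) (𝓝[<] 1) (𝓝 (Real.log (1 + 1))) :=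
    (((continuous_const.add continuous_id).tendsto (1 : ℝ)).log (by norm_num)).mono_left
      nhdsWithin_le_nhds
  have h2 : Tendsto (fun s : ℝ => 1 - s) (𝓝[<] 1) (𝓝[>] 0) := by
    refine tendsto_nhdsWithin_iff.2 ⟨?_, ?_⟩
    · have := (continuous_const.sub continuous_id).tendsto (1 : ℝ) (f := fun s : ℝ => 1 - s)
      rw [sub_self] at this
      exact this.mono_left nhdsWithin_le_nhds
    · filter_upwards [self_mem_nhdsWithin] with s hs using sub_pos.2 (mem_Iio.1 hs)
  have h3 := tendsto_neg_atBot_atTop.comp (Real.tendsto_log_nhdsGT_zero.comp h2)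
  exact h1.add_atTop h3

/-- If a solution vanishes on the light cone, its momentum decays: otherwise the solution would
grow logarithmically. -/
lemma IsLeg.mom_decay {B : ℝ × E3 → ℝ} (h : IsLeg B)
    (hlim : ∀ x ∈ shell, Tendsto (fun s => B (s, x)) (𝓝[<] 1) (𝓝 0)) {C : ℝ}
    (hC : ∀ s₁ s₂ : ℝ, 0 ≤ s₁ → s₁ ≤ s₂ → s₂ < 1 →
      wnorm (fun x => mom B (s₂, x) - mom B (s₁, x)) ≤ C * (1 - s₁) ^ (3 / 4 : ℝ))
    {s : ℝ} (hs : s ∈ Ico (0 : ℝ) 1) :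
    wnorm (fun x => mom B (s, x)) ≤ C * (1 - s) ^ (3 / 4 : ℝ) := by
  have hs1 := abs_lt_one_of_Ico hs
  set D := C * (1 - s) ^ (3 / 4 : ℝ)
  have hm := smooth_mom h.1
  have hms : ContDiffOn ℝ (⊤ : ℕ∞) (fun z : ℝ × E3 => mom B (s, z.2)) cyl :=
    hm.comp (f := fun z : ℝ × E3 => (s, z.2)) (ContDiff.contDiffOn (by fun_prop))
      fun z hz => ⟨hs1, hz.2⟩
  -- subtract from the solution the logarithm with the momentum frozen at height `s`
  set G : ℝ × E3 → ℝ := fun z => B z - logH z.1 / 2 * mom B (s, z.2) with hGdef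
  have hG : ContDiffOn ℝ (⊤ : ℕ∞) G cyl := h.1.sub ((smooth_logH.div_const 2).mul hms)
  have hGd : ∀ σ, |σ| < 1 → ∀ x ∈ shell, dd e0 G (σ, x) =
      (1 - σ ^ 2)⁻¹ * (mom B (σ, x) - mom B (s, x)) := fun σ hσ x hx => by
    have hz := shell_mem_cyl hσ hx
    refine (hasDerivAt_fst isOpen_cyl hG hz).unique ?_
    refine ((hasDerivAt_fst isOpen_cyl h.1 hz).sub
      (((hasDerivAt_logH hσ).div_const 2).mul_const (mom B (s, x)))).congr_deriv ?_
    have := (one_sub_sq_pos hσ).ne'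
    simp only [mom]
    field_simp
  have hinc : ∀ s' ∈ Ioo s 1, wnorm (fun x => G (s', x) - G (s, x)) ≤
      D * (logH s' / 2) - D * (logH s / 2) := fun s' hs' => by
    refine wnorm_sub_le hG (by linarith [hs.1]) hs'.1.le hs'.2
      (b := fun σ => D * (logH σ / 2)) (b' := fun σ => D * (2 / (1 - σ ^ 2) / 2))
      (fun σ hσ => ((hasDerivAt_logH (abs_lt_one_of_Ico
        ⟨hs.1.trans hσ.1, hσ.2.trans_lt hs'.2⟩)).div_const 2).const_mul D) fun σ hσ => ?_
    have hσ1 : σ < 1 := hσ.2.trans_lt hs'.2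
    have ha := abs_lt_one_of_Ico ⟨hs.1.trans hσ.1, hσ1⟩
    have hp := one_sub_sq_pos ha
    rw [wnorm_congr (hGd σ ha), wnorm_const_mul, abs_of_pos (inv_pos.2 hp)]
    refine (mul_le_mul_of_nonneg_left (hC s σ hs.1 hσ.1 hσ1) (inv_pos.2 hp).le).trans_eq ?_
    field_simp
    rfl
  have hpos : ∀ s' ∈ Ioo s 1, 0 < logH s' / 2 - logH s / 2 := fun s' hs' => by
    unfold logH
    have l1 := Real.log_lt_log (x := 1 + s) (y := 1 + s') (by linarith [hs.1])
      (by linarith [hs'.1])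
    have l2 := Real.log_lt_log (x := 1 - s') (y := 1 - s) (by linarith [hs'.2])
      (by linarith [hs'.1])
    linarith
  have cm := continuousOn_slice hm hs1
  rw [← wnorm_neg]
  refine wnorm_le_of_tendsto_left (s := s)
    (F := fun s' x => (logH s' / 2 - logH s / 2)⁻¹ * (G (s', x) - G (s, x))) hs.2
    (fun s' hs' => ?_) cm.neg (fun x hx => ?_) fun s' hs' => ?_
  · exact continuousOn_const.mul ((continuousOn_slice hG
      (abs_lt_one_of_Ico ⟨hs.1.trans hs'.1.le, hs'.2⟩)).sub (continuousOn_slice hG hs1))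
  · have t1 : Tendsto (fun s' => logH s' / 2 - logH s / 2) (𝓝[<] 1) atTop := by
      simpa only [sub_eq_add_neg] using
        tendsto_atTop_add_const_right _ (-(logH s / 2)) (tendsto_logH.atTop_div_const two_pos)
    have t2 := t1.inv_tendsto_atTop.mul ((hlim x hx).sub_const (B (s, x)))
    have t3 := t2.sub_const (mom B (s, x))
    rw [zero_mul, zero_sub] at t3
    refine t3.congr' ?_
    filter_upwards [Ioo_mem_nhdsLT hs.2] with s' hs'
    have := (hpos s' hs').ne'
    simp only [hGdef, Pi.inv_apply]
    linear_combination mom B (s, x) * inv_mul_cancel₀ this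
  · have hp := hpos s' hs'
    rw [wnorm_const_mul, abs_of_pos (inv_pos.2 hp), inv_mul_le_iff₀ hp]
    linarith [hinc s' hs']

lemma IsLeg.kin_eq_zero {B : ℝ × E3 → ℝ} (h : IsLeg B)
    (hlim : ∀ x ∈ shell, Tendsto (fun s => B (s, x)) (𝓝[<] 1) (𝓝 0)) {s : ℝ} (hs : |s| < 1) :
    kin B s = 0 := by
  obtain ⟨C, hC, hL, hinc⟩ := h.mom_sub_le
  have hmom : ∀ s ∈ Ico (0 : ℝ) 1, wnorm (fun x => mom B (s, x)) ≤
      2 * C * (1 - s) ^ (3 / 4 : ℝ) := fun s hs => h.mom_decay hlim hinc hs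
  have hd : ∀ s ∈ Ico (0 : ℝ) 1, wnorm (fun x => dd e0 B (s, x)) ≤
      2 * C * (1 - s) ^ ((3 / 4 : ℝ) - 1) := fun s hs => by
    refine (wnorm_dd_le hs (hmom s hs)).trans_eq ?_
    rw [mul_assoc, ← Real.rpow_neg_one, ← Real.rpow_add (by linarith [hs.2])]
    norm_num
  have hBn : ∀ s ∈ Ico (0 : ℝ) 1, wnorm (fun x => B (s, x)) ≤
      4 * C * (1 - s) ^ (3 / 4 : ℝ) := fun s hs => by
    have cs := continuousOn_slice h.1 (abs_lt_one_of_Ico hs)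
    rw [← wnorm_neg]
    refine wnorm_le_of_tendsto_left (F := fun s' x => B (s', x) - B (s, x)) hs.2
      (fun s' hs' => (continuousOn_slice h.1
        (abs_lt_one_of_Ico ⟨hs.1.trans hs'.1.le, hs'.2⟩)).sub cs) cs.neg
      (fun x hx => by simpa using (hlim x hx).sub_const (B (s, x))) fun s' hs' => ?_
    refine (wnorm_sub_le_rpow h.1 (by norm_num) hd hs.1 hs'.1.le hs'.2).trans ?_
    have p1 : 0 ≤ (1 - s) ^ (3 / 4 : ℝ) := Real.rpow_nonneg (by linarith [hs.2]) _
    have p2 : 0 ≤ (1 - s') ^ (3 / 4 : ℝ) := Real.rpow_nonneg (by linarith [hs'.2]) _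
    have e : 2 * C / (3 / 4) = 8 / 3 * C := by ring
    rw [e]
    nlinarith [mul_nonneg hC p1, mul_nonneg hC p2]
  -- the second energy is increasing and tends to zero
  set E : ℝ → ℝ := fun s => kin B s * (1 - s ^ 2)⁻¹ + pot B s with hE
  have hEd : ∀ s ∈ Ico (0 : ℝ) 1,
      HasDerivAt E (2 * s * kin B s * ((1 - s ^ 2)⁻¹) ^ 2) s := fun s hs => by
    have ha := abs_lt_one_of_Ico hs
    have hp := (one_sub_sq_pos ha).ne'
    refine (((hasDerivAt_kin h.1 ha).mul ((hasDerivAt_one_sub_sq s).inv hp)).add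
      (h.hasDerivAt_pot ha)).congr_deriv ?_
    simp only [Pi.inv_apply]
    field_simp
    ring
  have hmono : MonotoneOn E (Ico 0 1) := by
    refine monotoneOn_of_deriv_nonneg (convex_Ico _ _)
      (fun s hs => (hEd s hs).continuousAt.continuousWithinAt)
      (fun s hs => (hEd s (interior_subset hs)).differentiableAt.differentiableWithinAt)
      fun s hs => ?_
    have hs' := interior_subset hs
    rw [(hEd s hs').deriv]
    exact mul_nonneg (mul_nonneg (mul_nonneg two_pos.le hs'.1) (kin_nonneg _ _)) (sq_nonneg _)
  have hsmall : ∀ s ∈ Ico (0 : ℝ) 1, E s ≤ 8 * C ^ 2 * (1 - s) ^ (1 / 2 : ℝ) := fun s hs => by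
    have h1 : 0 < 1 - s := by linarith [hs.2]
    have ha := abs_lt_one_of_Ico hs
    have hp := one_sub_sq_pos ha
    have q1 : (1 - s) ^ (3 / 4 : ℝ) * (1 - s) ^ (-1 / 4 : ℝ) = (1 - s) ^ (1 / 2 : ℝ) := by
      rw [← Real.rpow_add h1]; norm_num
    have q2 : ((1 - s) ^ (3 / 4 : ℝ)) ^ 2 = (1 - s) ^ (1 / 2 : ℝ) * (1 - s) := by
      rw [← Real.rpow_natCast, ← Real.rpow_mul h1.le, ← Real.rpow_add_one h1.ne']
      norm_num
    have q0 : 0 ≤ (1 - s) ^ (1 / 2 : ℝ) := Real.rpow_nonneg h1.le _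
    have k1 : kin B s * (1 - s ^ 2)⁻¹ ≤ 4 * C ^ 2 * (1 - s) ^ (1 / 2 : ℝ) := by
      rw [← div_eq_mul_inv, div_le_iff₀ hp, kin_eq]
      refine (pow_le_pow_left₀ (wnorm_nonneg _) (hmom s hs) 2).trans ?_
      rw [mul_pow, q2]
      have : 0 ≤ C ^ 2 * (1 - s) ^ (1 / 2 : ℝ) * (s * (1 - s)) :=
        mul_nonneg (mul_nonneg (sq_nonneg C) q0) (mul_nonneg hs.1 h1.le)
      nlinarith
    have k2 : pot B s ≤ 4 * C ^ 2 * (1 - s) ^ (1 / 2 : ℝ) := by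
      refine (neg_le_abs _).trans ((wint_mul_le (continuousOn_slice h.1 ha)
        (continuousOn_slice (smooth_leg h.1) ha)).trans ?_)
      refine (mul_le_mul (hBn s hs) (hL s hs) (wnorm_nonneg _) ?_).trans_eq ?_
      · exact mul_nonneg (by positivity) (Real.rpow_nonneg h1.le _)
      · linear_combination 4 * C ^ 2 * q1
    simp only [hE]
    linarith
  have hlim0 : Tendsto (fun s : ℝ => 8 * C ^ 2 * (1 - s) ^ (1 / 2 : ℝ)) (𝓝[<] 1) (𝓝 0) := by
    have hc : Continuous fun s : ℝ => 8 * C ^ 2 * (1 - s) ^ (1 / 2 : ℝ) :=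
      continuous_const.mul ((continuous_const.sub continuous_id).rpow_const
        fun _ => Or.inr (by norm_num))
    have := hc.tendsto 1
    simp only [sub_self] at this
    rw [Real.zero_rpow (by norm_num), mul_zero] at this
    exact this.mono_left nhdsWithin_le_nhds
  have hzero : ∀ s ∈ Ico (0 : ℝ) 1, kin B s = 0 ∧ pot B s = 0 := fun s hs => by
    have h1 : E s ≤ 0 := by
      refine ge_of_tendsto hlim0 ?_
      filter_upwards [Ioo_mem_nhdsLT hs.2] with s' hs'
      have hs'' : s' ∈ Ico (0 : ℝ) 1 := ⟨hs.1.trans hs'.1.le, hs'.2⟩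
      exact (hmono hs hs'' hs'.1.le).trans (hsmall s' hs'')
    have ha := abs_lt_one_of_Ico hs
    have hp := inv_pos.2 (one_sub_sq_pos ha)
    have hk := kin_nonneg B s
    have hP := h.pot_nonneg ha
    have hkp := mul_nonneg hk hp.le
    simp only [hE] at h1
    refine ⟨?_, by linarith⟩
    have : kin B s * (1 - s ^ 2)⁻¹ = 0 := by linarith
    exact (mul_eq_zero.1 this).resolve_right hp.ne'
  rcases le_or_gt 0 s with h0 | h0
  · exact (hzero s ⟨h0, (abs_lt.1 hs).2⟩).1
  · -- at negative heights the other energy is increasing up to its value zero at `s = 0`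
    have hI : ∀ σ ∈ Ioc (-1 : ℝ) 0, |σ| < 1 := fun σ hσ =>
      abs_lt.2 ⟨hσ.1, hσ.2.trans_lt one_pos⟩
    have hmono' : MonotoneOn (fun s => kin B s + (1 - s ^ 2) * pot B s) (Ioc (-1) 0) := by
      have hd' := fun σ (hσ : σ ∈ Ioc (-1 : ℝ) 0) => h.hasDerivAt_energy (hI σ hσ)
      refine monotoneOn_of_deriv_nonneg (convex_Ioc _ _)
        (fun s hs => (hd' s hs).continuousAt.continuousWithinAt)
        (fun s hs => (hd' s (interior_subset hs)).differentiableAt.differentiableWithinAt)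
        fun σ hσ => ?_
      have hσ' := interior_subset hσ
      rw [(hd' σ hσ').deriv]
      exact mul_nonneg (by linarith [hσ'.2]) (h.pot_nonneg (hI σ hσ'))
    have h1 := hmono' ⟨(abs_lt.1 hs).1, h0.le⟩ (right_mem_Ioc.2 (by norm_num)) h0.le
    simp only at h1
    rw [(hzero 0 ⟨le_rfl, one_pos⟩).1, (hzero 0 ⟨le_rfl, one_pos⟩).2] at h1
    have hP := mul_nonneg (one_sub_sq_pos hs).le (h.pot_nonneg hs)
    have := kin_nonneg B s
    linarith

/-- A solution on the cylinder vanishing on the light cone is zero. -/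
lemma IsLeg.eq_zero {B : ℝ × E3 → ℝ} (h : IsLeg B)
    (hlim : ∀ x : E3, x ≠ 0 → Tendsto (fun s => B (s, x)) (𝓝[<] 1) (𝓝 0)) {s : ℝ} {x : E3}
    (hx : ‖x‖ = 1) (hs : |s| < 1) : B (s, x) = 0 := by
  have hx0 : x ≠ 0 := norm_pos_iff.1 (by rw [hx]; exact one_pos)
  have hd : ∀ σ ∈ Ioo (-1 : ℝ) 1, HasDerivAt (fun s => B (s, x)) 0 σ := fun σ hσ => by
    have ha := abs_lt.2 hσ
    have hk := h.kin_eq_zero (fun y hy => hlim y (shell_ne hy)) ha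
    rw [kin_eq, sq_eq_zero_iff] at hk
    have h1 := eq_zero_of_wnorm (continuousOn_slice (smooth_mom h.1) ha) hk hx
    have h2 := (mul_eq_zero.1 h1).resolve_left (one_sub_sq_pos ha).ne'
    exact (hasDerivAt_fst isOpen_cyl h.1 ⟨ha, hx0⟩).congr_deriv h2
  have hconst : ∀ σ ∈ Ioo (-1 : ℝ) 1, B (σ, x) = B (s, x) := fun σ hσ =>
    isOpen_Ioo.is_const_of_deriv_eq_zero isPreconnected_Ioo
      (fun τ hτ => (hd τ hτ).differentiableAt.differentiableWithinAt)
      (fun τ hτ => (hd τ hτ).deriv) hσ (abs_lt.1 hs)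
  refine tendsto_nhds_unique (tendsto_const_nhds.congr' ?_) (hlim x hx0)
  filter_upwards [Ioo_mem_nhdsLT (show (-1 : ℝ) < 1 by norm_num)] with σ hσ
  exact (hconst σ hσ).symm

/-- The function on the cylinder attached to a function on the exterior region; on homogeneous
functions of degree `-1` it inverts `toExt`. -/
def toCyl (δ : ℝ × E3 → ℝ) (z : ℝ × E3) : ℝ := ‖z.2‖ * δ (z.1 * ‖z.2‖, z.2)

lemma mem_ext_of_cyl {z : ℝ × E3} (hz : z ∈ cyl) : (z.1 * ‖z.2‖, z.2) ∈ extCone := by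
  change |z.1 * ‖z.2‖| < ‖z.2‖
  rw [abs_mul, abs_norm]
  exact mul_lt_of_lt_one_left (norm_pos_iff.2 hz.2) hz.1

lemma smooth_toCyl {δ : ℝ × E3 → ℝ} (hδ : ContDiffOn ℝ (⊤ : ℕ∞) δ extCone) :
    ContDiffOn ℝ (⊤ : ℕ∞) (toCyl δ) cyl := by
  have hn : ContDiffOn ℝ (⊤ : ℕ∞) (fun z : ℝ × E3 => ‖z.2‖) cyl :=
    contDiff_snd.contDiffOn.norm ℝ fun z hz => hz.2
  exact hn.mul (hδ.comp (f := fun z : ℝ × E3 => (z.1 * ‖z.2‖, z.2))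
    ((contDiff_fst.contDiffOn.mul hn).prodMk contDiff_snd.contDiffOn) fun z hz => mem_ext_of_cyl hz)

/-- A homogeneous degree `-1` solution of the wave equation in the exterior region gives a solution
on the cylinder. -/
lemma isLeg_toCyl {δ : ℝ × E3 → ℝ} (hδ : ContDiffOn ℝ (⊤ : ℕ∞) δ extCone)
    (hw : ∀ p ∈ extCone, dd e0 (dd e0 δ) p = lapx δ p)
    (hh : ∀ c : ℝ, 0 < c → ∀ (t : ℝ) (x : E3), (t, x) ∈ extCone →
      δ (c * t, c • x) = c⁻¹ * δ (t, x)) : IsLeg (toCyl δ) := by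
  have hB := smooth_toCyl hδ
  have h0 : Hom0 (toCyl δ) := fun s x h c hc => by
    have := hh c hc _ _ (mem_ext_of_cyl h)
    simp only at this
    simp only [toCyl, norm_smul, Real.norm_eq_abs, abs_of_pos hc]
    rw [show s * (c * ‖x‖) = c * (s * ‖x‖) by ring, this]
    field_simp
  refine ⟨hB, h0, fun z hz => ?_⟩
  have hn : ‖z.2‖ ≠ 0 := norm_ne_zero_iff.2 hz.2
  have hp := mem_ext_of_cyl hz
  have e : ∀ p ∈ extCone, toExt (toCyl δ) p = δ p := fun p hp => by
    have := norm_ne_zero_iff.2 (ext_ne hp)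
    simp only [toExt, toCyl]
    rw [mul_assoc p.1, inv_mul_cancel₀ this, mul_one, inv_mul_cancel_left₀ this]
  have hS := smooth_toExt hB
  have h1 := (wave_iff hB h0 hp).1 (by
    rw [dt2_eq isOpen_ext hS hp, lap3_eq isOpen_ext hS hp,
      dd_congr isOpen_ext (fun y hy => dd_congr isOpen_ext e e0 hy) e0 hp, hw _ hp]
    unfold lapx
    refine Finset.sum_congr rfl fun i _ => ?_
    rw [dd_congr isOpen_ext (fun y hy => dd_congr isOpen_ext e (es i) hy) (es i) hp])
  rw [mul_inv_cancel_right₀ hn] at h1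
  exact h1

lemma unique_solution {N01 N0 : E3 → ℝ} {φ φ' : ℝ → E3 → ℝ} (h : IsExtHomOne N01 N0 φ)
    (h' : IsExtHomOne N01 N0 φ') {t : ℝ} {x : E3} (hx : |t| < ‖x‖) : φ' t x = φ t x := by
  obtain ⟨hs, hw, hh, hl⟩ := h
  obtain ⟨hs', hw', hh', hl'⟩ := h'
  set f : ℝ × E3 → ℝ := fun p => φ p.1 p.2
  set f' : ℝ × E3 → ℝ := fun p => φ' p.1 p.2
  change ContDiffOn ℝ (⊤ : ℕ∞) f extCone at hs
  change ContDiffOn ℝ (⊤ : ℕ∞) f' extCone at hs'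
  have hneg : ContDiffOn ℝ (⊤ : ℕ∞) (fun p => (-1) * f p) extCone := contDiffOn_const.mul hs
  set δ : ℝ × E3 → ℝ := fun p => f' p + (-1) * f p with hδ
  have hδs : ContDiffOn ℝ (⊤ : ℕ∞) δ extCone := hs'.add hneg
  have hδh : ∀ c : ℝ, 0 < c → ∀ (t : ℝ) (x : E3), (t, x) ∈ extCone →
      δ (c * t, c • x) = c⁻¹ * δ (t, x) := fun c hc t x hp => by
    change φ' (c * t) (c • x) + (-1) * φ (c * t) (c • x) = c⁻¹ * (φ' t x + (-1) * φ t x)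
    rw [hh c hc t x hp, hh' c hc t x hp]
    ring
  have hδw : ∀ p ∈ extCone, dd e0 (dd e0 δ) p = lapx δ p := fun p hp => by
    have w : dd e0 (dd e0 f) p = lapx f p := by
      have := hw p.1 p.2 hp
      change dt2 (fun s y => f (s, y)) p.1 p.2 = lap3 (fun y => f (p.1, y)) p.2 at this
      rwa [dt2_eq isOpen_ext hs hp, lap3_eq isOpen_ext hs hp] at this
    have w' : dd e0 (dd e0 f') p = lapx f' p := by
      have := hw' p.1 p.2 hp
      change dt2 (fun s y => f' (s, y)) p.1 p.2 = lap3 (fun y => f' (p.1, y)) p.2 at this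
      rwa [dt2_eq isOpen_ext hs' hp, lap3_eq isOpen_ext hs' hp] at this
    have cm : ∀ g : ℝ × E3 → ℝ, ContDiffOn ℝ (⊤ : ℕ∞) g extCone → ∀ v, ∀ q ∈ extCone,
        dd v (fun p => (-1) * g p) q = (-1) * dd v g q := fun g hg v q hq => by
      rw [dd_mul isOpen_ext contDiffOn_const hg v hq]
      simp [dd]
    have hlap : lapx (fun p => (-1) * f p) p = (-1) * lapx f p :=
      lapx_fst_mul (l := fun _ => -1) isOpen_ext contDiffOn_const hs hp
    rw [lapx_add isOpen_ext hs' hneg hp, hlap, ← w, ← w',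
      dd_congr isOpen_ext (fun y hy => dd_add isOpen_ext hs' hneg e0 hy) e0 hp,
      dd_add isOpen_ext (smooth_dd isOpen_ext hs' e0) (smooth_dd isOpen_ext hneg e0) e0 hp,
      dd_congr isOpen_ext (cm f hs e0) e0 hp, cm _ (smooth_dd isOpen_ext hs e0) e0 p hp]
  have hL := isLeg_toCyl hδs hδw hδh
  have hlim : ∀ y : E3, y ≠ 0 → Tendsto (fun s => toCyl δ (s, y)) (𝓝[<] 1) (𝓝 0) :=
    fun y hy => by
      have hy' := norm_pos_iff.2 hy
      have hu : ‖‖y‖⁻¹ • y‖ = 1 := by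
        rw [norm_smul, norm_inv, norm_norm, inv_mul_cancel₀ hy'.ne']
      have h1 := (hl' _ hu).sub (hl _ hu)
      rw [sub_self] at h1
      refine h1.congr' ?_
      filter_upwards [Ioo_mem_nhdsLT (show (-1 : ℝ) < 1 by norm_num)] with s hs1
      rw [← hL.2.1 s y ⟨abs_lt.2 hs1, hy⟩ ‖y‖⁻¹ (inv_pos.2 hy')]
      simp only [toCyl, hu, hδ, f, f']
      ring_nf
  have hx0 : 0 < ‖x‖ := (abs_nonneg t).trans_lt hx
  have hm : (t * ‖x‖⁻¹, x) ∈ cyl := mem_cyl_of_ext hx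
  have hu : ‖‖x‖⁻¹ • x‖ = 1 := by
    rw [norm_smul, norm_inv, norm_norm, inv_mul_cancel₀ hx0.ne']
  have hz := hL.eq_zero hlim hu hm.1
  rw [hL.2.1 _ x hm _ (inv_pos.2 hx0)] at hz
  have h2 := (mul_eq_zero.1 hz).resolve_left hx0.ne'
  simp only [hδ, inv_mul_cancel_right₀ hx0.ne', f, f'] at h2
  linarith

/-- homogeneous degree −1 solutions in the exterior of the light cone
(Theorem 1.3 of the paper). -/
theorem exterior_homogeneous_degree_one
    (N01 N0 : E3 → ℝ) (h01 : SmoothOnSphere N01) (h0 : SmoothOnSphere N0) :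
    ∃ φ : ℝ → E3 → ℝ, IsExtHomOne N01 N0 φ ∧
      ∀ φ' : ℝ → E3 → ℝ, IsExtHomOne N01 N0 φ' →
        ∀ (t : ℝ) (x : E3), |t| < ‖x‖ → φ' t x = φ t x := by
  exact ⟨_, exists_solution h01 h0, fun φ' h' t x hx =>
    unique_solution (exists_solution h01 h0) h' hx⟩
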